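/- For every constant c ≥ 1 there is a constant C such that for all integers n ≥ 2 and f ≥ 1 there exists a decoder function D (depending only on n, f, and c) with the following property: for every finite simple graph G = (V,E) on n vertices there exists a finitely supported probability distribution over labeling functions L_V : V → {0,1}^b with b ≤ C·f²·(log₂ n)⁶, such that for every fixed s,t ∈ V and F ⊆ V ∖ {s,t} with |F| ≤ f, with probability at least 1 − n^{−c} over the random labeling, D applied to (L_V(s), L_V(t), {L_V(v) : v ∈ F}) outputs true if and only if s and t lie in the same connected component of the induced subgraph G − F on V ∖ F. -/

import Mathlib

open scoped Classical

/-!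
Choosing for every vertex a level that minimizes `2 ∑ x, lev x` minus the number of different level
components gives few levels, hence every vertex lies in few level components, and makes the
vertices of each level tough enough to be joined by a forest of small maximum degree. For a random
set `S` containing each vertex with probability `1 / (2 * f)`, merging every level component
adjacent to `S` into a larger one leaves clusters with only `O(f log n)` outer neighbours, toured by
walks along those forests that visit a vertex outside `S` at most `O(log² n)` times. Since `S`
misses `F` with constant probability, one of `O(log n)` independent choices of `S` does.

A query affects only the clusters containing `s`, `t` or a fault. A path from `s` to `t` in `G - F`
can pass through other clusters only by shortcuts between their outer neighbours, and the faults
cut the tours of the affected clusters into few intervals. Hence `s` and `t` are disconnected in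
`G - F` iff the positions in these tours have a 2-colouring, constant on intervals, that separates
`s` from `t` and is crossed by no edge or shortcut avoiding the faults. Edges and shortcuts are
sparsified by hash functions isolating any crossing one from the faults. To test a colouring, the
labels store, for each relevant prefix of a tour, the first few weighted power sums, in
characteristic 2, over the edges leaving the vertices on the prefix. Tour edges with both ends of
the same colour cancel in these sums, and a polynomial vanishing at the faults and at the outer
neighbours of that colour masks the other uncrossed edges. As the weights of the edges are different
powers of a random field element, no colouring that is crossed passes the test by accident.
-/

namespace FaultLabel

open Finset

/-! ### Levels and components -/

noncomputable section

open SimpleGraph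

variable {V : Type*}

section Reachability

variable {A B G : SimpleGraph V} {a b x y : V}

theorem reachable_induction (p : V → Prop) (step : ∀ u v, A.Adj u v → p u → p v)
    (h : A.Reachable a b) (ha : p a) : p b := by
  rw [reachable_iff_reflTransGen] at h
  induction h with
  | refl => exact ha
  | tail _ huv ih => exact step _ _ huv ih

theorem reachable_of_forall_adj (hAB : ∀ u v, A.Adj u v → B.Reachable u v)
    (h : A.Reachable a b) : B.Reachable a b :=
  reachable_induction (B.Reachable a) (fun u v huv hu => hu.trans (hAB u v huv)) h .rfl

theorem reachable_of_adj_on_component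
    (hAB : ∀ u v, A.Reachable a u → A.Adj u v → B.Adj u v) (h : A.Reachable a b) :
    B.Reachable a b :=
  (reachable_induction (fun v => A.Reachable a v ∧ B.Reachable a v)
    (fun u v huv hu => ⟨hu.1.trans huv.reachable, hu.2.trans (hAB u v hu.1 huv).reachable⟩) h
    ⟨.rfl, .rfl⟩).2

theorem reachable_deleteEdges_or (h : G.Reachable x y) :
    (G.deleteEdges {s(a, b)}).Reachable x y ∨
      (G.deleteEdges {s(a, b)}).Reachable x a ∧ (G.deleteEdges {s(a, b)}).Reachable b y ∨
      (G.deleteEdges {s(a, b)}).Reachable x b ∧ (G.deleteEdges {s(a, b)}).Reachable a y := by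
  set D := G.deleteEdges {s(a, b)} with hD
  refine reachable_induction (fun z => D.Reachable x z ∨ D.Reachable x a ∧ D.Reachable b z ∨
    D.Reachable x b ∧ D.Reachable a z) (fun u v huv hu => ?_) h (.inl .rfl)
  by_cases he : s(u, v) = s(a, b)
  · rcases Sym2.eq_iff.1 he with ⟨rfl, rfl⟩ | ⟨rfl, rfl⟩
    · rcases hu with hu | hu | hu
      · exact .inr (.inl ⟨hu, .rfl⟩)
      · exact .inr (.inl ⟨hu.1, .rfl⟩)
      · exact .inl hu.1
    · rcases hu with hu | hu | hu
      · exact .inr (.inr ⟨hu, .rfl⟩)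
      · exact .inl hu.1
      · exact .inr (.inr ⟨hu.1, .rfl⟩)
  · have huv' : D.Reachable u v := Adj.reachable (by simpa [hD, huv] using he)
    exact hu.imp (·.trans huv') (.imp (.imp_right (·.trans huv')) (.imp_right (·.trans huv')))

theorem reachable_of_reachable_deleteEdges (hab : B.Reachable a b)
    (hAB : A.deleteEdges {s(a, b)} ≤ B) (h : A.Reachable x y) : B.Reachable x y := by
  refine reachable_of_forall_adj (fun u v huv => ?_) h
  by_cases he : s(u, v) = s(a, b)
  · rcases Sym2.eq_iff.1 he with ⟨rfl, rfl⟩ | ⟨rfl, rfl⟩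
    · exact hab
    · exact hab.symm
  · exact Adj.reachable (hAB (by simpa [huv] using he))

end Reachability

section Restrict

variable {G H : SimpleGraph V} {s t : Set V} {S : Finset V} {x y : V}

/-- The subgraph of `G` induced on `s`, viewed as a graph on all of `V`: the vertices outside `s`
stay, as isolated vertices. -/
def restrict (G : SimpleGraph V) (s : Set V) : SimpleGraph V := (G.induce s).spanningCoe

/-- The graph `G - S`, with the deleted vertices kept as isolated vertices. -/
abbrev avoiding (G : SimpleGraph V) (S : Finset V) : SimpleGraph V := restrict G (↑S)ᶜ

theorem restrict_adj : (restrict G s).Adj x y ↔ G.Adj x y ∧ x ∈ s ∧ y ∈ s := by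
  simp [restrict]

theorem avoiding_adj : (avoiding G S).Adj x y ↔ G.Adj x y ∧ x ∉ S ∧ y ∉ S := by
  simp [restrict_adj]

theorem restrict_le : restrict G s ≤ G := fun _ _ h => (restrict_adj.1 h).1

theorem restrict_mono (hGH : G ≤ H) (hst : s ⊆ t) : restrict G s ≤ restrict H t := fun _ _ h =>
  let ⟨hxy, hx, hy⟩ := restrict_adj.1 h
  restrict_adj.2 ⟨hGH hxy, hst hx, hst hy⟩

theorem mem_of_reachable_restrict (h : (restrict G s).Reachable x y) (hx : x ∈ s) : y ∈ s :=
  reachable_induction (· ∈ s) (fun _ _ huv _ => (restrict_adj.1 huv).2.2) h hx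

theorem reachable_restrict_iff_induce (hx : x ∈ s) (hy : y ∈ s) :
    (restrict G s).Reachable x y ↔ (G.induce s).Reachable ⟨x, hx⟩ ⟨y, hy⟩ := by
  refine ⟨fun h => ?_, fun h => h.map (Embedding.spanningCoe (G.induce s)).toHom⟩
  refine (reachable_induction (fun z => ∃ hz, (G.induce s).Reachable ⟨x, hx⟩ ⟨z, hz⟩) ?_ h
    ⟨hx, .rfl⟩).2
  rintro u v huv ⟨hu, hxu⟩
  obtain ⟨huv, -, hv⟩ := restrict_adj.1 huv
  exact ⟨hv, hxu.trans (Adj.reachable huv)⟩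

/-- The vertices of `Y` lie in pairwise different connected components of `A`. -/
def Separated (A : SimpleGraph V) (Y : Finset V) : Prop :=
  (Y : Set V).Pairwise fun y y' => ¬ A.Reachable y y'

theorem Separated.eq_of_reachable {A : SimpleGraph V} {Y : Finset V} (hY : Separated A Y)
    (hx : x ∈ Y) (hy : y ∈ Y) (h : A.Reachable x y) : x = y :=
  of_not_not fun hne => hY hx hy hne h

end Restrict

section Levels

variable [Fintype V] {G : SimpleGraph V} {lev lev' : V → ℕ} {i : ℕ} {B : Finset V} {x y z : V}

/-- The subgraph of `G` induced on the vertices of level at most `i`. -/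
abbrev upTo (G : SimpleGraph V) (lev : V → ℕ) (i : ℕ) : SimpleGraph V :=
  restrict G {x | lev x ≤ i}

/-- The component of `x` among the vertices whose level is at most that of `x`. -/
def levelComp (G : SimpleGraph V) (lev : V → ℕ) (x : V) : Finset V :=
  {y | (upTo G lev (lev x)).Reachable x y}

theorem mem_levelComp : y ∈ levelComp G lev x ↔ (upTo G lev (lev x)).Reachable x y := by
  simp [levelComp]

variable (G lev x) in
theorem self_mem_levelComp : x ∈ levelComp G lev x := mem_levelComp.2 .rfl

theorem level_le_of_mem_levelComp (h : y ∈ levelComp G lev x) : lev y ≤ lev x :=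
  mem_of_reachable_restrict (s := {z | lev z ≤ lev x}) (mem_levelComp.1 h) (le_refl (lev x))

theorem levelComp_eq_filter_reachable (h : y ∈ levelComp G lev x) :
    levelComp G lev x = ({z | (upTo G lev (lev x)).Reachable y z} : Finset V) := by
  ext z
  rw [mem_levelComp] at h
  simp only [mem_levelComp, mem_filter_univ]
  exact ⟨h.symm.trans, h.trans⟩

theorem levelComp_eq_of_mem (hx : z ∈ levelComp G lev x) (hy : z ∈ levelComp G lev y)
    (h : lev x = lev y) : levelComp G lev x = levelComp G lev y := by
  rw [levelComp_eq_filter_reachable hx, levelComp_eq_filter_reachable hy, h]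

theorem level_eq_of_levelComp_eq (h : levelComp G lev x = levelComp G lev y) : lev x = lev y :=
  le_antisymm (level_le_of_mem_levelComp (h ▸ self_mem_levelComp G lev x))
    (level_le_of_mem_levelComp (h ▸ self_mem_levelComp G lev y))

theorem levelComp_congr (h : ∀ y, lev y ≤ lev x ↔ lev' y ≤ lev' x) :
    levelComp G lev x = levelComp G lev' x := by
  have hset : {y | lev y ≤ lev x} = {y | lev' y ≤ lev' x} := Set.ext h
  simp only [levelComp, upTo, hset]

variable (G lev) in
/-- The number of different level components. -/
def numComps : ℕ := #(univ.image (levelComp G lev))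

variable (G lev i) in
/-- The number of level components of level exactly `i`. -/
def numCompsAt : ℕ := #(({x | lev x = i} : Finset V).image (levelComp G lev))

theorem card_image_levelComp_add_le {s t : Finset V} (hst : ∀ x ∈ s, ∀ y ∈ t, lev x ≠ lev y) :
    #(s.image (levelComp G lev)) + #(t.image (levelComp G lev)) ≤
      #((s ∪ t).image (levelComp G lev)) := by
  rw [image_union, card_union_of_disjoint]
  simp only [Finset.disjoint_left, mem_image, not_exists, not_and]
  rintro _ ⟨x, hx, rfl⟩ y hy h
  exact hst x hx y hy (level_eq_of_levelComp_eq h).symm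

/-- `lev` minimizes `2 ∑ x, lev x - numComps G lev`, written without subtraction. -/
def IsOptimalLevel (G : SimpleGraph V) (lev : V → ℕ) : Prop :=
  ∀ lev' : V → ℕ, 2 * ∑ x, lev x + numComps G lev' ≤ 2 * ∑ x, lev' x + numComps G lev

theorem exists_isOptimalLevel (G : SimpleGraph V) : ∃ lev, IsOptimalLevel G lev := by
  have hle (lev : V → ℕ) : numComps G lev ≤ Fintype.card V := card_image_le
  set potential : (V → ℕ) → ℕ := fun lev => 2 * ∑ x, lev x + Fintype.card V - numComps G lev
  refine ⟨Function.argmin potential, fun lev' => ?_⟩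
  have hmin : potential _ ≤ potential _ := Function.argmin_le potential lev'
  have := hle (Function.argmin potential)
  have := hle lev'
  grind

namespace IsOptimalLevel

theorem card_level_halves (h : IsOptimalLevel G lev) (i : ℕ) :
    2 * #{x | i + 1 ≤ lev x} ≤ #{x | i ≤ lev x} := by
  set cut : V → ℕ := fun x => min (lev x) i
  have hcomps : numComps G lev ≤ numComps G cut + #{x | i ≤ lev x} := by
    have hsub : univ.image (levelComp G lev) ⊆ univ.image (levelComp G cut) ∪
        ({x | i ≤ lev x} : Finset V).image (levelComp G lev) := by
      simp only [subset_iff, mem_image, mem_univ, true_and, mem_union, mem_filter,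
        forall_exists_index, forall_apply_eq_imp_iff]
      intro x
      by_cases hx : i ≤ lev x
      · exact .inr ⟨x, hx, rfl⟩
      · exact .inl ⟨x, levelComp_congr fun y => by grind⟩
    calc _ ≤ _ := card_le_card hsub
      _ ≤ _ := card_union_le _ _
      _ ≤ _ := Nat.add_le_add_left card_image_le _
  have hsum : ∑ x, cut x + #{x | i + 1 ≤ lev x} ≤ ∑ x, lev x := by
    rw [card_filter, ← sum_add_distrib]
    exact sum_le_sum fun x _ => by grind
  have := h cut
  omega

theorem two_pow_level_le_card (h : IsOptimalLevel G lev) (x : V) :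
    2 ^ lev x ≤ Fintype.card V := by
  have hdecay (i : ℕ) : 2 ^ i * #{x | i ≤ lev x} ≤ Fintype.card V := by
    induction i with
    | zero => simp
    | succ i ih =>
      calc 2 ^ (i + 1) * #{x | i + 1 ≤ lev x} = 2 ^ i * (2 * #{x | i + 1 ≤ lev x}) := by ring
        _ ≤ 2 ^ i * #{x | i ≤ lev x} := by gcongr; exact h.card_level_halves i
        _ ≤ Fintype.card V := ih
  have hpos : 0 < #{y | lev x ≤ lev y} := card_pos.2 ⟨x, by simp⟩
  exact (Nat.le_mul_of_pos_right _ hpos).trans (hdecay _)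

end IsOptimalLevel

/-- The level function that lifts the vertices of `B` to level `i + 1`. -/
def raise (lev : V → ℕ) (B : Finset V) (i : ℕ) (x : V) : ℕ := if x ∈ B then i + 1 else lev x

theorem sum_raise_le : ∑ x, raise lev B i x ≤ ∑ x, lev x + (i + 1) * #B := by
  have hB : (i + 1) * #B = ∑ x, if x ∈ B then i + 1 else 0 := by simp [sum_ite_mem, mul_comm]
  rw [hB, ← sum_add_distrib]
  exact sum_le_sum fun x _ => by grind [raise]

theorem levelComp_raise_of_lt (hB : ∀ v ∈ B, lev v ≤ i) (hx : i < lev x) :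
    levelComp G (raise lev B i) x = levelComp G lev x :=
  levelComp_congr fun y => by grind [raise]

theorem levelComp_raise_of_disjoint (hx : lev x < i) (hd : Disjoint (levelComp G lev x) B) :
    levelComp G (raise lev B i) x = levelComp G lev x := by
  have hxB : x ∉ B := Finset.disjoint_left.1 hd (self_mem_levelComp G lev x)
  ext y
  simp only [mem_levelComp]
  refine ⟨fun h => h.mono (restrict_mono le_rfl fun z hz => ?_),
    reachable_of_adj_on_component fun u v hu huv => ?_⟩
  · grind [raise]
  · have huB : u ∉ B := Finset.disjoint_left.1 hd (mem_levelComp.2 hu)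
    have hvB : v ∉ B := Finset.disjoint_left.1 hd (mem_levelComp.2 (hu.trans huv.reachable))
    simpa [restrict_adj, raise, hxB, huB, hvB] using huv

theorem injOn_levelComp_raise {Y : Finset V} (hY : ∀ y ∈ Y, lev y = i) (hYB : Disjoint Y B)
    (hsep : Separated (avoiding (upTo G lev i) B) Y) :
    Set.InjOn (levelComp G (raise lev B i)) Y := by
  intro y hy y' hy' heq
  refine hsep.eq_of_reachable hy hy' ?_
  have hmem : y' ∈ levelComp G (raise lev B i) y := heq ▸ self_mem_levelComp ..
  have hyB : y ∉ B := Finset.disjoint_left.1 hYB hy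
  refine (mem_levelComp.1 hmem).mono fun u v huv => ?_
  simp only [restrict_adj, Set.mem_ofPred_eq, Set.mem_compl_iff, mem_coe] at huv ⊢
  grind [raise]

theorem card_levelComps_meeting_le :
    #(({x | lev x < i ∧ ¬ Disjoint (levelComp G lev x) B} : Finset V).image (levelComp G lev)) ≤
      i * #B := by
  have hsub : ({x | lev x < i ∧ ¬ Disjoint (levelComp G lev x) B} : Finset V).image
      (levelComp G lev) ⊆
      (range i ×ˢ B).image fun p => ({z | (upTo G lev p.1).Reachable p.2 z} : Finset V) := by
    intro X hX
    simp only [mem_image, mem_filter_univ] at hX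
    obtain ⟨x, ⟨hx, hd⟩, rfl⟩ := hX
    obtain ⟨v, hv, hvB⟩ := not_disjoint_iff.1 hd
    exact mem_image.2 ⟨(lev x, v), by simp [hx, hvB], (levelComp_eq_filter_reachable hv).symm⟩
  calc _ ≤ _ := card_le_card hsub
    _ ≤ #(range i ×ˢ B) := card_image_le
    _ = i * #B := by rw [card_product, card_range]

theorem numComps_le (B : Finset V) (i : ℕ) :
    numComps G lev ≤ #(({x | i < lev x} : Finset V).image (levelComp G lev)) +
      #(({x | lev x < i ∧ Disjoint (levelComp G lev x) B} : Finset V).image (levelComp G lev)) +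
      i * #B + numCompsAt G lev i := by
  set hi : Finset V := {x | i < lev x}
  set free : Finset V := {x | lev x < i ∧ Disjoint (levelComp G lev x) B}
  set met : Finset V := {x | lev x < i ∧ ¬ Disjoint (levelComp G lev x) B}
  set at_i : Finset V := {x | lev x = i}
  have huniv : univ = hi ∪ free ∪ met ∪ at_i := by
    ext x
    simp only [hi, free, met, at_i, mem_union, mem_filter_univ, mem_univ, true_iff]
    grind
  rw [numComps, huniv, image_union, image_union, image_union]
  refine (card_union_le _ _).trans (Nat.add_le_add_right ?_ _)
  refine (card_union_le _ _).trans (Nat.add_le_add ?_ card_levelComps_meeting_le)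
  exact card_union_le _ _

theorem le_numComps_raise {Y : Finset V} (hB : ∀ v ∈ B, lev v ≤ i) (hY : ∀ y ∈ Y, lev y = i)
    (hYB : Disjoint Y B) (hsep : Separated (avoiding (upTo G lev i) B) Y) :
    #(({x | i < lev x} : Finset V).image (levelComp G lev)) +
      #(({x | lev x < i ∧ Disjoint (levelComp G lev x) B} : Finset V).image (levelComp G lev)) +
      #Y ≤ numComps G (raise lev B i) := by
  set hi : Finset V := {x | i < lev x}
  set free : Finset V := {x | lev x < i ∧ Disjoint (levelComp G lev x) B}
  have mem_hi (x : V) (hx : x ∈ hi) : i < raise lev B i x := by grind [raise]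
  have mem_free (x : V) (hx : x ∈ free) : raise lev B i x < i := by
    have hx' := (mem_filter_univ x).1 hx
    have : x ∉ B := Finset.disjoint_left.1 hx'.2 (self_mem_levelComp G lev x)
    grind [raise]
  have mem_Y (x : V) (hx : x ∈ Y) : raise lev B i x = i := by
    have : x ∉ B := Finset.disjoint_left.1 hYB hx
    grind [raise]
  have image_hi : hi.image (levelComp G lev) = hi.image (levelComp G (raise lev B i)) :=
    image_congr fun x hx => (levelComp_raise_of_lt hB (by simpa [hi] using hx)).symm
  have image_free : free.image (levelComp G lev) = free.image (levelComp G (raise lev B i)) :=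
    image_congr fun x hx => by
      have hx' := (mem_filter_univ x).1 (mem_coe.1 hx)
      exact (levelComp_raise_of_disjoint hx'.1 hx'.2).symm
  rw [image_hi, image_free, ← card_image_of_injOn (injOn_levelComp_raise hY hYB hsep)]
  calc _ ≤ #((hi ∪ free).image (levelComp G (raise lev B i))) +
        #(Y.image (levelComp G (raise lev B i))) := by
        gcongr
        exact card_image_levelComp_add_le fun x hx y hy => by grind
    _ ≤ #((hi ∪ free ∪ Y).image (levelComp G (raise lev B i))) :=
        card_image_levelComp_add_le fun x hx y hy => by grind
    _ ≤ _ := card_le_card (image_subset_image (subset_univ _))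

/- Otherwise raising `B` to level `i + 1` would cost `2 (i + 1) |B|`, merge at most `i |B|`
lower components, but split the components of level `i` into too many pieces. -/
theorem IsOptimalLevel.card_separated_le (h : IsOptimalLevel G lev) {Y : Finset V}
    (hB : ∀ v ∈ B, lev v ≤ i) (hY : ∀ y ∈ Y, lev y = i) (hYB : Disjoint Y B)
    (hsep : Separated (avoiding (upTo G lev i) B) Y) :
    #Y ≤ numCompsAt G lev i + (3 * i + 2) * #B := by
  have hopt := h (raise lev B i)
  have hsum := sum_raise_le (lev := lev) (B := B) (i := i)
  have hold := numComps_le (G := G) (lev := lev) B i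
  have hnew := le_numComps_raise hB hY hYB hsep
  linarith

theorem exists_separated_card_eq_numCompsAt (G : SimpleGraph V) (lev : V → ℕ) (i : ℕ) :
    ∃ Y : Finset V, (∀ y ∈ Y, lev y = i) ∧ Separated (upTo G lev i) Y ∧
      #Y = numCompsAt G lev i := by
  obtain ⟨Y, hY, hinj, himg⟩ := exists_subset_injOn_image_eq_of_surjOn
    ({x | lev x = i} : Finset V) (({x | lev x = i} : Finset V).image (levelComp G lev))
    (by rw [coe_image]; exact Set.surjOn_image _ _)
  have hlev (y : V) (hy : y ∈ Y) : lev y = i := by simpa using hY hy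
  refine ⟨Y, hlev, fun y hy y' hy' hne hr => hne (hinj hy hy' ?_), ?_⟩
  · refine levelComp_eq_of_mem (z := y') (mem_levelComp.2 ?_) (self_mem_levelComp ..) ?_
    · rwa [hlev y hy]
    · rw [hlev y hy, hlev y' hy']
  · rw [numCompsAt, ← himg, card_image_of_injOn hinj]

end Levels

end

/-! ### Low-degree Steiner forests -/

noncomputable section

open SimpleGraph

variable {V : Type*}

section Depth

variable {T : SimpleGraph V} {S : Finset V} {v x y : V}

/-- A representative of the component of `x`, the same for all vertices of that component. -/
def root (T : SimpleGraph V) (x : V) : V := (T.connectedComponentMk x).out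

/-- The depth of `x` in the tree containing it, when that tree is hung from `root T x`. -/
def depth (T : SimpleGraph V) (x : V) : ℕ := T.dist x (root T x)

variable (T x) in
theorem reachable_root : T.Reachable x (root T x) :=
  (ConnectedComponent.exact (Quot.out_eq (T.connectedComponentMk x))).symm

theorem root_eq_of_reachable (h : T.Reachable x y) : root T x = root T y :=
  congrArg Quot.out (ConnectedComponent.sound h)

theorem reachable_avoiding_of_walk (p : T.Walk x y) (hp : ∀ u ∈ p.support, u ∉ S) :
    (avoiding T S).Reachable x y := by
  refine ⟨p.transfer _ fun e he => ?_⟩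
  induction e with
  | _ a b =>
    exact avoiding_adj.2 ⟨p.adj_of_mem_edges he, hp a (p.fst_mem_support_of_mem_edges he),
      hp b (p.snd_mem_support_of_mem_edges he)⟩

theorem depth_lt_depth (hx : T.Reachable v x) (hne : x ≠ v)
    (hcut : ¬ (avoiding T {v}).Reachable x (root T v)) : depth T v < depth T x := by
  obtain ⟨p, hp⟩ := (reachable_root T x).exists_walk_length_eq_dist
  have hroot : root T v = root T x := root_eq_of_reachable hx
  have hv : v ∈ p.support := by
    by_contra hv
    refine hcut (hroot ▸ reachable_avoiding_of_walk p fun u hu huv => hv ?_)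
    rwa [mem_singleton.1 huv] at hu
  have hlen : (p.takeUntil v hv).length + (p.dropUntil v hv).length = p.length := by
    rw [← Walk.length_append, Walk.take_spec]
  have hpos : (p.takeUntil v hv).length ≠ 0 := fun h => hne (Walk.eq_of_length_eq_zero h)
  have hle : depth T v ≤ (p.dropUntil v hv).length := by
    rw [depth, hroot]
    exact dist_le _
  rw [depth.eq_1 T x]
  omega

end Depth

variable {H P T T' : SimpleGraph V} {U S Y Z : Finset V} {a b v w w' x y : V}

section Degree

/-- The degree of `v` in `T`; unlike `SimpleGraph.degree` it needs no instances. -/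
def deg (T : SimpleGraph V) (v : V) : ℕ := (T.neighborSet v).ncard

theorem deg_sup_le (T T' : SimpleGraph V) (v : V) : deg (T ⊔ T') v ≤ deg T v + deg T' v :=
  Set.ncard_union_le (T.neighborSet v) (T'.neighborSet v)

theorem exists_thin_path {A : SimpleGraph V} (h : A.Reachable x y) (hxy : x ≠ y) :
    ∃ P ≤ A, P.Reachable x y ∧ (∀ v, deg P v ≤ 2) ∧ deg P x ≤ 1 ∧ deg P y ≤ 1 := by
  obtain ⟨p, hp⟩ := h.exists_isPath
  have hnil : ¬ p.Nil := Walk.not_nil_of_ne hxy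
  have hx : p.toSubgraph.neighborSet x = {p.snd} := hp.neighborSet_toSubgraph_startpoint hnil
  have hy : p.toSubgraph.neighborSet y = {p.penultimate} := hp.neighborSet_toSubgraph_endpoint hnil
  have hdeg (v : V) : deg p.toSubgraph.spanningCoe v = (p.toSubgraph.neighborSet v).ncard := rfl
  refine ⟨p.toSubgraph.spanningCoe, p.toSubgraph.spanningCoe_le, ?_, fun v => ?_, ?_, ?_⟩
  · refine ⟨p.transfer _ fun e he => ?_⟩
    simpa using he
  · rw [hdeg]
    by_cases hvx : v = x
    · simp [hvx, hx]
    by_cases hvy : v = y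
    · simp [hvy, hy]
    by_cases hv : v ∈ p.support
    · obtain ⟨i, rfl, hi⟩ := Walk.mem_support_iff_exists_getVert.1 hv
      refine (hp.ncard_neighborSet_toSubgraph_internal_eq_two ?_ ?_).le
      · rintro rfl
        exact hvx p.getVert_zero
      · exact hi.lt_of_ne fun h => hvy (h ▸ p.getVert_length)
    · have : p.toSubgraph.neighborSet v = ∅ := by
        refine Set.eq_empty_of_forall_notMem fun w hw => hv ?_
        exact p.mem_verts_toSubgraph.1 (p.toSubgraph.edge_vert hw)
      simp [this]
  · simp [hdeg, hx]
  · simp [hdeg, hy]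

variable [Finite V]

theorem deg_mono (h : T ≤ T') (v : V) : deg T v ≤ deg T' v :=
  Set.ncard_le_ncard fun _ hw => h hw

theorem deg_eq_zero_iff : deg T v = 0 ↔ ∀ w, ¬ T.Adj v w := by
  rw [deg, Set.ncard_eq_zero]
  simp only [Set.eq_empty_iff_forall_notMem, mem_neighborSet]

theorem deg_deleteEdges_lt (h : T.Adj a b) : deg (T.deleteEdges {s(a, b)}) a < deg T a := by
  refine Set.ncard_lt_ncard ((Set.ssubset_iff_of_subset fun w hw => ?_).2 ⟨b, h, ?_⟩)
  · exact deleteEdges_le _ hw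
  · simp

end Degree

section SteinerForest

theorem Separated.exists_insert_vertex (hY : Separated (avoiding T S) Y)
    (hZ : Separated (avoiding T {v}) Z) (hvZ : ∀ z ∈ Z, (avoiding T S).Reachable v z) :
    ∃ Y' ⊆ Y, v ∉ Y' ∧ Separated (avoiding T (insert v S)) (Y' ∪ Z) ∧
      #Y + #Z ≤ #(Y' ∪ Z) + 1 := by
  set Y' : Finset V := {y ∈ Y | ¬ (avoiding T S).Reachable v y}
  have hY' (y : V) (hy : y ∈ Y') : y ∈ Y ∧ ¬ (avoiding T S).Reachable v y := mem_filter.1 hy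
  have hleS : avoiding T (insert v S) ≤ avoiding T S := restrict_mono le_rfl (by simp)
  have hlev : avoiding T (insert v S) ≤ avoiding T {v} := restrict_mono le_rfl (by simp)
  have hdisj : Disjoint Y' Z := Finset.disjoint_left.2 fun y hy hyZ => (hY' y hy).2 (hvZ y hyZ)
  have hcard : #Y ≤ #Y' + 1 := by
    have hone : #{y ∈ Y | (avoiding T S).Reachable v y} ≤ 1 := by
      refine card_le_one.2 fun y hy y' hy' => ?_
      rw [mem_filter] at hy hy'
      exact hY.eq_of_reachable hy.1 hy'.1 (hy.2.symm.trans hy'.2)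
    have : #{y ∈ Y | (avoiding T S).Reachable v y} + #Y' = #Y := card_filter_add_card_filter_not _
    omega
  refine ⟨Y', filter_subset _ _, fun hv => (hY' v hv).2 .rfl, ?_, ?_⟩
  · intro y hy y' hy' hne hr
    rcases mem_union.1 hy with hy | hy <;> rcases mem_union.1 hy' with hy' | hy'
    · exact hY (hY' y hy).1 (hY' y' hy').1 hne (hr.mono hleS)
    · exact (hY' y hy).2 ((hvZ y' hy').trans (hr.mono hleS).symm)
    · exact (hY' y' hy').2 ((hvZ y hy).trans (hr.mono hleS))
    · exact hZ hy hy' hne (hr.mono hlev)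
  · rw [card_union_of_disjoint hdisj]
    omega

/-- `T` is a subgraph of `H` that connects all terminals in `U` which `H` connects. -/
structure IsSteiner (H : SimpleGraph V) (U : Finset V) (T : SimpleGraph V) : Prop where
  le : T ≤ H
  reachable : ∀ u ∈ U, ∀ u' ∈ U, H.Reachable u u' → T.Reachable u u'

/-- A vertex that is a terminal or an endpoint of an edge of `T`. -/
def Touched (T : SimpleGraph V) (U : Finset V) (v : V) : Prop := v ∈ U ∨ ∃ w, T.Adj v w

theorem IsSteiner.exchange (hT : IsSteiner H U T) (hxy : T.Reachable x y)
    (hcut : ¬ (T.deleteEdges {s(w, w')}).Reachable x y) (hPH : P ≤ H) (hP : P.Reachable x y) :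
    IsSteiner H U (T.deleteEdges {s(w, w')} ⊔ P) := by
  set T' := T.deleteEdges {s(w, w')} ⊔ P
  have hle : T.deleteEdges {s(w, w')} ≤ T' := le_sup_left
  have hxy' : T'.Reachable x y := hP.mono le_sup_right
  have hww : T'.Reachable w w' := by
    rcases (reachable_deleteEdges_or hxy).resolve_left hcut with h | h
    · exact (h.1.mono hle).symm.trans (hxy'.trans (h.2.mono hle).symm)
    · exact (h.2.mono hle).trans (hxy'.symm.trans (h.1.mono hle))
  exact ⟨sup_le ((deleteEdges_le _).trans hT.le) hPH, fun u hu u' hu' h =>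
    reachable_of_reachable_deleteEdges hww hle (hT.reachable u hu u' hu' h)⟩

variable [Fintype V]

/-- A weight that is dominated by the vertices of maximum degree. -/
def weight (T : SimpleGraph V) : ℕ := ∑ v, (Fintype.card V + 1) ^ deg T v

theorem weight_lt_weight {j : ℕ} (hw : deg T' w < deg T w) (hj : j ≤ deg T w)
    (h : ∀ v ≠ w, deg T' v < j ∨ deg T' v ≤ deg T v) : weight T' < weight T := by
  set b := Fintype.card V + 1
  set d := deg T w - 1
  have hw' : deg T' w ≤ d ∧ deg T w = d + 1 := by omega
  have hb1 : 1 ≤ b := by omega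
  have hterm (v : V) (hv : v ∈ univ.erase w) : b ^ deg T' v ≤ b ^ deg T v + b ^ d := by
    rcases h v (ne_of_mem_erase hv) with h | h
    · exact (Nat.pow_le_pow_right hb1 (by omega)).trans (Nat.le_add_left _ _)
    · exact (Nat.pow_le_pow_right hb1 h).trans (Nat.le_add_right _ _)
  have hcard : #(univ.erase w) + 1 = Fintype.card V := card_erase_add_one (mem_univ w)
  calc weight T' = b ^ deg T' w + ∑ v ∈ univ.erase w, b ^ deg T' v :=
        (add_sum_erase _ _ (mem_univ w)).symm
    _ ≤ b ^ d + (∑ v ∈ univ.erase w, b ^ deg T v + #(univ.erase w) * b ^ d) := by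
        grw [sum_le_sum hterm, sum_add_distrib, sum_const, smul_eq_mul, hw'.1]
    _ = ∑ v ∈ univ.erase w, b ^ deg T v + Fintype.card V * b ^ d := by rw [← hcard]; ring
    _ < ∑ v ∈ univ.erase w, b ^ deg T v + b * b ^ d := by
        gcongr
        exact Nat.lt_succ_self _
    _ = b ^ deg T w + ∑ v ∈ univ.erase w, b ^ deg T v := by rw [hw'.2, pow_succ']; ring
    _ = weight T := add_sum_erase _ (fun v => b ^ deg T v) (mem_univ w)

/-- A Steiner subgraph of minimum weight. It is a forest. -/
structure IsMinSteiner (H : SimpleGraph V) (U : Finset V) (T : SimpleGraph V) : Prop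
    extends IsSteiner H U T where
  weight_le : ∀ T', IsSteiner H U T' → weight T ≤ weight T'

theorem exists_isMinSteiner (H : SimpleGraph V) (U : Finset V) : ∃ T, IsMinSteiner H U T := by
  obtain ⟨T, hT, hmin⟩ := exists_minimalFor_of_wellFoundedLT (IsSteiner H U) weight
    ⟨H, le_rfl, fun _ _ _ _ h => h⟩
  exact ⟨T, hT, fun T' hT' => (le_total _ _).elim id (hmin hT')⟩

namespace IsMinSteiner

theorem not_isSteiner_deleteEdges (hT : IsMinSteiner H U T) (hab : T.Adj a b) :
    ¬ IsSteiner H U (T.deleteEdges {s(a, b)}) := fun h =>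
  (weight_lt_weight (j := 0) (deg_deleteEdges_lt hab) (Nat.zero_le _) fun v _ =>
    .inr (deg_mono (deleteEdges_le _) v)).not_ge (hT.weight_le _ h)

theorem not_reachable_deleteEdges (hT : IsMinSteiner H U T) (hab : T.Adj a b) :
    ¬ (T.deleteEdges {s(a, b)}).Reachable a b := fun h =>
  hT.not_isSteiner_deleteEdges hab ⟨(deleteEdges_le _).trans hT.le, fun u hu u' hu' huu' =>
    reachable_of_reachable_deleteEdges h le_rfl (hT.reachable u hu u' hu' huu')⟩

theorem exists_terminal_deleteEdges (hT : IsMinSteiner H U T) (hab : T.Adj a b) :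
    ∃ u ∈ U, (T.deleteEdges {s(a, b)}).Reachable a u := by
  by_contra! hno
  refine hT.not_isSteiner_deleteEdges hab
    ⟨(deleteEdges_le _).trans hT.le, fun u hu u' hu' h => ?_⟩
  rcases reachable_deleteEdges_or (a := a) (b := b) (hT.reachable u hu u' hu' h) with h | h | h
  · exact h
  · exact (hno u hu h.1.symm).elim
  · exact (hno u' hu' h.2).elim

theorem exists_terminal_of_touched (hT : IsMinSteiner H U T) (h : Touched T U v) :
    ∃ u ∈ U, T.Reachable v u := by
  rcases h with h | ⟨w, hw⟩
  · exact ⟨v, h, .rfl⟩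
  · obtain ⟨u, hu, hvu⟩ := hT.exists_terminal_deleteEdges hw
    exact ⟨u, hu, hvu.mono (deleteEdges_le _)⟩

theorem reachable_of_touched (hT : IsMinSteiner H U T) (hx : Touched T U x)
    (hy : Touched T U y) (h : H.Reachable x y) : T.Reachable x y := by
  obtain ⟨u, hu, hxu⟩ := hT.exists_terminal_of_touched hx
  obtain ⟨u', hu', hyu'⟩ := hT.exists_terminal_of_touched hy
  have huu' : H.Reachable u u' := (hxu.mono hT.le).symm.trans (h.trans (hyu'.mono hT.le))
  exact (hxu.trans (hT.reachable u hu u' hu' huu')).trans hyu'.symm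

theorem exists_terminal_avoiding (hT : IsMinSteiner H U T) (h : T.Adj v w) :
    ∃ u ∈ U, (avoiding T {v}).Reachable w u := by
  obtain ⟨u, hu, hwu⟩ := hT.exists_terminal_deleteEdges h.symm
  have hne (z : V) (hz : (T.deleteEdges {s(w, v)}).Reachable w z) : z ≠ v := by
    rintro rfl
    exact hT.not_reachable_deleteEdges h.symm hz
  refine ⟨u, hu, reachable_of_adj_on_component (fun z z' hz hzz' => ?_) hwu⟩
  have hz' := hne z' (hz.trans hzz'.reachable)
  exact avoiding_adj.2 ⟨deleteEdges_le _ hzz', by simpa using hne z hz, by simpa using hz'⟩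

theorem not_reachable_avoiding (hT : IsMinSteiner H U T) (hw : T.Adj v w) (hw' : T.Adj v w')
    (hne : w ≠ w') : ¬ (avoiding T {v}).Reachable w w' := by
  intro h
  have hle : avoiding T {v} ≤ T.deleteEdges {s(v, w)} := by
    intro a b hab
    simp only [avoiding_adj, mem_singleton] at hab
    simp only [deleteEdges_adj, Set.mem_singleton_iff, Sym2.eq_iff]
    tauto
  have hvw' : (T.deleteEdges {s(v, w)}).Adj v w' := by simp [hw', hw.ne, hne.symm]
  exact hT.not_reachable_deleteEdges hw (hvw'.reachable.trans (h.mono hle).symm)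

/- The branch at `v` towards the root of its tree accounts for the `+ 1`. -/
theorem exists_branch_terminals (hT : IsMinSteiner H U T) (v : V) :
    ∃ Z ⊆ U, deg T v ≤ #Z + 1 ∧ Separated (avoiding T {v}) Z ∧
      ∀ z ∈ Z, ∃ w, T.Adj v w ∧ (avoiding T {v}).Reachable w z ∧
        ¬ (avoiding T {v}).Reachable w (root T v) := by
  set A := avoiding T {v}
  set up : Finset V := {w | T.Adj v w ∧ A.Reachable w (root T v)}
  set down : Finset V := {w | T.Adj v w ∧ ¬ A.Reachable w (root T v)}
  have hup : #up ≤ 1 := by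
    refine card_le_one.2 fun w hw w' hw' => by_contra fun hne => ?_
    rw [mem_filter_univ] at hw hw'
    exact hT.not_reachable_avoiding hw.1 hw'.1 hne (hw.2.trans hw'.2.symm)
  have hdeg : deg T v = #up + #down := by
    rw [deg, Set.ncard_eq_toFinset_card', ← card_filter_add_card_filter_not
      (s := (T.neighborSet v).toFinset) fun w => A.Reachable w (root T v)]
    congr 2 <;> · ext w; simp [up, down]
  have hdown (w : V) (hw : w ∈ down) : T.Adj v w ∧ ¬ A.Reachable w (root T v) := by
    rwa [mem_filter_univ] at hw
  have : Nonempty V := ⟨v⟩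
  choose! g hgU hg using fun w hw => hT.exists_terminal_avoiding (hdown w hw).1
  have hsep (w : V) (hw : w ∈ down) (w' : V) (hw' : w' ∈ down) (h : A.Reachable (g w) (g w')) :
      w = w' := by
    refine by_contra fun hne =>
      hT.not_reachable_avoiding (hdown w hw).1 (hdown w' hw').1 hne ?_
    exact (hg w hw).trans (h.trans (hg w' hw').symm)
  refine ⟨down.image g, image_subset_iff.2 hgU, ?_, ?_, ?_⟩
  · rw [card_image_of_injOn fun w hw w' hw' h => hsep w hw w' hw' (by rw [h])]
    omega
  · rintro z hz z' hz' hne hr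
    obtain ⟨w, hw, rfl⟩ := mem_image.1 hz
    obtain ⟨w', hw', rfl⟩ := mem_image.1 hz'
    exact hne (congrArg g (hsep w hw w' hw' hr))
  · simp only [forall_mem_image]
    exact fun w hw => ⟨w, (hdown w hw).1, hg w hw, (hdown w hw).2⟩

theorem exists_cut_edge (hT : IsMinSteiner H U T) (h : T.Reachable x y)
    (hS : ¬ (avoiding T S).Reachable x y) :
    ∃ w ∈ S, ∃ w', T.Adj w w' ∧ ¬ (T.deleteEdges {s(w, w')}).Reachable x y := by
  obtain ⟨P, -, hP⟩ := exists_minimal_le_of_wellFoundedLT (fun P => P ≤ T ∧ P.Reachable x y) T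
    ⟨le_rfl, h⟩
  obtain ⟨w, hwS, w', hww'⟩ : ∃ w ∈ S, ∃ w', P.Adj w w' := by
    by_contra! hno
    refine hS (hP.prop.2.mono fun a b hab => avoiding_adj.2 ⟨hP.prop.1 hab, ?_, ?_⟩)
    · exact fun ha => hno a ha b hab
    · exact fun hb => hno b hb a hab.symm
  have hle : P.deleteEdges {s(w, w')} ≤ T.deleteEdges {s(w, w')} := deleteEdges_mono hP.prop.1
  have hcut : ¬ (P.deleteEdges {s(w, w')}).Reachable x y := fun hr => by
    have := hP.le_of_le ⟨(deleteEdges_le _).trans hP.prop.1, hr⟩ (deleteEdges_le _) hww'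
    simp at this
  refine ⟨w, hwS, w', hP.prop.1 hww', fun hr => hT.not_reachable_deleteEdges (hP.prop.1 hww') ?_⟩
  rcases (reachable_deleteEdges_or hP.prop.2).resolve_left hcut with h | h
  · exact (h.1.mono hle).symm.trans (hr.trans (h.2.mono hle).symm)
  · exact (h.2.mono hle).trans (hr.symm.trans (h.1.mono hle))

/- Delete the vertices of `S` in order of increasing depth: each deletion splits off all
branches below the deleted vertex, and each of these contains a terminal. -/
theorem exists_separated_card_add_sum_deg_le (hT : IsMinSteiner H U T) {Y₀ : Finset V}
    (hY₀ : Y₀ ⊆ U) (hsep₀ : Separated H Y₀) (S : Finset V) :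
    ∃ Y ⊆ U, Disjoint Y S ∧ Separated (avoiding T S) Y ∧
      #Y₀ + ∑ v ∈ S, deg T v ≤ #Y + 2 * #S := by
  induction S using Finset.induction_on_max_value (depth T) with
  | empty =>
    exact ⟨Y₀, hY₀, disjoint_empty_right _,
      fun y hy y' hy' hne hr => hsep₀ hy hy' hne (hr.mono (restrict_le.trans hT.le)), by simp⟩
  | insert v S hv hmax ih =>
    obtain ⟨Y, hYU, hYS, hY, hcard⟩ := ih
    obtain ⟨Z, hZU, hdeg, hZ, hbranch⟩ := hT.exists_branch_terminals v
    have hbelow (w z : V) (hw : T.Adj v w) (hroot : ¬ (avoiding T {v}).Reachable w (root T v))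
        (hwz : (avoiding T {v}).Reachable w z) : z ∉ insert v S := by
      have hzv : z ≠ v := by
        simpa using mem_of_reachable_restrict hwz (by simpa using hw.ne')
      have hdepth : depth T v < depth T z :=
        depth_lt_depth (hw.reachable.trans (hwz.mono restrict_le)) hzv
          fun h => hroot (hwz.trans h)
      rw [mem_insert, not_or]
      exact ⟨hzv, fun hzS => (hmax z hzS).not_gt hdepth⟩
    have hvZ (z : V) (hz : z ∈ Z) : (avoiding T S).Reachable v z := by
      obtain ⟨w, hw, hwz, hroot⟩ := hbranch z hz
      have hstep (u : V) (hu : (avoiding T {v}).Reachable w u) : u ∉ S := fun huS =>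
        hbelow w u hw hroot hu (mem_insert_of_mem huS)
      have hvw : (avoiding T S).Adj v w := avoiding_adj.2 ⟨hw, hv, hstep w .rfl⟩
      exact hvw.reachable.trans <| reachable_of_adj_on_component (fun u u' hu huu' =>
        avoiding_adj.2 ⟨restrict_le huu', hstep u hu, hstep u' (hu.trans huu'.reachable)⟩) hwz
    obtain ⟨Y', hY'Y, hvY', hsep, hcard'⟩ := hY.exists_insert_vertex hZ hvZ
    refine ⟨Y' ∪ Z, union_subset (hY'Y.trans hYU) hZU, ?_, hsep, ?_⟩
    · refine disjoint_union_left.2 ⟨disjoint_insert_right.2 ⟨hvY', hYS.mono_left hY'Y⟩, ?_⟩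
      refine Finset.disjoint_left.2 fun z hz => ?_
      obtain ⟨w, hw, hwz, hroot⟩ := hbranch z hz
      exact hbelow w z hw hroot hwz
    · rw [sum_insert hv, card_insert_of_notMem hv]
      omega

/-- The vertices of degree at least `j` in `T`. -/
def highDeg (T : SimpleGraph V) (j : ℕ) : Finset V := {v | j ≤ deg T v}

theorem mem_highDeg {j : ℕ} : v ∈ highDeg T j ↔ j ≤ deg T v := mem_filter_univ v

/-- The part of `H` in which a path from `x` to `y` can be added to `T` without raising the
degree of a vertex of `T` other than `x` and `y`, and without touching `S`. -/
abbrev detour (H T : SimpleGraph V) (U S : Finset V) (x y : V) : SimpleGraph V :=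
  restrict H {v | v ∉ S ∧ (Touched T U v → v = x ∨ v = y)}

/- Otherwise exchange an edge at a vertex of degree `> k` for a path in the detour graph, which
only creates vertices of degree `≤ k`; this would reduce the weight. -/
theorem reachable_avoiding_of_detour (hT : IsMinSteiner H U T) {k : ℕ} (hk : 2 ≤ k)
    (hx : Touched T U x) (hy : Touched T U y) (hxk : x ∉ highDeg T k) (hyk : y ∉ highDeg T k)
    (h : (detour H T U (highDeg T k) x y).Reachable x y) :
    (avoiding T (highDeg T (k + 1))).Reachable x y := by
  by_contra hcon
  have hxy : x ≠ y := by
    rintro rfl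
    exact hcon .rfl
  have hTxy : T.Reachable x y := hT.reachable_of_touched hx hy (h.mono restrict_le)
  obtain ⟨w, hw, w', hww', hcut⟩ := hT.exists_cut_edge hTxy hcon
  obtain ⟨P, hP, hPxy, hP2, hPx, hPy⟩ := exists_thin_path h hxy
  rw [mem_highDeg] at hxk hyk hw
  have hdeg (v : V) : deg (T.deleteEdges {s(w, w')} ⊔ P) v ≤
      deg (T.deleteEdges {s(w, w')}) v + deg P v := deg_sup_le _ _ v
  have hmono (v : V) : deg (T.deleteEdges {s(w, w')}) v ≤ deg T v := deg_mono (deleteEdges_le _) v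
  have hPdeg (v : V) (hv : Touched T U v) (hvx : v ≠ x) (hvy : v ≠ y) : deg P v = 0 :=
    deg_eq_zero_iff.2 fun u hu => ((restrict_adj.1 (hP hu)).2.1.2 hv).elim hvx hvy
  have hTdeg (v : V) (hv : ¬ Touched T U v) : deg T v = 0 :=
    deg_eq_zero_iff.2 fun u hu => hv (.inr ⟨u, hu⟩)
  have hlt : weight (T.deleteEdges {s(w, w')} ⊔ P) < weight T := by
    refine weight_lt_weight ?_ hw fun v _ => ?_
    · have := hdeg w
      have := deg_deleteEdges_lt hww'
      have := hPdeg w (.inr ⟨w', hww'⟩) (by rintro rfl; omega) (by rintro rfl; omega)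
      omega
    · have := hdeg v
      have := hmono v
      by_cases hvx : v = x
      · grind
      by_cases hvy : v = y
      · grind
      by_cases hv : Touched T U v
      · have := hPdeg v hv hvx hvy
        omega
      · have := hTdeg v hv
        have := hP2 v
        omega
  exact hlt.not_ge (hT.weight_le _ (hT.exchange hTxy hcut (hP.trans restrict_le) hPxy))

/- Follow a walk in `H` and remember the last vertex of `T` on it: each excursion outside `T` is
a detour. -/
theorem reachable_avoiding_highDeg (hT : IsMinSteiner H U T) {k : ℕ} (hk : 2 ≤ k)
    (ha : a ∈ U) (hb : b ∈ U) (hak : a ∉ highDeg T k)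
    (h : (avoiding H (highDeg T k)).Reachable a b) :
    (avoiding T (highDeg T (k + 1))).Reachable a b := by
  set S := highDeg T k
  suffices ∃ x, Touched T U x ∧ x ∉ S ∧ (avoiding T (highDeg T (k + 1))).Reachable a x ∧
      (detour H T U S x x).Reachable x b ∧ (Touched T U b → b = x) by
    obtain ⟨x, -, -, hax, -, hx⟩ := this
    rwa [hx (.inl hb)]
  refine reachable_induction (fun z => ∃ x, Touched T U x ∧ x ∉ S ∧
    (avoiding T (highDeg T (k + 1))).Reachable a x ∧ (detour H T U S x x).Reachable x z ∧
    (Touched T U z → z = x)) ?_ h ⟨a, .inl ha, hak, .rfl, .rfl, fun _ => rfl⟩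
  rintro z z' hzz' ⟨x, hx, hxS, hax, hxz, hz⟩
  obtain ⟨hzz', hzS, hz'S⟩ := avoiding_adj.1 hzz'
  by_cases hz' : Touched T U z'
  · have hle : detour H T U S x x ≤ detour H T U S x z' :=
      restrict_mono le_rfl fun v hv => ⟨hv.1, fun h => .inl ((hv.2 h).elim id id)⟩
    have hadj : (detour H T U S x z').Adj z z' :=
      restrict_adj.2 ⟨hzz', ⟨hzS, fun h => .inl (hz h)⟩, hz'S, fun _ => .inr rfl⟩
    exact ⟨z', hz', hz'S, hax.trans (hT.reachable_avoiding_of_detour hk hx hz' hxS hz'S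
      ((hxz.mono hle).trans hadj.reachable)), .rfl, fun _ => rfl⟩
  · have hadj : (detour H T U S x x).Adj z z' :=
      restrict_adj.2 ⟨hzz', ⟨hzS, fun h => .inl (hz h)⟩, hz'S, fun h => (hz' h).elim⟩
    exact ⟨x, hx, hxS, hax, hxz.trans hadj.reachable, fun h => (hz' h).elim⟩

end IsMinSteiner

/-- Deleting a set `B` of non-isolated vertices from `H` leaves at most `m + K |B|` components
that contain a terminal. -/
def IsTough (H : SimpleGraph V) (U : Finset V) (m K : ℕ) : Prop :=
  ∀ B Y : Finset V, (∀ v ∈ B, ∃ w, H.Adj v w) → Y ⊆ U → Disjoint Y B →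
    Separated (avoiding H B) Y → #Y ≤ m + K * #B

namespace IsMinSteiner

theorem mul_card_highDeg_le (hT : IsMinSteiner H U T) {Y₀ : Finset V} (hY₀ : Y₀ ⊆ U)
    (hsep₀ : Separated H Y₀) {K k : ℕ} (htough : IsTough H U #Y₀ K) (hk : 2 ≤ k) :
    (k + 1) * #(highDeg T (k + 1)) ≤
      2 * #(highDeg T (k + 1)) + (K + 1) * #(highDeg T k) := by
  obtain ⟨Y, hYU, -, hY, hcard⟩ :=
    hT.exists_separated_card_add_sum_deg_le hY₀ hsep₀ (highDeg T (k + 1))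
  have hle : #(Y \ highDeg T k) ≤ #Y₀ + K * #(highDeg T k) := by
    refine htough _ _ (fun v hv => ?_) (sdiff_subset.trans hYU) sdiff_disjoint
      fun y hy y' hy' hne hr => ?_
    · have hpos : deg T v ≠ 0 := by
        have := mem_highDeg.1 hv
        omega
      obtain ⟨w, hw⟩ := not_forall_not.1 (mt deg_eq_zero_iff.2 hpos)
      exact ⟨w, hT.le hw⟩
    · rw [mem_coe, mem_sdiff] at hy hy'
      exact hY hy.1 hy'.1 hne
        (hT.reachable_avoiding_highDeg hk (hYU hy.1) (hYU hy'.1) hy.2 hr)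
  have hsum : #(highDeg T (k + 1)) * (k + 1) ≤ ∑ v ∈ highDeg T (k + 1), deg T v :=
    card_nsmul_le_sum _ _ _ fun v hv => mem_highDeg.1 hv
  have hsdiff : #Y - #(highDeg T k) ≤ #(Y \ highDeg T k) := le_card_sdiff _ _
  have hK : (K + 1) * #(highDeg T k) = K * #(highDeg T k) + #(highDeg T k) := by ring
  rw [mul_comm] at hsum
  omega

theorem deg_lt (hT : IsMinSteiner H U T) {Y₀ : Finset V} (hY₀ : Y₀ ⊆ U)
    (hsep₀ : Separated H Y₀) {K l : ℕ} (htough : IsTough H U #Y₀ K)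
    (hl : Fintype.card V < 2 ^ l) (v : V) : deg T v < 2 * K + 4 + l := by
  have hdecay (m : ℕ) : 2 ^ m * #(highDeg T (2 * K + 4 + m)) ≤ Fintype.card V := by
    induction m with
    | zero => simpa using card_le_univ _
    | succ m ih =>
      have hstep := hT.mul_card_highDeg_le hY₀ hsep₀ htough (k := 2 * K + 4 + m) (by omega)
      have hhalf : 2 * #(highDeg T (2 * K + 4 + (m + 1))) ≤ #(highDeg T (2 * K + 4 + m)) := by
        rw [← add_assoc]
        by_contra! hlt
        have := Nat.mul_lt_mul_of_pos_left hlt (Nat.succ_pos K)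
        nlinarith
      calc 2 ^ (m + 1) * #(highDeg T (2 * K + 4 + (m + 1)))
          = 2 ^ m * (2 * #(highDeg T (2 * K + 4 + (m + 1)))) := by ring
        _ ≤ 2 ^ m * #(highDeg T (2 * K + 4 + m)) := by gcongr
        _ ≤ Fintype.card V := ih
  by_contra! hv
  have hpos : 0 < #(highDeg T (2 * K + 4 + l)) := card_pos.2 ⟨v, mem_highDeg.2 hv⟩
  exact ((Nat.le_mul_of_pos_right _ hpos).trans (hdecay l)).not_gt hl

end IsMinSteiner

end SteinerForest

theorem IsOptimalLevel.exists_lowDegree_forest [Fintype V] {G : SimpleGraph V} {lev : V → ℕ}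
    (hlev : IsOptimalLevel G lev) {l : ℕ} (hl : Fintype.card V < 2 ^ l) (i : ℕ) :
    ∃ T ≤ upTo G lev i,
      (∀ u u', lev u = i → lev u' = i → (upTo G lev i).Reachable u u' → T.Reachable u u') ∧
      ∀ v, deg T v < 2 * (3 * i + 2) + 4 + l := by
  set U : Finset V := {v | lev v = i}
  have hU (v : V) : v ∈ U ↔ lev v = i := mem_filter_univ v
  obtain ⟨T, hT⟩ := exists_isMinSteiner (upTo G lev i) U
  obtain ⟨Y₀, hY₀, hsep₀, hcard⟩ := exists_separated_card_eq_numCompsAt G lev i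
  have htough : IsTough (upTo G lev i) U #Y₀ (3 * i + 2) := fun B Y hB hY hYB hsep => by
    refine hcard ▸ hlev.card_separated_le (fun v hv => ?_) (fun y hy => (hU y).1 (hY hy)) hYB hsep
    obtain ⟨w, hw⟩ := hB v hv
    exact (restrict_adj.1 hw).2.1
  exact ⟨T, hT.le, fun u u' hu hu' => hT.reachable u ((hU u).2 hu) u' ((hU u').2 hu'),
    hT.deg_lt (fun y hy => (hU y).2 (hY₀ y hy)) hsep₀ htough hl⟩

end

/-! ### Tours and hierarchies of clusters -/

noncomputable section

open SimpleGraph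

variable {V : Type*}

section EulerTour

variable {A : SimpleGraph V} {r : V} {w : List V}

/-- `w` is a walk around a subtree of `A` containing `r`: its steps are edges of `A`, and it visits
a vertex at most once more than that vertex has neighbours on `w`. -/
structure IsTour (A : SimpleGraph V) (r : V) (w : List V) : Prop where
  root_mem : r ∈ w
  isChain : w.IsChain A.Adj
  reachable : ∀ v ∈ w, A.Reachable r v
  count_le : ∀ v, w.count v ≤ 1 + #{u ∈ w.toFinset | A.Adj v u}

theorem isTour_singleton : IsTour A r [r] where
  root_mem := List.mem_singleton_self r
  isChain := List.isChain_singleton r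
  reachable v hv := List.mem_singleton.1 hv ▸ .rfl
  count_le v := by
    have : [r].count v ≤ 1 := List.count_le_length
    lia

theorem count_detour (w₁ w₂ : List V) (u v z : V) :
    (w₁ ++ v :: u :: v :: w₂).count z =
      (w₁ ++ v :: w₂).count z + (if u = z then 1 else 0) + if v = z then 1 else 0 := by
  simp only [List.count_append, List.count_cons, beq_iff_eq]
  lia

/- The detour `v, u, v` replaces one visit of `v`. -/
theorem IsTour.exists_insert (hw : IsTour A r w) {u v : V} (hv : v ∈ w) (hvu : A.Adj v u)
    (hu : u ∉ w) : ∃ w', IsTour A r w' ∧ w'.toFinset = insert u w.toFinset := by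
  obtain ⟨w₁, w₂, rfl⟩ := List.append_of_mem hv
  have hins : (w₁ ++ v :: u :: v :: w₂).toFinset = insert u (w₁ ++ v :: w₂).toFinset := by
    ext z; simp
  refine ⟨w₁ ++ v :: u :: v :: w₂, ⟨?_, ?_, fun z hz => ?_, fun z => ?_⟩, hins⟩
  · rw [← List.mem_toFinset, hins]
    exact mem_insert_of_mem (List.mem_toFinset.2 hw.root_mem)
  · have hchain := hw.isChain
    rw [List.isChain_append] at hchain ⊢
    refine ⟨hchain.1, ?_, by simpa using hchain.2.2⟩
    rw [List.isChain_cons_cons, List.isChain_cons_cons]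
    exact ⟨hvu, hvu.symm, hchain.2.1⟩
  · rw [← List.mem_toFinset, hins, mem_insert, List.mem_toFinset] at hz
    rcases hz with rfl | hz
    exacts [(hw.reachable v hv).trans hvu.reachable, hw.reachable z hz]
  · have hcount := hw.count_le z
    have hnew : u ∉ ({y ∈ (w₁ ++ v :: w₂).toFinset | A.Adj z y} : Finset V) := fun h =>
      hu (List.mem_toFinset.1 (mem_filter.1 h).1)
    rw [count_detour, hins, filter_insert]
    rcases eq_or_ne v z with rfl | hvz
    · rw [if_pos hvu, card_insert_of_notMem hnew, if_neg hvu.ne', if_pos rfl]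
      lia
    · rw [if_neg hvz]
      rcases eq_or_ne u z with rfl | huz
      · rw [List.count_eq_zero.2 hu, if_pos rfl]
        lia
      · rw [if_neg huz]
        refine hcount.trans (Nat.add_le_add_left (card_le_card ?_) 1)
        split_ifs
        exacts [subset_insert _ _, Subset.rfl]

theorem exists_eulerTour [Finite V] (A : SimpleGraph V) (r : V) :
    ∃ w : List V, w.IsChain A.Adj ∧ (∀ v, v ∈ w ↔ A.Reachable r v) ∧
      ∀ v, w.count v ≤ 1 + deg A v := by
  have := Fintype.ofFinite V
  obtain ⟨s, hs, hmax⟩ := exists_max_image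
    ({s | ∃ w, IsTour A r w ∧ w.toFinset = s} : Finset (Finset V)) card
    ⟨[r].toFinset, mem_filter_univ _ |>.2 ⟨[r], isTour_singleton, rfl⟩⟩
  obtain ⟨w, hw, rfl⟩ := (mem_filter_univ _).1 hs
  have hclosed : ∀ v u, A.Adj v u → v ∈ w → u ∈ w := by
    intro v u hvu hv
    by_contra hu
    obtain ⟨w', hw', hins⟩ := hw.exists_insert hv hvu hu
    have := hmax _ ((mem_filter_univ _).2 ⟨w', hw', rfl⟩)
    rw [hins, card_insert_of_notMem (by rwa [List.mem_toFinset])] at this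
    lia
  refine ⟨w, hw.isChain, fun v => ⟨hw.reachable v, fun h => ?_⟩, fun v =>
    (hw.count_le v).trans (Nat.add_le_add_left ?_ 1)⟩
  · exact reachable_induction (· ∈ w) hclosed h hw.root_mem
  · rw [← Set.ncard_coe_finset]
    exact Set.ncard_le_ncard fun u hu => (mem_filter.1 hu).2

theorem deg_finset_sup_le {ι : Type*} (s : Finset ι) (A : ι → SimpleGraph V) (v : V) :
    deg (s.sup A) v ≤ ∑ i ∈ s, deg (A i) v := by
  induction s using Finset.cons_induction with
  | empty => simp [deg, neighborSet]
  | cons i s hi ih =>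
    rw [sup_cons, sum_cons]
    exact (deg_sup_le _ _ v).trans (Nat.add_le_add_left ih _)

theorem length_le_of_count_le [Fintype V] {w : List V} {m : ℕ} (h : ∀ v, w.count v ≤ m) :
    w.length ≤ Fintype.card V * m := by
  rw [← Multiset.coe_card, ← Multiset.toFinset_sum_count_eq, ← card_univ, ← smul_eq_mul]
  refine (sum_le_sum_of_subset (subset_univ _)).trans (sum_le_card_nsmul _ _ _ fun v _ => ?_)
  rw [Multiset.coe_count]
  exact h v

theorem deg_lt_card [Fintype V] (A : SimpleGraph V) (v : V) : deg A v < Fintype.card V := by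
  rw [deg, ← Nat.card_eq_fintype_card, ← Set.ncard_univ]
  exact Set.ncard_lt_ncard
    ⟨Set.subset_univ _, fun h => A.irrefl (h (Set.mem_univ v) : A.Adj v v)⟩

end EulerTour

variable [Fintype V]

section Laminar

variable {B G : SimpleGraph V} {lev : V → ℕ} {X : Finset V} {c u x y z : V}

/-- The vertices outside `X` with a neighbour in `X`. -/
def outerNbrs (G : SimpleGraph V) (X : Finset V) : Finset V := {y | y ∉ X ∧ ∃ x ∈ X, G.Adj x y}

theorem mem_outerNbrs : y ∈ outerNbrs G X ↔ y ∉ X ∧ ∃ x ∈ X, G.Adj x y := mem_filter_univ y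

theorem levelComp_subset (hx : z ∈ levelComp G lev x) (hy : z ∈ levelComp G lev y)
    (hle : lev x ≤ lev y) : levelComp G lev x ⊆ levelComp G lev y := by
  intro w hw
  rw [mem_levelComp] at *
  exact hy.trans ((hx.symm.trans hw).mono (restrict_mono le_rfl fun _ h => le_trans h hle))

theorem levelComp_subset_of_mem (h : x ∈ levelComp G lev y) :
    levelComp G lev x ⊆ levelComp G lev y :=
  levelComp_subset (self_mem_levelComp G lev x) h (level_le_of_mem_levelComp h)

theorem mem_levelComp_of_adj (hu : u ∈ levelComp G lev y) (huz : G.Adj u z)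
    (hz : lev z ≤ lev y) : z ∈ levelComp G lev y :=
  mem_levelComp.2 ((mem_levelComp.1 hu).trans
    (restrict_adj.2 ⟨huz, level_le_of_mem_levelComp hu, hz⟩ : (upTo G lev _).Adj u z).reachable)

theorem level_lt_of_mem_outerNbrs (h : z ∈ outerNbrs G (levelComp G lev y)) :
    lev y < lev z := by
  obtain ⟨hz, u, hu, huz⟩ := mem_outerNbrs.1 h
  by_contra! hle
  exact hz (mem_levelComp_of_adj hu huz hle)

theorem levelComp_subset_of_mem_outerNbrs (hz : z ∈ outerNbrs G (levelComp G lev y))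
    (hc : z ∈ levelComp G lev c) : levelComp G lev y ⊆ levelComp G lev c := by
  have hyz := level_lt_of_mem_outerNbrs hz
  have hzc := level_le_of_mem_levelComp hc
  obtain ⟨-, u, hu, huz⟩ := mem_outerNbrs.1 hz
  have huy := level_le_of_mem_levelComp hu
  exact levelComp_subset hu (mem_levelComp_of_adj hc huz.symm (by lia)) (by lia)

theorem reachable_restrict_levelComp (hx : x ∈ levelComp G lev c) (hy : y ∈ levelComp G lev c) :
    (restrict G ↑(levelComp G lev c)).Reachable x y := by
  have from_center : ∀ z ∈ levelComp G lev c, (restrict G ↑(levelComp G lev c)).Reachable c z := by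
    intro z hz
    refine reachable_of_adj_on_component (fun u v hu huv => ?_) (mem_levelComp.1 hz)
    exact restrict_adj.2 ⟨restrict_le huv, mem_levelComp.2 hu,
      mem_levelComp.2 (hu.trans huv.reachable)⟩
  exact (from_center x hx).symm.trans (from_center y hy)

theorem exists_reachable_component_subset_levelComp (hB : B ≤ G) (lev : V → ℕ) (x : V) :
    ∃ d, B.Reachable x d ∧ ∀ y, B.Reachable x y → y ∈ levelComp G lev d := by
  obtain ⟨d, hd, hmax⟩ := exists_max_image ({y | B.Reachable x y} : Finset V) lev
    ⟨x, (mem_filter_univ x).2 .rfl⟩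
  simp only [mem_filter_univ] at hd hmax
  refine ⟨d, hd, fun y hy => mem_levelComp.2 ?_⟩
  refine reachable_of_adj_on_component (fun u v hu huv => ?_) (hd.symm.trans hy)
  exact restrict_adj.2 ⟨hB huv, hmax u (hd.trans hu), hmax v ((hd.trans hu).trans huv.reachable)⟩

variable (G lev) in
/-- A representative of the level component of `x`, the same for all `x` with that component. -/
def levelRep (x : V) : V := (Quotient.mk (Setoid.ker (levelComp G lev)) x).out

variable (G lev x) in
theorem levelComp_levelRep : levelComp G lev (levelRep G lev x) = levelComp G lev x :=
  Quotient.mk_out (s := Setoid.ker (levelComp G lev)) x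

theorem levelRep_congr (h : levelComp G lev x = levelComp G lev y) :
    levelRep G lev x = levelRep G lev y :=
  congrArg Quotient.out (Quotient.sound (s := Setoid.ker (levelComp G lev)) h)

variable (G lev) in
/-- One vertex for each level component. -/
def levelReps : Finset V := {c | levelRep G lev c = c}

theorem mem_levelReps : c ∈ levelReps G lev ↔ levelRep G lev c = c := mem_filter_univ c

variable (G lev x) in
theorem levelRep_mem_levelReps : levelRep G lev x ∈ levelReps G lev :=
  mem_levelReps.2 (levelRep_congr (levelComp_levelRep G lev x))

theorem card_levelReps_containing_le {L : ℕ} (hL : ∀ x, lev x < L) (v : V) :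
    #{c ∈ levelReps G lev | v ∈ levelComp G lev c} ≤ L := by
  rw [← card_range L]
  refine card_le_card_of_injOn lev (fun c _ => by simpa using hL c) fun c hc d hd hcd => ?_
  simp only [coe_filter, mem_levelReps, Set.mem_ofPred_eq] at hc hd
  rw [← hc.1, ← hd.1]
  exact levelRep_congr (levelComp_eq_of_mem hc.2 hd.2 hcd)

end Laminar

section Clusters

variable {G : SimpleGraph V} {lev : V → ℕ} {S : Finset V} {x y z : V}

/-- The level component of `y` has a neighbour in `S`. -/
def Attached (G : SimpleGraph V) (lev : V → ℕ) (S : Finset V) (y : V) : Prop :=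
  ¬Disjoint (outerNbrs G (levelComp G lev y)) S

theorem attached_congr (h : levelComp G lev x = levelComp G lev y) :
    Attached G lev S x ↔ Attached G lev S y := by rw [Attached, Attached, h]

theorem exists_smallest_unattached (G : SimpleGraph V) (lev : V → ℕ) (S : Finset V) (x : V) :
    ∃ y, (¬Attached G lev S y ∧ x ∈ levelComp G lev y) ∧
      ∀ z, ¬Attached G lev S z → x ∈ levelComp G lev z → lev y ≤ lev z := by
  have hne : ({y | ¬Attached G lev S y ∧ x ∈ levelComp G lev y} : Finset V).Nonempty := by
    obtain ⟨d, hxd, hd⟩ := exists_reachable_component_subset_levelComp le_rfl lev x (G := G)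
    refine ⟨d, (mem_filter_univ d).2 ⟨not_not.2 (Finset.disjoint_left.2 fun z hz _ => ?_),
      hd x .rfl⟩⟩
    obtain ⟨hzd, u, hu, huz⟩ := mem_outerNbrs.1 hz
    exact hzd (hd z ((hxd.trans ((mem_levelComp.1 hu).mono restrict_le)).trans huz.reachable))
  obtain ⟨y, hy, hmin⟩ := exists_min_image _ lev hne
  simp only [mem_filter_univ] at hy hmin
  exact ⟨y, hy, fun z hz hx => hmin z ⟨hz, hx⟩⟩

variable (G lev S) in
/-- The centre of the cluster of `x`: the representative of the smallest level component that
contains `x` and has no neighbour in `S`. -/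
def center (x : V) : V := levelRep G lev (exists_smallest_unattached G lev S x).choose

variable (G lev S x) in
theorem levelComp_center : levelComp G lev (center G lev S x) =
    levelComp G lev (exists_smallest_unattached G lev S x).choose := levelComp_levelRep ..

variable (G lev S x) in
theorem not_attached_center : ¬Attached G lev S (center G lev S x) := by
  rw [attached_congr (levelComp_center G lev S x)]
  exact (exists_smallest_unattached G lev S x).choose_spec.1.1

variable (G lev S x) in
theorem mem_levelComp_center : x ∈ levelComp G lev (center G lev S x) := by
  rw [levelComp_center]
  exact (exists_smallest_unattached G lev S x).choose_spec.1.2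

theorem levelComp_center_subset (h : ¬Attached G lev S y) (hx : x ∈ levelComp G lev y) :
    levelComp G lev (center G lev S x) ⊆ levelComp G lev y := by
  refine levelComp_subset (mem_levelComp_center G lev S x) hx ?_
  rw [level_eq_of_levelComp_eq (levelComp_center G lev S x)]
  exact (exists_smallest_unattached G lev S x).choose_spec.2 y h hx

variable (G lev S x) in
theorem center_mem_levelReps : center G lev S x ∈ levelReps G lev := levelRep_mem_levelReps ..

theorem center_eq_of_levelComp_eq
    (h : levelComp G lev (center G lev S x) = levelComp G lev (center G lev S y)) :
    center G lev S x = center G lev S y := by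
  rw [← mem_levelReps.1 (center_mem_levelReps G lev S x),
    ← mem_levelReps.1 (center_mem_levelReps G lev S y), levelRep_congr h]

theorem center_eq_of_mem (hx : x ∈ levelComp G lev (center G lev S y))
    (hy : y ∈ levelComp G lev (center G lev S x)) : center G lev S x = center G lev S y :=
  center_eq_of_levelComp_eq (Subset.antisymm
    (levelComp_center_subset (not_attached_center G lev S y) hx)
    (levelComp_center_subset (not_attached_center G lev S x) hy))

variable (G lev S x) in
theorem center_levelRep : center G lev S (levelRep G lev x) = center G lev S x := by
  have hmem : ∀ z, levelRep G lev x ∈ levelComp G lev z ↔ x ∈ levelComp G lev z := fun z =>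
    ⟨fun h => levelComp_subset_of_mem h (levelComp_levelRep G lev x ▸ self_mem_levelComp G lev x),
      fun h => levelComp_subset_of_mem h
        (levelComp_levelRep G lev x ▸ self_mem_levelComp G lev (levelRep G lev x))⟩
  exact center_eq_of_mem ((hmem _).2 (mem_levelComp_center G lev S x))
    ((hmem _).1 (mem_levelComp_center G lev S _))

theorem center_eq_levelRep (h : ¬Attached G lev S x) : center G lev S x = levelRep G lev x := by
  rw [← mem_levelReps.1 (center_mem_levelReps G lev S x)]
  exact levelRep_congr (Subset.antisymm (levelComp_center_subset h (self_mem_levelComp G lev x))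
    (levelComp_subset_of_mem (mem_levelComp_center G lev S x)))

theorem center_eq_of_mem_outerNbrs (hz : z ∈ outerNbrs G (levelComp G lev x)) (hS : z ∈ S) :
    center G lev S z = center G lev S x := by
  refine center_eq_of_mem ?_ (levelComp_subset_of_mem_outerNbrs hz
    (mem_levelComp_center G lev S z) (self_mem_levelComp G lev x))
  by_contra hzx
  obtain ⟨-, u, hu, huz⟩ := mem_outerNbrs.1 hz
  refine not_attached_center G lev S x
    (not_disjoint_iff.2 ⟨z, mem_outerNbrs.2 ⟨hzx, u, ?_, huz⟩, hS⟩)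
  exact levelComp_subset_of_mem (mem_levelComp_center G lev S x) hu

end Clusters

section ClusterTrees

variable {G T : SimpleGraph V} {lev : V → ℕ} {S : Finset V} {A : V → SimpleGraph V}
  {L Δ : ℕ} {a b c r v x z : V}

/-- `A` connects the vertices of `r`'s level inside its level component, and attaches them to a
neighbour of that component in `S` if there is one. -/
structure IsAttachingTree (G : SimpleGraph V) (lev : V → ℕ) (S : Finset V) (Δ : ℕ) (r : V)
    (A : SimpleGraph V) : Prop where
  le : A ≤ G
  deg_le : ∀ v, deg A v ≤ Δ
  mem_of_adj : ∀ a b, A.Adj a b →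
    a ∈ levelComp G lev r ∨ (a ∈ S ∧ a ∈ outerNbrs G (levelComp G lev r))
  reachable : ∀ x, levelComp G lev x = levelComp G lev r → A.Reachable x r
  reachable_attached : Attached G lev S r →
    ∃ z ∈ outerNbrs G (levelComp G lev r), z ∈ S ∧ A.Reachable r z

theorem exists_path_of_mem_outerNbrs (hz : z ∈ outerNbrs G (levelComp G lev r)) :
    ∃ P ≤ G, P.Reachable r z ∧ (∀ v, deg P v ≤ 2) ∧
      ∀ a b, P.Adj a b → a ∈ levelComp G lev r ∨ a = z := by
  obtain ⟨hzr, u, hu, huz⟩ := mem_outerNbrs.1 hz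
  have hrz : (restrict G (insert z ↑(levelComp G lev r))).Reachable r z :=
    ((reachable_restrict_levelComp (self_mem_levelComp G lev r) hu).mono
      (restrict_mono le_rfl (Set.subset_insert _ _))).trans
      (restrict_adj.2 ⟨huz, Set.mem_insert_of_mem z hu, Set.mem_insert ..⟩ :
        (restrict G (insert z ↑(levelComp G lev r))).Adj u z).reachable
  have hne : r ≠ z := fun h => hzr (h ▸ self_mem_levelComp G lev r)
  obtain ⟨P, hP, hPrz, hPdeg, -⟩ := exists_thin_path hrz hne
  exact ⟨P, hP.trans restrict_le, hPrz, hPdeg, fun a b hab => (restrict_adj.1 (hP hab)).2.1.symm⟩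

theorem exists_isAttachingTree (hT : T ≤ upTo G lev (lev r))
    (hconn : ∀ x y, lev x = lev r → lev y = lev r → (upTo G lev (lev r)).Reachable x y →
      T.Reachable x y) (hdeg : ∀ v, deg T v ≤ Δ) :
    ∃ A, IsAttachingTree G lev S (Δ + 2) r A := by
  set B := restrict T ↑(levelComp G lev r)
  have hBdeg : ∀ v, deg B v ≤ Δ := fun v => (deg_mono restrict_le v).trans (hdeg v)
  have hBG : B ≤ G := restrict_le.trans (hT.trans restrict_le)
  have hBmem : ∀ a b, B.Adj a b → a ∈ levelComp G lev r := fun a b h => (restrict_adj.1 h).2.1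
  have hBconn : ∀ x, levelComp G lev x = levelComp G lev r → B.Reachable x r := by
    intro x hx
    have hrx : (upTo G lev (lev r)).Reachable r x :=
      mem_levelComp.1 (hx ▸ self_mem_levelComp G lev x)
    refine reachable_of_adj_on_component (fun a b ha hab => ?_)
      (hconn x r (level_eq_of_levelComp_eq hx) rfl hrx.symm)
    have hra := hrx.trans (ha.mono hT)
    exact restrict_adj.2 ⟨hab, mem_levelComp.2 hra,
      mem_levelComp.2 (hra.trans (hT hab).reachable)⟩
  by_cases hatt : Attached G lev S r
  · obtain ⟨z, hz, hzS⟩ := not_disjoint_iff.1 hatt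
    obtain ⟨P, hPG, hPrz, hPdeg, hPmem⟩ := exists_path_of_mem_outerNbrs hz
    refine ⟨B ⊔ P, sup_le hBG hPG, fun v => (deg_sup_le ..).trans (add_le_add (hBdeg v) (hPdeg v)),
      fun a b hab => ?_, fun x hx => (hBconn x hx).mono le_sup_left,
      fun _ => ⟨z, hz, hzS, hPrz.mono le_sup_right⟩⟩
    rcases hab with hab | hab
    · exact Or.inl (hBmem a b hab)
    · exact (hPmem a b hab).imp_right fun (h : a = z) => h ▸ ⟨hzS, hz⟩
  · exact ⟨B, hBG, fun v => (hBdeg v).trans (Nat.le_add_right ..),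
      fun a b hab => Or.inl (hBmem a b hab), hBconn, fun h => absurd h hatt⟩

variable (G lev S A) in
/-- The union of the trees `A r` of the level components that make up the cluster with centre
`c`. -/
def clusterGraph (c : V) : SimpleGraph V := {r ∈ levelReps G lev | center G lev S r = c}.sup A

theorem le_clusterGraph_center : A (levelRep G lev x) ≤ clusterGraph G lev S A (center G lev S x) :=
  le_sup (f := A) (mem_filter.2 ⟨levelRep_mem_levelReps G lev x, center_levelRep G lev S x⟩)

theorem clusterGraph_le (hA : ∀ r, A r ≤ G) : clusterGraph G lev S A c ≤ G :=
  Finset.sup_le fun r _ => hA r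

theorem mem_levelComp_of_clusterGraph_adj (hA : ∀ r, IsAttachingTree G lev S Δ r (A r))
    (h : (clusterGraph G lev S A c).Adj a b) : a ∈ levelComp G lev c := by
  simp only [clusterGraph, Finset.sup_eq_iSup, iSup_adj] at h
  obtain ⟨r, hr, hab⟩ := h
  obtain rfl := (mem_filter.1 hr).2
  rcases (hA r).mem_of_adj a b hab with ha | ⟨haS, ha⟩
  · exact levelComp_subset_of_mem (mem_levelComp_center G lev S r) ha
  · exact center_eq_of_mem_outerNbrs ha haS ▸ mem_levelComp_center G lev S a

theorem reachable_clusterGraph_center (hA : ∀ r, IsAttachingTree G lev S Δ r (A r))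
    (hL : ∀ x, lev x < L) (x : V) :
    (clusterGraph G lev S A (center G lev S x)).Reachable (center G lev S x) x := by
  obtain ⟨k, hk⟩ : ∃ k, L - lev x = k := ⟨_, rfl⟩
  induction k using Nat.strong_induction_on generalizing x with
  | _ k ih =>
    have hxr : (clusterGraph G lev S A (center G lev S x)).Reachable (levelRep G lev x) x :=
      ((hA _).reachable x (levelComp_levelRep G lev x).symm).symm.mono le_clusterGraph_center
    by_cases hatt : Attached G lev S x
    · obtain ⟨z, hz, hzS, hrz⟩ := (hA (levelRep G lev x)).reachable_attached
        ((attached_congr (levelComp_levelRep G lev x)).2 hatt)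
      have hxz := level_lt_of_mem_outerNbrs hz
      rw [level_eq_of_levelComp_eq (levelComp_levelRep G lev x)] at hxz
      have hcz := ih (L - lev z) (by have := hL z; lia) z rfl
      rw [center_eq_of_mem_outerNbrs hz hzS, center_levelRep] at hcz
      exact (hcz.trans (hrz.mono le_clusterGraph_center).symm).trans hxr
    · nth_rw 2 [center_eq_levelRep hatt]
      exact hxr

theorem sum_one_add_deg_clusterGraph_le (hA : ∀ r, IsAttachingTree G lev S Δ r (A r))
    (hL : ∀ x, lev x < L) (hv : v ∉ S) :
    ∑ c ∈ levelReps G lev with v ∈ levelComp G lev c, (1 + deg (clusterGraph G lev S A c) v) ≤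
      L + L * Δ := by
  have hoverlap := card_levelReps_containing_le hL v (G := G)
  have hdeg : ∀ r, deg (A r) v ≤ if v ∈ levelComp G lev r then Δ else 0 := by
    intro r
    split_ifs with h
    · exact (hA r).deg_le v
    · refine (deg_eq_zero_iff.2 fun w hw => ?_).le
      exact ((hA r).mem_of_adj v w hw).elim h fun h' => hv h'.1
  rw [sum_add_distrib, ← card_eq_sum_ones]
  refine Nat.add_le_add hoverlap ?_
  calc ∑ c ∈ levelReps G lev with v ∈ levelComp G lev c, deg (clusterGraph G lev S A c) v
      ≤ ∑ c ∈ levelReps G lev, ∑ r ∈ levelReps G lev with center G lev S r = c, deg (A r) v :=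
        (sum_le_sum_of_subset (filter_subset _ _)).trans
          (sum_le_sum fun c _ => deg_finset_sup_le _ A v)
    _ = ∑ r ∈ levelReps G lev, deg (A r) v :=
        sum_fiberwise_of_maps_to (fun r _ => center_mem_levelReps G lev S r) _
    _ ≤ ∑ r ∈ levelReps G lev, if v ∈ levelComp G lev r then Δ else 0 :=
        sum_le_sum fun r _ => hdeg r
    _ = #{r ∈ levelReps G lev | v ∈ levelComp G lev r} * Δ := by
        rw [← sum_filter, sum_const, smul_eq_mul]
    _ ≤ L * Δ := Nat.mul_le_mul_right _ hoverlap

end ClusterTrees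

section Hierarchy

variable {G : SimpleGraph V} {lev : V → ℕ} {S : Finset V} {c x y : V}

/-- The clusters with centres `cl x` and `cl y` coincide, or one of `x`, `y` is an outer neighbour
of the cluster of the other. -/
def Linked (G : SimpleGraph V) (K : V → Finset V) (cl : V → V) (x y : V) : Prop :=
  cl x = cl y ∨ y ∈ outerNbrs G (K (cl x)) ∨ x ∈ outerNbrs G (K (cl y))

/-- A laminar family of connected clusters `K c`, `c ∈ centers`, that have no neighbours in `S`;
`center x` is the centre of the smallest cluster containing `x`. The tour of a cluster passes
through all `x` having that cluster as smallest one, and is empty if `c` is not a centre.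
`centers` is contained in a set `V₀` that, like the family `K`, may be chosen before `S`. -/
structure Hierarchy (G : SimpleGraph V) (K : V → Finset V) (V₀ S : Finset V) (visits : ℕ) where
  centers : Finset V
  center : V → V
  tour : V → List V
  centers_subset : centers ⊆ V₀
  center_mem : ∀ x, center x ∈ centers
  mem_cluster : ∀ x, x ∈ K (center x)
  disjoint_outerNbrs : ∀ c ∈ centers, Disjoint (outerNbrs G (K c)) S
  cluster_center_subset : ∀ c ∈ centers, ∀ x ∈ K c, K (center x) ⊆ K c
  subset_cluster_center : ∀ c ∈ centers, ∀ y ∈ outerNbrs G (K c), K c ⊆ K (center y)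
  linked_of_adj : ∀ x y, G.Adj x y → Linked G K center x y
  linked_of_mem_outerNbrs : ∀ c ∈ centers, ∀ x ∈ outerNbrs G (K c), ∀ y ∈ outerNbrs G (K c),
    Linked G K center x y
  exists_component_subset : ∀ B ≤ G, ∀ x, ∃ d, B.Reachable x d ∧
    ∀ y, B.Reachable x y → y ∈ K (center d)
  mem_of_mem_tour : ∀ c, ∀ v ∈ tour c, c ∈ centers ∧ v ∈ K c
  isChain_tour : ∀ c, (tour c).IsChain G.Adj
  mem_tour : ∀ x, x ∈ tour (center x)
  sum_count_tour_le : ∀ v ∉ S, ∑ c, (tour c).count v ≤ visits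
  length_tour_le : ∀ c, (tour c).length ≤ Fintype.card V ^ 2

theorem linked_center_of_adj (h : G.Adj x y) :
    Linked G (levelComp G lev) (center G lev S) x y := by
  by_cases hy : y ∈ levelComp G lev (center G lev S x)
  · by_cases hx : x ∈ levelComp G lev (center G lev S y)
    · exact Or.inl (center_eq_of_mem hx hy)
    · exact Or.inr (Or.inr (mem_outerNbrs.2 ⟨hx, y, mem_levelComp_center G lev S y, h.symm⟩))
  · exact Or.inr (Or.inl (mem_outerNbrs.2 ⟨hy, x, mem_levelComp_center G lev S x, h⟩))

theorem linked_center_of_mem_outerNbrs (hx : x ∈ outerNbrs G (levelComp G lev c))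
    (hy : y ∈ outerNbrs G (levelComp G lev c)) :
    Linked G (levelComp G lev) (center G lev S) x y := by
  wlog hle : lev (center G lev S x) ≤ lev (center G lev S y) generalizing x y
  · exact (this hy hx (le_of_not_ge hle)).imp Eq.symm Or.symm
  have hcx := levelComp_subset_of_mem_outerNbrs hx (mem_levelComp_center G lev S x)
  have hcy := levelComp_subset_of_mem_outerNbrs hy (mem_levelComp_center G lev S y)
  have hxy := levelComp_subset (hcx (self_mem_levelComp G lev c)) (hcy (self_mem_levelComp G lev c))
    hle
  by_cases hyx : y ∈ levelComp G lev (center G lev S x)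
  · exact Or.inl (center_eq_of_mem (hxy (mem_levelComp_center G lev S x)) hyx)
  · obtain ⟨-, u, hu, huy⟩ := mem_outerNbrs.1 hy
    exact Or.inr (Or.inl (mem_outerNbrs.2 ⟨hyx, u, hcx hu, huy⟩))

theorem center_mem_unattached (x : V) :
    center G lev S x ∈ {c ∈ levelReps G lev | ¬Attached G lev S c} :=
  mem_filter.2 ⟨center_mem_levelReps G lev S x, not_attached_center G lev S x⟩

theorem exists_clusterTours {A : V → SimpleGraph V} {L Δ : ℕ}
    (hA : ∀ r, IsAttachingTree G lev S Δ r (A r)) (hL : ∀ x, lev x < L) : ∃ W : V → List V,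
      (∀ c, ∀ v ∈ W c, c ∈ {c ∈ levelReps G lev | ¬Attached G lev S c} ∧ v ∈ levelComp G lev c) ∧
      (∀ c, (W c).IsChain G.Adj) ∧ (∀ x, x ∈ W (center G lev S x)) ∧
      (∀ v ∉ S, ∑ c, (W c).count v ≤ L + L * Δ) ∧ ∀ c, (W c).length ≤ Fintype.card V ^ 2 := by
  choose W hchain hmem hcount using fun c => exists_eulerTour (clusterGraph G lev S A c) c
  set R : Finset V := {c ∈ levelReps G lev | ¬Attached G lev S c}
  have hsub : ∀ c, ∀ v ∈ W c, v ∈ levelComp G lev c := fun c v hv =>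
    reachable_induction (· ∈ levelComp G lev c)
      (fun _ _ hab _ => mem_levelComp_of_clusterGraph_adj hA hab.symm) ((hmem c v).1 hv)
      (self_mem_levelComp G lev c)
  have hcountR : ∀ c v, (if c ∈ R then W c else []).count v ≤
      if c ∈ levelReps G lev ∧ v ∈ levelComp G lev c then
        1 + deg (clusterGraph G lev S A c) v else 0 := by
    intro c v
    by_cases hcv : c ∈ R ∧ v ∈ W c
    · rw [if_pos hcv.1, if_pos ⟨(mem_filter.1 hcv.1).1, hsub c v hcv.2⟩]
      exact hcount c v
    · refine (List.count_eq_zero.2 fun h => hcv ?_).trans_le (Nat.zero_le _)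
      split_ifs at h with hc
      exacts [⟨hc, h⟩, absurd h List.not_mem_nil]
  refine ⟨fun c => if c ∈ R then W c else [], fun c v hv => ?_, fun c => ?_, fun x => ?_,
    fun v hv => ?_, fun c => ?_⟩
  · dsimp only at hv
    split_ifs at hv with hc
    exacts [⟨hc, hsub c v hv⟩, absurd hv List.not_mem_nil]
  · dsimp only
    split_ifs
    exacts [(hchain c).imp fun _ _ h => clusterGraph_le (fun r => (hA r).le) h, List.isChain_nil]
  · dsimp only
    rw [if_pos (center_mem_unattached x)]
    exact (hmem _ x).2 (reachable_clusterGraph_center hA hL x)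
  · refine (sum_le_sum fun c _ => hcountR c v).trans ?_
    rw [← sum_filter, ← filter_filter, filter_univ_mem]
    exact sum_one_add_deg_clusterGraph_le hA hL hv
  · rw [sq]
    refine length_le_of_count_le fun v => (hcountR c v).trans ?_
    have := deg_lt_card (clusterGraph G lev S A c) v
    split_ifs <;> lia

theorem nonempty_hierarchy (T : ℕ → SimpleGraph V) {L Δ : ℕ} (hT : ∀ i, T i ≤ upTo G lev i)
    (hconn : ∀ i x y, lev x = i → lev y = i → (upTo G lev i).Reachable x y → (T i).Reachable x y)
    (hdeg : ∀ i v, deg (T i) v ≤ Δ) (hL : ∀ x, lev x < L) :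
    Nonempty (Hierarchy G (levelComp G lev) (levelReps G lev) S (L + L * (Δ + 2))) := by
  choose A hA using fun r =>
    exists_isAttachingTree (S := S) (hT (lev r)) (hconn (lev r)) (hdeg (lev r))
  obtain ⟨W, hsub, hchain, hmem, hcount, hlen⟩ := exists_clusterTours hA hL
  exact ⟨{
    centers := {c ∈ levelReps G lev | ¬Attached G lev S c}
    center := center G lev S
    tour := W
    centers_subset := filter_subset _ _
    center_mem := center_mem_unattached
    mem_cluster := mem_levelComp_center G lev S
    disjoint_outerNbrs c hc := not_not.1 (mem_filter.1 hc).2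
    cluster_center_subset c hc x hx := levelComp_center_subset (mem_filter.1 hc).2 hx
    subset_cluster_center c _ y hy :=
      levelComp_subset_of_mem_outerNbrs hy (mem_levelComp_center G lev S y)
    linked_of_adj x y := linked_center_of_adj
    linked_of_mem_outerNbrs c _ x hx y hy := linked_center_of_mem_outerNbrs hx hy
    exists_component_subset B hB x := by
      obtain ⟨d, hxd, hd⟩ := exists_reachable_component_subset_levelComp hB lev x
      exact ⟨d, hxd, fun y hy => levelComp_subset_of_mem (mem_levelComp_center G lev S d) (hd y hy)⟩
    mem_of_mem_tour := hsub
    isChain_tour := hchain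
    mem_tour := hmem
    sum_count_tour_le := hcount
    length_tour_le := hlen }⟩

end Hierarchy

end

/-! ### Shortcuts and sparse edges -/

noncomputable section

open SimpleGraph

variable {V : Type*}

section Parent

variable {T : SimpleGraph V} {x y : V}

theorem exists_adj_depth_lt (h : x ≠ root T x) : ∃ y, T.Adj x y ∧ depth T y < depth T x := by
  obtain ⟨p, hp⟩ := (reachable_root T x).exists_walk_length_eq_dist
  obtain ⟨y, hxy, q, rfl⟩ := Walk.exists_eq_cons_of_ne h p
  have hle : depth T y ≤ q.length := by
    rw [depth, ← root_eq_of_reachable hxy.reachable]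
    exact dist_le q
  have hlt : depth T y < dist T x (root T x) := by
    rw [Walk.length_cons] at hp
    lia
  exact ⟨y, hxy, hlt⟩

/-- A neighbour of `x` closer to the root of its component; junk if `x` is that root. -/
def parent (T : SimpleGraph V) (x : V) : V :=
  if h : ∃ y, T.Adj x y ∧ depth T y < depth T x then h.choose else x

theorem parent_spec (h : x ≠ root T x) :
    T.Adj x (parent T x) ∧ depth T (parent T x) < depth T x := by
  rw [parent, dif_pos (exists_adj_depth_lt h)]
  exact (exists_adj_depth_lt h).choose_spec

/- Walk from `x` and from `y` to their common root. -/
theorem exists_parent_edge_crossing (h : T.Reachable x y) {X : Set V} (hX : ¬(x ∈ X ↔ y ∈ X)) :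
    ∃ u, T.Reachable x u ∧ u ≠ root T u ∧ ¬(u ∈ X ↔ parent T u ∈ X) := by
  by_contra! hnone
  have to_root : ∀ u, T.Reachable x u → (u ∈ X ↔ root T x ∈ X) := by
    intro u hu
    obtain ⟨k, hk⟩ : ∃ k, depth T u = k := ⟨_, rfl⟩
    induction k using Nat.strong_induction_on generalizing u with
    | _ k ih =>
      by_cases hroot : u = root T u
      · rw [root_eq_of_reachable hu, ← hroot]
      · obtain ⟨hadj, hlt⟩ := parent_spec hroot
        exact (hnone u hu hroot).trans (ih _ (hk ▸ hlt) _ (hu.trans hadj.reachable) rfl)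
  exact hX ((to_root x .rfl).trans (to_root y h).symm)

end Parent

variable [Fintype V] {G : SimpleGraph V} {K : V → Finset V} {V₀ S F M : Finset V} {visits : ℕ}
  {σ : Option V} {c s t x y : V}

/-- Some vertex of `M` lies in the cluster `K c`. -/
def Affected (K : V → Finset V) (M : Finset V) (c : V) : Prop := ∃ v ∈ M, v ∈ K c

/-- `σ` is the type of a shortcut through an affected cluster; see `Hierarchy.Joins`. -/
def BadType (K : V → Finset V) (M : Finset V) (σ : Option V) : Prop := ∃ c ∈ σ, Affected K M c

namespace Hierarchy

section Joins

variable (H : Hierarchy G K V₀ S visits)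

/-- `x` and `y` are joined by an edge of the given type: an edge of `G` for type `none`, a shortcut
through the cluster `K c` for type `some c`. -/
def Joins : Option V → V → V → Prop
  | none, x, y => G.Adj x y
  | some c, x, y => c ∈ H.centers ∧ x ∈ outerNbrs G (K c) ∧ y ∈ outerNbrs G (K c)

variable {H}

theorem Joins.symm (h : H.Joins σ x y) : H.Joins σ y x := by
  cases σ with
  | none => exact SimpleGraph.Adj.symm h
  | some c => exact ⟨h.1, h.2.2, h.2.1⟩

theorem Joins.linked (h : H.Joins σ x y) : Linked G K H.center x y := by
  cases σ with
  | none => exact H.linked_of_adj x y h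
  | some c => exact H.linked_of_mem_outerNbrs c h.1 x h.2.1 y h.2.2

theorem Joins.reachable_avoiding (h : H.Joins σ x y)
    (hK : ∀ c, ∀ x ∈ K c, ∀ y ∈ K c, (restrict G ↑(K c)).Reachable x y) (hFM : F ⊆ M)
    (hσ : ¬BadType K M σ) (hx : x ∉ F) (hy : y ∉ F) : (avoiding G F).Reachable x y := by
  cases σ with
  | none => exact Adj.reachable (avoiding_adj.2 ⟨h, hx, hy⟩)
  | some c =>
    have hcF : ∀ v ∈ K c, v ∉ F := fun v hv hvF => hσ ⟨c, rfl, v, hFM hvF, hv⟩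
    obtain ⟨-, u, hu, hux⟩ := mem_outerNbrs.1 h.2.1
    obtain ⟨-, w, hw, hwy⟩ := mem_outerNbrs.1 h.2.2
    have hxu : (avoiding G F).Adj x u := avoiding_adj.2 ⟨hux.symm, hx, hcF u hu⟩
    have hwy' : (avoiding G F).Adj w y := avoiding_adj.2 ⟨hwy, hcF w hw, hy⟩
    have huw : (avoiding G F).Reachable u w :=
      (hK c u hu w hw).mono (restrict_mono le_rfl hcF)
    exact (hxu.reachable.trans huw).trans hwy'.reachable

end Joins

section Crossing

variable (H : Hierarchy G K V₀ S visits)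

theorem affected_center (hx : x ∈ M) : Affected K M (H.center x) := ⟨x, hx, H.mem_cluster x⟩

/-- The vertices outside `F` whose smallest cluster is not affected. -/
def unaffected (F M : Finset V) : Set V := {x | x ∉ F ∧ ¬Affected K M (H.center x)}

theorem exists_cluster_of_unaffected (hy : y ∈ H.unaffected F M) :
    ∃ c ∈ H.centers, ¬Affected K M c ∧
      ∀ z q, (restrict G (H.unaffected F M)).Reachable y z → G.Adj z q →
        Affected K M (H.center q) → q ∈ outerNbrs G (K c) := by
  obtain ⟨d, hyd, hd⟩ := H.exists_component_subset (restrict G (H.unaffected F M)) restrict_le y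
  have hdU := (mem_of_reachable_restrict hyd hy).2
  refine ⟨H.center d, H.center_mem d, hdU, fun z q hyz hzq hq => ?_⟩
  refine mem_outerNbrs.2 ⟨fun hqd => ?_, z, hd z hyz, hzq⟩
  obtain ⟨v, hvM, hv⟩ := hq
  exact hdU ⟨v, hvM, H.cluster_center_subset _ (H.center_mem d) q hqd hv⟩

/- A passage of the walk from `s` to `t` through unaffected vertices stays in one unaffected
cluster, so it can be replaced by a shortcut through that cluster. -/
theorem exists_joins_crossing {β : Type*} (hs : s ∈ M) (ht : t ∈ M) (hsF : s ∉ F)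
    (hst : (avoiding G F).Reachable s t) {side : V → β} (hside : side s ≠ side t) :
    ∃ x y σ, x ∉ F ∧ y ∉ F ∧ Affected K M (H.center x) ∧ Affected K M (H.center y) ∧
      ¬BadType K M σ ∧ H.Joins σ x y ∧ side x ≠ side y := by
  by_contra! hnone
  set U := restrict G (H.unaffected F M)
  have hinv := reachable_induction (A := avoiding G F)
    (fun x => x ∉ F ∧ (Affected K M (H.center x) → side x = side s) ∧
      (¬Affected K M (H.center x) → ∀ z q, U.Reachable x z → G.Adj z q → q ∉ F →
        Affected K M (H.center q) → side q = side s)) ?_ hst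
    ⟨hsF, fun _ => rfl, fun h => absurd (H.affected_center hs) h⟩
  · exact hside (hinv.2.1 (H.affected_center ht)).symm
  rintro x y hxy ⟨hxF, hx_aff, hx_unaff⟩
  obtain ⟨hxyG, -, hyF⟩ := avoiding_adj.1 hxy
  refine ⟨hyF, fun hy => ?_, fun hy z q hyz hzq hqF hq => ?_⟩
  · by_cases hx : Affected K M (H.center x)
    · rw [← hx_aff hx]
      exact (hnone x y none hxF hyF hx hy (by rintro ⟨c, ⟨⟩, -⟩) hxyG).symm
    · exact hx_unaff hx x y .rfl hxyG hyF hy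
  · by_cases hx : Affected K M (H.center x)
    · obtain ⟨c, hc, hcM, hnbr⟩ := H.exists_cluster_of_unaffected ⟨hyF, hy⟩
      rw [← hx_aff hx]
      refine (hnone x q (some c) hxF hqF hx hq ?_
        ⟨hc, hnbr y x .rfl hxyG.symm hx, hnbr z q hyz hzq hq⟩).symm
      rintro ⟨_, ⟨⟩, hbad⟩
      exact hcM hbad
    · have hxyU : U.Adj x y := restrict_adj.2 ⟨hxyG, ⟨hxF, hx⟩, hyF, hy⟩
      exact hx_unaff hx z q (hxyU.reachable.trans hyz) hzq hqF hq

end Crossing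

end Hierarchy

/-- The edges kept by the labels. A *tree edge* `inl (j, a, x)` leads from `x` to its parent in
bucket `(j, a)`; a *cross edge* `inr (x, y, σ)` joins `x` to `y` in another cluster, with
type `σ`. -/
abbrev SparseEdge (V J A : Type*) := (J × A × V) ⊕ (V × V × Option V)

/-- The start vertex of a sparse edge. -/
def tail {V J A : Type*} : SparseEdge V J A → V
  | Sum.inl (_, _, x) => x
  | Sum.inr (x, _, _) => x

/-- Under some hash function of the family, `x` and `y` agree but differ from all faults, and the
type `σ` differs from all affected clusters. -/
def Isolates {J A B : Type*} (τ : J → Option V → A) (η : J → V → B) (K : V → Finset V)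
    (V₀ F M : Finset V) : Prop :=
  ∀ x y σ, x ∉ F → y ∉ F → x ≠ y → ¬BadType K M σ → ∃ j, η j x = η j y ∧
    (∀ v ∈ F, η j v ≠ η j x) ∧ ∀ c ∈ V₀, Affected K M c → τ j (some c) ≠ τ j σ

namespace Hierarchy

variable {J A B : Type*} (H : Hierarchy G K V₀ S visits) (τ : J → Option V → A) (η : J → V → B)

/-- The graph whose edges join vertices with equal centre and equal hash `η j` by edges whose type
has hash `a`. -/
def bucket (j : J) (a : A) : SimpleGraph V where
  Adj x y := x ≠ y ∧ H.center x = H.center y ∧ η j x = η j y ∧ ∃ σ, τ j σ = a ∧ H.Joins σ x y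
  symm := ⟨fun _ _ ⟨hne, hc, hη, σ, hσ, h⟩ => ⟨hne.symm, hc.symm, hη.symm, σ, hσ, h.symm⟩⟩
  loopless := ⟨fun _ h => h.1 rfl⟩

/-- The end vertex of a sparse edge. -/
def head : SparseEdge V J A → V
  | Sum.inl (j, a, x) => parent (H.bucket τ η j a) x
  | Sum.inr (_, y, _) => y

/-- The type of a sparse edge, as in `Hierarchy.Joins`. -/
def edgeType : SparseEdge V J A → Option V
  | Sum.inl (j, a, x) =>
    if h : ∃ σ, τ j σ = a ∧ H.Joins σ x (parent (H.bucket τ η j a) x) then h.choose else none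
  | Sum.inr (_, _, σ) => σ

/-- The sparse edge occurs for this hierarchy and these hash functions. -/
def Present : SparseEdge V J A → Prop
  | Sum.inl (j, a, x) => x ≠ root (H.bucket τ η j a) x
  | Sum.inr (x, y, σ) => y ∈ outerNbrs G (K (H.center x)) ∧ H.center x ≠ H.center y ∧ H.Joins σ x y

/-- The sparse edges leaving `x` with centre `c` whose type is not affected, and which, if they are
tree edges, do not start in `F`. -/
structure IsGood (F M : Finset V) (c : V) (e : SparseEdge V J A) : Prop where
  present : H.Present τ η e
  center_tail : H.center (tail e) = c
  not_badType : ¬BadType K M (H.edgeType τ η e)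
  tail_notMem : e.isLeft → tail e ∉ F

variable {H τ η} {e : SparseEdge V J A}

theorem present_inl {j : J} {a : A} (h : H.Present τ η (Sum.inl (j, a, x))) :
    τ j (H.edgeType τ η (Sum.inl (j, a, x))) = a ∧
      H.Joins (H.edgeType τ η (Sum.inl (j, a, x))) x (parent (H.bucket τ η j a) x) ∧
      H.center x = H.center (parent (H.bucket τ η j a) x) ∧
      η j x = η j (parent (H.bucket τ η j a) x) := by
  obtain ⟨-, hc, hη, hσ⟩ := (parent_spec h).1
  have htype : H.edgeType τ η (Sum.inl (j, a, x)) = hσ.choose := dif_pos hσ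
  rw [htype]
  exact ⟨hσ.choose_spec.1, hσ.choose_spec.2, hc, hη⟩

theorem Present.joins (h : H.Present τ η e) :
    H.Joins (H.edgeType τ η e) (tail e) (H.head τ η e) := by
  rcases e with ⟨j, a, x⟩ | ⟨x, y, σ⟩
  exacts [(present_inl h).2.1, h.2.2]

theorem Present.center_eq (h : H.Present τ η e) (he : e.isLeft) :
    H.center (tail e) = H.center (H.head τ η e) := by
  rcases e with ⟨j, a, x⟩ | e
  exacts [(present_inl h).2.2.1, absurd he Bool.false_ne_true]

theorem Present.center_ne (h : H.Present τ η e) (he : ¬e.isLeft) :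
    H.center (tail e) ≠ H.center (H.head τ η e) ∧
      H.head τ η e ∈ outerNbrs G (K (H.center (tail e))) := by
  rcases e with e | ⟨x, y, σ⟩
  exacts [absurd rfl he, ⟨h.2.1, h.1⟩]

/- The bucket into which the isolating hash function puts the edge `x y` contains neither faults
nor edges of affected type, and one of its tree edges crosses. -/
theorem exists_isGood_crossing (hiso : Isolates τ η K V₀ F M) {X : Set V} (hx : x ∉ F) (hy : y ∉ F)
    (hσ : ¬BadType K M σ) (hxy : H.Joins σ x y) (hc : H.center x = H.center y)
    (hX : ¬(x ∈ X ↔ y ∈ X)) :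
    ∃ e, H.IsGood τ η F M (H.center x) e ∧ e.isLeft ∧ H.head τ η e ∉ F ∧
      ¬(tail e ∈ X ↔ H.head τ η e ∈ X) := by
  have hne : x ≠ y := by rintro rfl; exact hX Iff.rfl
  obtain ⟨j, hxy_hash, hF_hash, htype_hash⟩ := hiso x y σ hx hy hne hσ
  have hadj : (H.bucket τ η j (τ j σ)).Adj x y := ⟨hne, hc, hxy_hash, σ, rfl, hxy⟩
  obtain ⟨u, hxu, hroot, hcross⟩ := exists_parent_edge_crossing hadj.reachable hX
  obtain ⟨hcu, hηu⟩ := reachable_induction (A := H.bucket τ η j (τ j σ))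
    (fun u => H.center x = H.center u ∧ η j x = η j u)
    (fun _ _ hab h => ⟨h.1.trans hab.2.1, h.2.trans hab.2.2.1⟩) hxu ⟨rfl, rfl⟩
  have hpres : H.Present τ η (Sum.inl (j, τ j σ, u)) := hroot
  obtain ⟨htype, hjoins, -, hη⟩ := present_inl hpres
  refine ⟨Sum.inl (j, τ j σ, u), ⟨hpres, hcu.symm, ?_, fun _ hF => hF_hash u hF hηu.symm⟩, rfl,
    fun hF => hF_hash _ hF (hηu.trans hη).symm, hcross⟩
  rintro ⟨c, hc', haff⟩
  rw [Option.mem_def] at hc'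
  rw [hc'] at htype hjoins
  exact htype_hash c (H.centers_subset hjoins.1) haff htype

end Hierarchy

end

/-! ### Views and the separation test -/

noncomputable section

open SimpleGraph

variable {V E Kf : Type*} {d : ℕ}

/-- A position in a tour: the centre of the cluster that is toured and an index. -/
abbrev Cell (V : Type*) := V × ℕ

/-- A tour position with the sketch of the part of the tour before it. -/
structure PrefixRecord (V Kf : Type*) (d : ℕ) where
  cell : Cell V
  sketch : Fin d → Kf

/-- A vertex adjacent to a cluster, with its position. -/
structure NbrRecord (V : Type*) where
  cluster : V
  vertex : V
  cell : Cell V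

/-- An edge with its end vertex and the positions of both of its ends. -/
structure EdgeRecord (V E : Type*) where
  edge : E
  tailCell : Cell V
  head : V
  headCell : Cell V

/-- What the label of a vertex says about one hierarchy. -/
structure Facts (V E Kf : Type*) (d : ℕ) where
  cell : Cell V
  prefixes : Finset (PrefixRecord V Kf d)
  occurrences : Finset (Cell V)
  ends : Finset (Cell V)
  nbrs : Finset (NbrRecord V)
  tailEdges : Finset (EdgeRecord V E)
  typeEdges : Finset (EdgeRecord V E)

/-- What the labels of a query together say about one hierarchy. -/
structure View (V E Kf : Type*) (d : ℕ) where
  faults : Finset V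
  prefixes : Finset (PrefixRecord V Kf d)
  faultCells : Finset (Cell V)
  ends : Finset (Cell V)
  nbrs : Finset (NbrRecord V)
  badEdges : Finset (EdgeRecord V E)

/-- The view of a query with faults `F` and queried or faulty vertices `M`, both given by
descriptions in an arbitrary type. -/
def View.merge {I : Type*} (vertex : I → V) (facts : I → Facts V E Kf d) (F M : Finset I) :
    View V E Kf d where
  faults := F.image vertex
  prefixes := M.biUnion fun v => (facts v).prefixes
  faultCells := F.biUnion fun v => (facts v).occurrences
  ends := M.biUnion fun v => (facts v).ends
  nbrs := M.biUnion fun v => (facts v).nbrs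
  badEdges := (F.biUnion fun v => (facts v).tailEdges) ∪ M.biUnion fun v => (facts v).typeEdges

theorem View.merge_image {I I' : Type*} (vertex : I' → V) (facts : I' → Facts V E Kf d)
    (g : I → I') (F M : Finset I) :
    View.merge vertex facts (F.image g) (M.image g) =
      View.merge (vertex ∘ g) (facts ∘ g) F M := by
  simp only [View.merge, image_biUnion, image_image, Function.comp_apply]

section Cells

variable [Field Kf] {X : Set (Cell V)} {c : V} {i m : ℕ}

/-- The difference of the indicator function of `X` along a tour, in characteristic two. -/
def boundary (X : Set (Cell V)) : Cell V → Kf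
  | (c, 0) => X.indicator 1 (c, 0)
  | (c, i + 1) => X.indicator 1 (c, i) + X.indicator 1 (c, i + 1)

/-- Indicates that `y` comes before `z` in the same tour. -/
def before (z y : Cell V) : Kf := if y.1 = z.1 ∧ y.2 < z.2 then 1 else 0

/-- Indicates that `y` belongs to `X` and to the tour of `c`. -/
def mark (X : Set (Cell V)) (c : V) (y : Cell V) : Kf := if y.1 = c ∧ y ∈ X then 1 else 0

variable [CharP Kf 2]

theorem sum_boundary_mul_before (h : i ≤ m) :
    ∑ q ∈ range (m + 1), boundary X (c, q) * before (c, q) (c, i) =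
      (X.indicator 1 (c, i) + X.indicator 1 (c, m) : Kf) := by
  induction m, h using Nat.le_induction with
  | base =>
    rw [CharTwo.add_self_eq_zero]
    refine sum_eq_zero fun q hq => ?_
    rw [before, if_neg (by simpa using Nat.le_of_lt_succ (mem_range.1 hq)), mul_zero]
  | succ m hm ih =>
    have hi : (before (c, m + 1) (c, i) : Kf) = 1 := if_pos ⟨rfl, Nat.lt_succ_of_le hm⟩
    rw [sum_range_succ, ih, hi, boundary, mul_one, ← add_assoc, add_assoc (X.indicator 1 (c, i)),
      CharTwo.add_self_eq_zero, add_zero]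

end Cells

namespace View

variable (Q : View V E Kf d)

/-- The positions whose prefix sketch is known. -/
def keys : Finset (Cell V) := Q.prefixes.image PrefixRecord.cell

/-- The positions in tours of affected clusters that are not known to be occupied by a fault. -/
def live : Set (Cell V) := {z | (∃ b ∈ Q.ends, b.1 = z.1 ∧ z.2 < b.2) ∧ z ∉ Q.faultCells}

/-- A set of live positions which is constant between consecutive known positions. -/
structure IsAdmissible (X : Set (Cell V)) : Prop where
  subset_live : X ⊆ Q.live
  mem_succ_iff : ∀ c i, (c, i + 1) ∉ Q.keys → ((c, i) ∈ X ↔ (c, i + 1) ∈ X)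

variable {Q} {X Y : Set (Cell V)} {c : V} {m : ℕ}

theorem IsAdmissible.eq_of_forall_mem_keys (h0 : ∀ b ∈ Q.ends, (b.1, 0) ∈ Q.keys)
    (hX : Q.IsAdmissible X) (hY : Q.IsAdmissible Y) (h : ∀ z ∈ Q.keys, z ∈ X ↔ z ∈ Y) : X = Y := by
  ext ⟨c, i⟩
  induction i with
  | zero =>
    by_cases hk : (c, 0) ∈ Q.keys
    · exact h _ hk
    · have hdead : (c, 0) ∉ Q.live := by
        rintro ⟨⟨b, hb, rfl, -⟩, -⟩
        exact hk (h0 b hb)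
      exact iff_of_false (fun hz => hdead (hX.subset_live hz)) fun hz => hdead (hY.subset_live hz)
  | succ i ih =>
    by_cases hk : (c, i + 1) ∈ Q.keys
    · exact h _ hk
    · rw [← hX.mem_succ_iff c i hk, ih, hY.mem_succ_iff c i hk]

theorem exists_finset_isAdmissible (h0 : ∀ b ∈ Q.ends, (b.1, 0) ∈ Q.keys) :
    ∃ 𝒳 : Finset (Set (Cell V)), (∀ X, X ∈ 𝒳 ↔ Q.IsAdmissible X) ∧ #𝒳 ≤ 2 ^ #Q.keys := by
  have hmaps : Set.MapsTo (fun X => {z ∈ Q.keys | z ∈ X}) {X | Q.IsAdmissible X}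
      (Q.keys.powerset : Set (Finset (Cell V))) := fun X _ =>
    mem_powerset.2 (filter_subset _ _)
  have hinj : Set.InjOn (fun X => {z ∈ Q.keys | z ∈ X}) {X | Q.IsAdmissible X} :=
    fun X hX Y hY hXY => hX.eq_of_forall_mem_keys h0 hY fun z hz => by
      simpa [hz] using Finset.ext_iff.1 hXY z
  have hfin := Set.Finite.of_injOn hmaps hinj (finite_toSet _)
  refine ⟨hfin.toFinset, fun X => hfin.mem_toFinset, ?_⟩
  rw [← card_powerset]
  exact card_le_card_of_injOn _ (fun X hX => hmaps (hfin.mem_toFinset.1 hX))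
    (hinj.mono fun X hX => hfin.mem_toFinset.1 hX)

variable [Field Kf]

/- Summation by parts; outside the known positions the boundary of `X` vanishes. -/
theorem IsAdmissible.sum_keys_boundary_mul_before [CharP Kf 2] (hX : Q.IsAdmissible X)
    (h0 : (c, 0) ∈ Q.keys) (hm : ∀ q, (c, q) ∈ Q.keys → q ≤ m) (hmX : (c, m) ∉ X) {y : Cell V}
    (hy : y.1 = c → y.2 ≤ m) :
    ∑ z ∈ Q.keys with z.1 = c, boundary X z * before z y = (mark X c y : Kf) := by
  obtain ⟨b, i⟩ := y
  by_cases hb : b = c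
  · subst hb
    have hsub : {z ∈ Q.keys | z.1 = b} ⊆ (range (m + 1)).image fun q => (b, q) := by
      rintro ⟨c, q⟩ hz
      obtain ⟨hkey, rfl : c = b⟩ := mem_filter.1 hz
      exact mem_image_of_mem _ (mem_range.2 (Nat.lt_succ_of_le (hm q hkey)))
    rw [sum_subset hsub, sum_image (by simp [Set.InjOn]), sum_boundary_mul_before (hy rfl),
      Set.indicator_of_notMem hmX, add_zero]
    · simp [mark, Set.indicator_apply]
    · intro z hz hz'
      obtain ⟨q, -, rfl⟩ := mem_image.1 hz
      have hq : (b, q) ∉ Q.keys := fun h => hz' (mem_filter.2 ⟨h, rfl⟩)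
      cases q with
      | zero => exact absurd h0 hq
      | succ q =>
        simp only [boundary, Set.indicator_apply, hX.mem_succ_iff b q hq, Pi.one_apply,
          CharTwo.add_self_eq_zero, zero_mul]
  · rw [mark, if_neg fun h => hb h.1]
    refine sum_eq_zero fun z hz => ?_
    rw [before, if_neg fun h => hb (h.1.trans (mem_filter.1 hz).2), mul_zero]

variable (Q) (ν : V → Kf) (w : E → Kf) (X) (c)

/-- The polynomial vanishing at the faults and at those vertices adjacent to the cluster of `c`
whose position is in `X`. -/
def mask : Polynomial Kf :=
  Lagrange.nodal (Q.faults ∪ {r ∈ Q.nbrs | r.cluster = c ∧ r.cell ∈ X}.image NbrRecord.vertex) ν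

/-- The sum, over the edges leaving the part of the tour of `c` marked by `X`, of the weight times
the value of the mask at the end vertex; the sketches give the sum over all edges, from which the
known bad edges are subtracted. -/
def test : Kf :=
  ∑ r ∈ Q.prefixes with r.cell.1 = c,
      boundary X r.cell * ∑ l : Fin d, (Q.mask X c ν).coeff l * r.sketch l +
    ∑ r ∈ Q.badEdges with r.tailCell.1 = c,
      (mark X c r.tailCell + mark X c r.headCell) * w r.edge * (Q.mask X c ν).eval (ν r.head)

/-- The live positions can be split into two admissible sets that separate `p` from `q` and pass
all tests: this is how the decoder recognizes that a query is disconnected. -/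
def Separates (p q : Cell V) : Prop :=
  ∃ X Y, Q.IsAdmissible X ∧ Q.IsAdmissible Y ∧ X ∪ Y = Q.live ∧ Disjoint X Y ∧ p ∈ X ∧ q ∈ Y ∧
    ∀ b ∈ Q.ends, Q.test X b.1 ν w = 0 ∧ Q.test Y b.1 ν w = 0

end View

end

/-! ### Sketches stored in the labels -/

noncomputable section

open SimpleGraph

variable {V : Type*} [Fintype V] {G : SimpleGraph V} {K : V → Finset V} {V₀ S F M : Finset V}
  {visits : ℕ} {J A B Kf : Type*}

namespace Hierarchy

variable (H : Hierarchy G K V₀ S visits)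

/-- The first position of `x` in the tour of its smallest cluster. -/
def cell (x : V) : Cell V := (H.center x, (H.tour (H.center x)).idxOf x)

theorem cell_lt_length (x : V) : (H.cell x).2 < (H.tour (H.center x)).length :=
  List.idxOf_lt_length_iff.2 (H.mem_tour x)

theorem getElem?_cell (x : V) : (H.tour (H.cell x).1)[(H.cell x).2]? = some x :=
  List.getElem?_idxOf (H.mem_tour x)

/-- The positions at which tours visit `v`. -/
def occurrences (v : V) : Finset (Cell V) :=
  {z ∈ univ ×ˢ range (Fintype.card V ^ 2) | (H.tour z.1)[z.2]? = some v}

variable {H} in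
theorem mem_occurrences {v : V} {z : Cell V} :
    z ∈ H.occurrences v ↔ (H.tour z.1)[z.2]? = some v := by
  simp only [occurrences, mem_filter, mem_product, mem_univ, true_and, mem_range,
    and_iff_right_iff_imp]
  exact fun h => (List.getElem?_eq_some_iff.1 h).1.trans_le (H.length_tour_le _)

/-- The centres of the clusters containing `v`. -/
def centersAt (v : V) : Finset V := {c ∈ H.centers | v ∈ K c}

/-- The end positions of the tours of the clusters containing `v`. -/
def endsAt (v : V) : Finset (Cell V) := (H.centersAt v).image fun c => (c, (H.tour c).length)

/-- The positions whose prefix sketches are stored with `v`: both sides of every visit of `v`, and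
both ends of the tour of every cluster containing `v`. Vertices in `S` may be visited too often and
store no visits. -/
def keysAt (v : V) : Finset (Cell V) :=
  ((if v ∈ S then ∅ else H.occurrences v) ∪
    (if v ∈ S then ∅ else H.occurrences v).image fun z => (z.1, z.2 + 1)) ∪
  (H.endsAt v ∪ (H.endsAt v).image fun z => (z.1, 0))

/-- The vertices adjacent to the clusters containing `v`. -/
def nbrsAt (v : V) : Finset (NbrRecord V) :=
  (H.centersAt v).biUnion fun c => (outerNbrs G (K c)).image fun x => ⟨c, x, H.cell x⟩

variable [Fintype J] [Fintype A] (τ : J → Option V → A) (η : J → V → B)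

/-- The record of a sparse edge. -/
def edgeRecord (e : SparseEdge V J A) : EdgeRecord V (SparseEdge V J A) :=
  ⟨e, H.cell (tail e), H.head τ η e, H.cell (H.head τ η e)⟩

/-- The tree edges starting in `v`. -/
def tailEdgesAt (v : V) : Finset (EdgeRecord V (SparseEdge V J A)) :=
  ({e | H.Present τ η e ∧ e.isLeft ∧ tail e = v} : Finset (SparseEdge V J A)).image
    (H.edgeRecord τ η)

/-- The sparse edges whose type is a cluster containing `v`. -/
def typeEdgesAt (v : V) : Finset (EdgeRecord V (SparseEdge V J A)) :=
  ({e | H.Present τ η e ∧ ∃ c ∈ H.edgeType τ η e, v ∈ K c} : Finset (SparseEdge V J A)).image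
    (H.edgeRecord τ η)

variable [Field Kf] (d : ℕ) (ν : V → Kf) (w : SparseEdge V J A → Kf)

/-- The sum of `w e • (1, h, …, h ^ (d - 1))` over the sparse edges `e` leaving the cluster of `z`,
taken once for each end of `e` before `z`, where `h` is the number of the end vertex of `e`. -/
def sketch (z : Cell V) (l : Fin d) : Kf :=
  ∑ e : SparseEdge V J A with H.Present τ η e ∧ H.center (tail e) = z.1,
    (before z (H.cell (tail e)) + before z (H.cell (H.head τ η e))) *
      w e * ν (H.head τ η e) ^ (l : ℕ)

/-- The facts stored with `v`. -/
def facts (v : V) : Facts V (SparseEdge V J A) Kf d where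
  cell := H.cell v
  prefixes := (H.keysAt v).image fun z => ⟨z, H.sketch τ η d ν w z⟩
  occurrences := if v ∈ S then ∅ else H.occurrences v
  ends := H.endsAt v
  nbrs := H.nbrsAt v
  tailEdges := H.tailEdgesAt τ η v
  typeEdges := H.typeEdgesAt τ η v

/-- The view of the query with faults `F` and queried or faulty vertices `M`. -/
def view (F M : Finset V) : View V (SparseEdge V J A) Kf d :=
  View.merge id (H.facts τ η d ν w) F M

/-- The contribution of the edge `e` to the test of the colouring `X` at `c`. -/
def residue (F : Finset V) (X : Set (Cell V)) (c : V) (e : SparseEdge V J A) : Kf :=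
  (mark X c (H.cell (tail e)) + mark X c (H.cell (H.head τ η e))) *
    (Lagrange.nodal (F ∪ {x ∈ outerNbrs G (K c) | H.cell x ∈ X}) ν).eval (ν (H.head τ η e))

section View

variable {H τ η d ν w} {X : Set (Cell V)} {c v x y : V} {z : Cell V}

theorem prefixes_view : (H.view τ η d ν w F M).prefixes =
    (M.biUnion H.keysAt).image fun z => ⟨z, H.sketch τ η d ν w z⟩ :=
  biUnion_image.symm

theorem keys_view : (H.view τ η d ν w F M).keys = M.biUnion H.keysAt := by
  rw [View.keys, prefixes_view, image_image]
  exact image_id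

theorem mem_ends_view : z ∈ (H.view τ η d ν w F M).ends ↔
    z.1 ∈ H.centers ∧ Affected K M z.1 ∧ z.2 = (H.tour z.1).length := by
  simp only [view, View.merge, facts, mem_biUnion, endsAt, centersAt, mem_image, mem_filter,
    Affected]
  constructor
  · rintro ⟨v, hv, c, ⟨hc, hvc⟩, rfl⟩
    exact ⟨hc, ⟨v, hv, hvc⟩, rfl⟩
  · rintro ⟨hc, ⟨v, hv, hvc⟩, hlen⟩
    exact ⟨v, hv, z.1, ⟨hc, hvc⟩, Prod.ext rfl hlen.symm⟩

theorem mem_faultCells_view (hFS : Disjoint F S) : z ∈ (H.view τ η d ν w F M).faultCells ↔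
    ∃ v ∈ F, (H.tour z.1)[z.2]? = some v := by
  simp only [view, View.merge, facts, mem_biUnion]
  refine exists_congr fun v => and_congr_right fun hv => ?_
  rw [if_neg (Finset.disjoint_left.1 hFS hv), mem_occurrences]

theorem mem_live_view (hFS : Disjoint F S) : z ∈ (H.view τ η d ν w F M).live ↔
    Affected K M z.1 ∧ ∃ x, (H.tour z.1)[z.2]? = some x ∧ x ∉ F := by
  rw [View.live, Set.mem_ofPred_eq, mem_faultCells_view hFS]
  constructor
  · rintro ⟨⟨⟨c, m⟩, hb, rfl : c = z.1, hlt⟩, hz⟩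
    obtain ⟨-, haff, hm⟩ := mem_ends_view.1 hb
    have hget := List.getElem?_eq_getElem (hlt.trans_eq hm)
    exact ⟨haff, _, hget, fun hF => hz ⟨_, hF, hget⟩⟩
  · rintro ⟨haff, x, hx, hxF⟩
    have hc := (H.mem_of_mem_tour _ x (List.mem_of_getElem? hx)).1
    have hend : (z.1, (H.tour z.1).length) ∈ (H.view τ η d ν w F M).ends :=
      mem_ends_view.2 ⟨hc, haff, rfl⟩
    refine ⟨⟨_, hend, rfl, (List.getElem?_eq_some_iff.1 hx).1⟩, ?_⟩
    rintro ⟨v, hv, hv'⟩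
    exact hxF (Option.some.inj (hx.symm.trans hv') ▸ hv)

theorem cell_mem_live_view (hFS : Disjoint F S) (hx : x ∉ F) (haff : Affected K M (H.center x)) :
    H.cell x ∈ (H.view τ η d ν w F M).live :=
  (mem_live_view hFS).2 ⟨haff, x, H.getElem?_cell x, hx⟩

theorem zero_mem_keys_view (hc : c ∈ H.centers) (ha : Affected K M c) :
    (c, 0) ∈ (H.view τ η d ν w F M).keys := by
  obtain ⟨v, hv, hvc⟩ := ha
  have hend : (c, (H.tour c).length) ∈ H.endsAt v := mem_image_of_mem _ (mem_filter.2 ⟨hc, hvc⟩)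
  rw [keys_view]
  exact mem_biUnion.2 ⟨v, hv, mem_union_right _ (mem_union_right _ (mem_image_of_mem _ hend))⟩

theorem length_mem_keys_view (hc : c ∈ H.centers) (ha : Affected K M c) :
    (c, (H.tour c).length) ∈ (H.view τ η d ν w F M).keys := by
  obtain ⟨v, hv, hvc⟩ := ha
  have hend : (c, (H.tour c).length) ∈ H.endsAt v := mem_image_of_mem _ (mem_filter.2 ⟨hc, hvc⟩)
  rw [keys_view]
  exact mem_biUnion.2 ⟨v, hv, mem_union_right _ (mem_union_left _ hend)⟩

theorem le_length_of_mem_keysAt (h : z ∈ H.keysAt v) : z.2 ≤ (H.tour z.1).length := by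
  have hocc : ∀ z ∈ (if v ∈ S then ∅ else H.occurrences v), z.2 < (H.tour z.1).length := by
    intro z hz
    split_ifs at hz with hv
    · exact absurd hz (notMem_empty z)
    · exact (List.getElem?_eq_some_iff.1 (mem_occurrences.1 hz)).1
  have hend : ∀ z ∈ H.endsAt v, z.2 = (H.tour z.1).length := by
    rintro z hz
    obtain ⟨c, -, rfl⟩ := mem_image.1 hz
    rfl
  simp only [keysAt, mem_union, mem_image] at h
  rcases h with (h | ⟨z, h, rfl⟩) | (h | ⟨z, -, rfl⟩)
  exacts [(hocc z h).le, hocc z h, (hend z h).le, Nat.zero_le _]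

theorem mask_view (hc : c ∈ H.centers) (ha : Affected K M c) :
    (H.view τ η d ν w F M).mask X c ν =
      Lagrange.nodal (F ∪ {x ∈ outerNbrs G (K c) | H.cell x ∈ X}) ν := by
  obtain ⟨v, hv, hvc⟩ := ha
  rw [View.mask]
  congr 2
  · exact image_id
  · ext x
    simp only [view, View.merge, facts, nbrsAt, centersAt, mem_image, mem_filter, mem_biUnion]
    constructor
    · rintro ⟨r, ⟨⟨u, -, c', -, y, hy, rfl⟩, rfl, hyX⟩, rfl⟩
      exact ⟨hy, hyX⟩
    · rintro ⟨hx, hxX⟩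
      exact ⟨⟨c, x, H.cell x⟩, ⟨⟨v, hv, c, ⟨hc, hvc⟩, x, hx, rfl⟩, rfl, hxX⟩, rfl⟩

theorem badEdges_view : {r ∈ (H.view τ η d ν w F M).badEdges | r.tailCell.1 = c} =
    ({e | (H.Present τ η e ∧ H.center (tail e) = c) ∧ ¬H.IsGood τ η F M c e} :
      Finset (SparseEdge V J A)).image (H.edgeRecord τ η) := by
  ext r
  simp only [view, View.merge, facts, tailEdgesAt, typeEdgesAt, mem_filter, mem_union, mem_biUnion,
    mem_image, mem_univ, true_and]
  constructor
  · rintro ⟨⟨v, hv, e, ⟨hp, he, rfl⟩, rfl⟩ | ⟨v, hv, e, ⟨hp, c', hc', hvc⟩, rfl⟩, hc⟩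
    · exact ⟨e, ⟨⟨hp, hc⟩, fun hg => hg.tail_notMem he hv⟩, rfl⟩
    · exact ⟨e, ⟨⟨hp, hc⟩, fun hg => hg.not_badType ⟨c', hc', v, hv, hvc⟩⟩, rfl⟩
  · rintro ⟨e, ⟨⟨hp, hc⟩, hg⟩, rfl⟩
    refine ⟨?_, hc⟩
    by_cases hb : BadType K M (H.edgeType τ η e)
    · obtain ⟨c', hc', v, hv, hvc⟩ := hb
      exact Or.inr ⟨v, hv, e, ⟨hp, c', hc', hvc⟩, rfl⟩
    · by_contra! hcon
      exact hg ⟨hp, hc, hb, fun he hF => hcon.1 _ hF e ⟨hp, he, rfl⟩ rfl⟩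

theorem sum_coeff_mul_sketch {φ : Polynomial Kf} (hφ : φ.natDegree < d) (z : Cell V) :
    ∑ l : Fin d, φ.coeff l * H.sketch τ η d ν w z l =
      ∑ e : SparseEdge V J A with H.Present τ η e ∧ H.center (tail e) = z.1,
        (before z (H.cell (tail e)) + before z (H.cell (H.head τ η e))) *
          (w e * φ.eval (ν (H.head τ η e))) := by
  simp only [sketch, mul_sum, Polynomial.eval_eq_sum_range' hφ,
    ← Fin.sum_univ_eq_sum_range fun i => φ.coeff i * ν (H.head τ η _) ^ i]
  rw [sum_comm]
  refine sum_congr rfl fun e _ => sum_congr rfl fun l _ => ?_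
  ring

theorem sum_boundary_mul_before_cell [CharP Kf 2] (hFS : Disjoint F S)
    (hX : (H.view τ η d ν w F M).IsAdmissible X) (hc : c ∈ H.centers) (ha : Affected K M c) :
    ∑ z ∈ (H.view τ η d ν w F M).keys with z.1 = c, boundary X z * before z (H.cell x) =
      (mark X c (H.cell x) : Kf) := by
  refine hX.sum_keys_boundary_mul_before (m := (H.tour c).length) (zero_mem_keys_view hc ha)
    (fun q hq => ?_) (fun hend => ?_) fun hx => ?_
  · rw [keys_view, mem_biUnion] at hq
    obtain ⟨v, -, hv⟩ := hq
    exact le_length_of_mem_keysAt hv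
  · obtain ⟨-, y, hy, -⟩ := (mem_live_view hFS).1 (hX.subset_live hend)
    simp at hy
  · rw [← hx]
    exact (H.cell_lt_length x).le

/- Off the bad edges the sum over the records is a sum over all edges leaving `c`; the bad edges
are counted twice and so cancel. -/
theorem test_view [CharP Kf 2] (hFS : Disjoint F S) (hX : (H.view τ η d ν w F M).IsAdmissible X)
    (hc : c ∈ H.centers) (ha : Affected K M c) (hd : #F + #(outerNbrs G (K c)) < d) :
    (H.view τ η d ν w F M).test X c ν w =
      ∑ e : SparseEdge V J A with H.IsGood τ η F M c e, H.residue τ η ν F X c e * w e := by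
  set P := Lagrange.nodal (F ∪ {x ∈ outerNbrs G (K c) | H.cell x ∈ X}) ν with hP
  set out : Finset (SparseEdge V J A) := {e | H.Present τ η e ∧ H.center (tail e) = c}
  have hdeg : P.natDegree < d := by
    rw [hP, Lagrange.natDegree_nodal]
    exact ((card_union_le _ _).trans (by gcongr; exact filter_subset _ _)).trans_lt hd
  have hknown : ∑ r ∈ (H.view τ η d ν w F M).prefixes with r.cell.1 = c,
      boundary X r.cell * ∑ l : Fin d, P.coeff l * r.sketch l =
      ∑ e ∈ out, H.residue τ η ν F X c e * w e := by
    rw [prefixes_view, ← keys_view (τ := τ) (η := η) (d := d) (ν := ν) (w := w) (F := F),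
      filter_image, sum_image fun _ _ _ _ h => congrArg PrefixRecord.cell h]
    calc _ = ∑ z ∈ (H.view τ η d ν w F M).keys with z.1 = c, ∑ e ∈ out,
          boundary X z * ((before z (H.cell (tail e)) + before z (H.cell (H.head τ η e))) *
            (w e * P.eval (ν (H.head τ η e)))) := by
          refine sum_congr rfl fun z hz => ?_
          rw [sum_coeff_mul_sketch hdeg, (mem_filter.1 hz).2, mul_sum]
      _ = _ := by
          rw [sum_comm]
          refine sum_congr rfl fun e _ => ?_
          rw [residue, ← sum_boundary_mul_before_cell (w := w) hFS hX hc ha,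
            ← sum_boundary_mul_before_cell (w := w) hFS hX hc ha, ← sum_add_distrib, sum_mul,
            sum_mul]
          exact sum_congr rfl fun z _ => by ring
  have hgood : {e ∈ out | H.IsGood τ η F M c e} =
      ({e | H.IsGood τ η F M c e} : Finset (SparseEdge V J A)) := by
    ext e
    simp only [out, mem_filter, mem_univ, true_and, and_iff_right_iff_imp]
    exact fun h => ⟨h.present, h.center_tail⟩
  rw [View.test, mask_view hc ha, hknown, badEdges_view,
    sum_image fun _ _ _ _ h => congrArg EdgeRecord.edge h,
    ← sum_filter_add_sum_filter_not out (H.IsGood τ η F M c), hgood, ← filter_filter, add_assoc,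
    add_eq_left]
  refine (congrArg _ (sum_congr rfl fun e _ => ?_)).trans (CharTwo.add_self_eq_zero _)
  rw [residue, edgeRecord]
  ring

end View

end Hierarchy

end

/-! ### Admissible colourings detect connections -/

noncomputable section

open SimpleGraph

theorem eval_nodal_eq_zero_iff {V Kf : Type*} [Field Kf] {ν : V → Kf} (hν : Function.Injective ν)
    {s : Finset V} {x : V} : (Lagrange.nodal s ν).eval (ν x) = 0 ↔ x ∈ s := by
  refine ⟨fun h => ?_, Lagrange.eval_nodal_at_node⟩
  by_contra hx
  exact Lagrange.eval_nodal_not_at_node (fun y hy => hν.ne (ne_of_mem_of_not_mem hy hx).symm) h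

namespace Hierarchy

variable {V : Type*} [Fintype V] {G : SimpleGraph V} {K : V → Finset V} {V₀ S F M : Finset V}
  {visits : ℕ} {J A B Kf : Type*} {H : Hierarchy G K V₀ S visits} {τ : J → Option V → A}
  {η : J → V → B} [Field Kf] {d : ℕ} {ν : V → Kf} {X Y : Set (Cell V)} {c s t : V}
  {e : SparseEdge V J A}

section Residue

theorem residue_eq_zero_of_head_mem (hF : H.head τ η e ∈ F) : H.residue τ η ν F X c e = 0 := by
  rw [residue, Lagrange.eval_nodal_at_node (mem_union_left _ hF), mul_zero]

theorem residue_eq_zero_iff_of_isLeft [CharP Kf 2] (hν : Function.Injective ν)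
    (he : H.IsGood τ η F M c e) (hl : e.isLeft) (hF : H.head τ η e ∉ F) :
    H.residue τ η ν F X c e = 0 ↔ (H.cell (tail e) ∈ X ↔ H.cell (H.head τ η e) ∈ X) := by
  have hc : H.center (H.head τ η e) = c := (he.present.center_eq hl).symm.trans he.center_tail
  have hmask : H.head τ η e ∉ F ∪ {x ∈ outerNbrs G (K c) | H.cell x ∈ X} := by
    rw [mem_union, mem_filter, mem_outerNbrs, ← hc]
    exact fun h => h.elim hF fun h => h.1.1 (H.mem_cluster _)
  rw [residue, mul_eq_zero, eval_nodal_eq_zero_iff hν, or_iff_left hmask, CharTwo.add_eq_zero,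
    mark, mark]
  simp only [cell, he.center_tail, hc, true_and]
  split_ifs <;> simp_all

theorem residue_eq_zero_iff_of_not_isLeft (hν : Function.Injective ν)
    (he : H.IsGood τ η F M c e) (hl : ¬e.isLeft) (hF : H.head τ η e ∉ F) :
    H.residue τ η ν F X c e = 0 ↔ (H.cell (tail e) ∈ X → H.cell (H.head τ η e) ∈ X) := by
  obtain ⟨hne, hnbr⟩ := he.present.center_ne hl
  rw [he.center_tail] at hne hnbr
  have hhead : (mark X c (H.cell (H.head τ η e)) : Kf) = 0 := if_neg fun h => hne h.1.symm
  rw [residue, hhead, add_zero, mul_eq_zero, eval_nodal_eq_zero_iff hν, mem_union, mem_filter,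
    or_iff_right hF, and_iff_right hnbr, mark]
  simp only [cell, he.center_tail, true_and, ite_eq_right_iff, one_ne_zero, imp_false]
  exact imp_iff_not_or.symm

end Residue

section Soundness

/- The edge along which a connection crosses from `X` to `Y` is represented by a tree edge, or by a
cross edge in one of its two directions; the latter is detected by whichever of `X` and `Y` contains
its start. -/
theorem exists_residue_ne_zero [CharP Kf 2] (hν : Function.Injective ν)
    (hiso : Isolates τ η K V₀ F M) (hdisj : Disjoint X Y)
    (hcover : ∀ x ∉ F, Affected K M (H.center x) → H.cell x ∈ X ∪ Y) (hs : s ∈ M) (ht : t ∈ M)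
    (hsF : s ∉ F) (hsX : H.cell s ∈ X) (htY : H.cell t ∈ Y) (hst : (avoiding G F).Reachable s t) :
    ∃ c e, c ∈ H.centers ∧ Affected K M c ∧ H.IsGood τ η F M c e ∧
      (H.residue τ η ν F X c e ≠ 0 ∨ H.residue τ η ν F Y c e ≠ 0) := by
  have htX : H.cell t ∉ X := fun h => Set.disjoint_left.1 hdisj h htY
  obtain ⟨x, y, σ, hxF, hyF, hx, hy, hσ, hxy, hside⟩ :=
    H.exists_joins_crossing hs ht hsF hst (side := fun x => H.cell x ∈ X)
      fun h => htX (h.mp hsX)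
  wlog hxX : H.cell x ∈ X generalizing x y
  · refine this y x hyF hxF hy hx hxy.symm hside.symm ?_
    by_contra hyX
    exact hside (propext (iff_of_false hxX hyX))
  have hyX : H.cell y ∉ X := fun hyX => hside (propext (iff_of_true hxX hyX))
  have hyY := (hcover y hyF hy).resolve_left hyX
  have hcross : ∀ {x y : V} {Z : Set (Cell V)}, H.Joins σ x y → H.center x ≠ H.center y →
      y ∉ F → y ∈ outerNbrs G (K (H.center x)) → H.cell x ∈ Z → H.cell y ∉ Z →
      H.IsGood τ η F M (H.center x) (Sum.inr (x, y, σ)) ∧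
        H.residue τ η ν F Z (H.center x) (Sum.inr (x, y, σ)) ≠ 0 := by
    intro x y Z hxy hne hyF hnbr hxZ hyZ
    have he : H.IsGood τ η F M (H.center x) (Sum.inr (x, y, σ)) :=
      ⟨⟨hnbr, hne, hxy⟩, rfl, hσ, fun h => absurd h Bool.false_ne_true⟩
    exact ⟨he, fun h => hyZ ((residue_eq_zero_iff_of_not_isLeft hν he
      Bool.false_ne_true hyF).1 h hxZ)⟩
  by_cases hc : H.center x = H.center y
  · obtain ⟨e, he, hl, heF, heX⟩ := exists_isGood_crossing hiso (X := {x | H.cell x ∈ X}) hxF hyF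
      hσ hxy hc fun h => hyX (h.1 hxX)
    exact ⟨_, e, H.center_mem x, hx, he,
      Or.inl fun h => heX ((residue_eq_zero_iff_of_isLeft hν he hl heF).1 h)⟩
  rcases hxy.linked with h | hnbr | hnbr
  · exact absurd h hc
  · obtain ⟨he, hres⟩ := hcross hxy hc hyF hnbr hxX hyX
    exact ⟨_, _, H.center_mem x, hx, he, Or.inl hres⟩
  · obtain ⟨he, hres⟩ := hcross hxy.symm (Ne.symm hc) hxF hnbr hyY
      (Set.disjoint_left.1 hdisj hxX)
    exact ⟨_, _, H.center_mem y, hy, he, Or.inr hres⟩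

variable [Fintype J] [Fintype A]

/-- The test at `c` as a polynomial in the random element whose powers weight the edges. -/
def residuePoly (H : Hierarchy G K V₀ S visits) (τ : J → Option V → A) (η : J → V → B)
    (ν : V → Kf) (eid : SparseEdge V J A → ℕ) (F M : Finset V) (X : Set (Cell V)) (c : V) :
    Polynomial Kf :=
  ∑ e with H.IsGood τ η F M c e, Polynomial.monomial (eid e) (H.residue τ η ν F X c e)

variable {eid : SparseEdge V J A → ℕ} {α : Kf}

theorem residue_eq_zero_of_residuePoly_eq_zero (heid : Function.Injective eid)
    (h : H.residuePoly τ η ν eid F M X c = 0) (he : H.IsGood τ η F M c e) :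
    H.residue τ η ν F X c e = 0 := by
  have hcoeff : (H.residuePoly τ η ν eid F M X c).coeff (eid e) = H.residue τ η ν F X c e := by
    simp only [residuePoly, Polynomial.finsetSum_coeff, Polynomial.coeff_monomial, heid.eq_iff]
    rw [sum_ite_eq', if_pos (by simpa using he)]
  rw [← hcoeff, h, Polynomial.coeff_zero]

theorem test_view_eq_eval [CharP Kf 2] (hFS : Disjoint F S)
    (hX : (H.view τ η d ν (fun e => α ^ eid e) F M).IsAdmissible X) (hc : c ∈ H.centers)
    (ha : Affected K M c) (hd : #F + #(outerNbrs G (K c)) < d) :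
    (H.view τ η d ν (fun e => α ^ eid e) F M).test X c ν (fun e => α ^ eid e) =
      (H.residuePoly τ η ν eid F M X c).eval α := by
  simp only [test_view hFS hX hc ha hd, residuePoly, Polynomial.eval_finsetSum,
    Polynomial.eval_monomial]

/-- No admissible colouring passes a test by accident. -/
def IsGeneric (H : Hierarchy G K V₀ S visits) (τ : J → Option V → A) (η : J → V → B) (d : ℕ)
    (ν : V → Kf) (eid : SparseEdge V J A → ℕ) (F M : Finset V) (α : Kf) : Prop :=
  ∀ X, (H.view τ η d ν (fun e => α ^ eid e) F M).IsAdmissible X → ∀ c,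
    (H.residuePoly τ η ν eid F M X c).eval α = 0 → H.residuePoly τ η ν eid F M X c = 0

theorem not_separates_of_reachable [CharP Kf 2] (hν : Function.Injective ν)
    (heid : Function.Injective eid) (hFS : Disjoint F S)
    (hiso : Isolates τ η K V₀ F M) (hd : ∀ c ∈ H.centers, #F + #(outerNbrs G (K c)) < d)
    (hα : H.IsGeneric τ η d ν eid F M α) (hs : s ∈ M) (ht : t ∈ M) (hsF : s ∉ F)
    (hst : (avoiding G F).Reachable s t) :
    ¬(H.view τ η d ν (fun e => α ^ eid e) F M).Separates ν (fun e => α ^ eid e)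
      (H.cell s) (H.cell t) := by
  rintro ⟨X, Y, hX, hY, hlive, hdisj, hsX, htY, htest⟩
  have hcover : ∀ x ∉ F, Affected K M (H.center x) → H.cell x ∈ X ∪ Y := fun x hxF hx => by
    rw [hlive]
    exact cell_mem_live_view hFS hxF hx
  obtain ⟨c, e, hc, ha, he, hres⟩ :=
    exists_residue_ne_zero hν hiso hdisj hcover hs ht hsF hsX htY hst
  have hzero : ∀ Z, (H.view τ η d ν (fun e => α ^ eid e) F M).IsAdmissible Z →
      (H.view τ η d ν (fun e => α ^ eid e) F M).test Z c ν (fun e => α ^ eid e) = 0 →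
      H.residue τ η ν F Z c e = 0 := fun Z hZ hZtest => by
    rw [test_view_eq_eval hFS hZ hc ha (hd c hc)] at hZtest
    exact residue_eq_zero_of_residuePoly_eq_zero heid (hα Z hZ c hZtest) he
  obtain ⟨hXtest, hYtest⟩ := htest (c, (H.tour c).length) (mem_ends_view.2 ⟨hc, ha, rfl⟩)
  exact hres.elim (fun h => h (hzero X hX hXtest)) fun h => h (hzero Y hY hYtest)

end Soundness

section Completeness

variable (H F M) in
/-- The tour positions in affected clusters that are occupied by vertices in `Z` outside `F`. -/
def cellsOf (Z : Set V) : Set (Cell V) :=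
  {z | Affected K M z.1 ∧ ∃ x, (H.tour z.1)[z.2]? = some x ∧ x ∉ F ∧ x ∈ Z}

variable {Z : Set V} {x : V}

theorem cell_mem_cellsOf :
    H.cell x ∈ H.cellsOf F M Z ↔ Affected K M (H.center x) ∧ x ∉ F ∧ x ∈ Z := by
  simp only [cellsOf, Set.mem_ofPred_eq, getElem?_cell, Option.some.injEq, exists_eq_left']
  rfl

theorem residue_cellsOf_eq_zero [CharP Kf 2] (hν : Function.Injective ν)
    (hK : ∀ c, ∀ x ∈ K c, ∀ y ∈ K c, (restrict G ↑(K c)).Reachable x y) (hFM : F ⊆ M)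
    (hZ : ∀ x y, (avoiding G F).Reachable x y → (x ∈ Z ↔ y ∈ Z)) (hc : c ∈ H.centers)
    (ha : Affected K M c) (he : H.IsGood τ η F M c e) :
    H.residue τ η ν F (H.cellsOf F M Z) c e = 0 := by
  by_cases hF : H.head τ η e ∈ F
  · exact residue_eq_zero_of_head_mem hF
  by_cases hl : e.isLeft
  · have hiff := hZ _ _ (he.present.joins.reachable_avoiding hK hFM he.not_badType
      (he.tail_notMem hl) hF)
    rw [residue_eq_zero_iff_of_isLeft hν he hl hF, cell_mem_cellsOf, cell_mem_cellsOf,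
      he.present.center_eq hl, hiff]
    simp only [he.tail_notMem hl, hF, not_false_eq_true]
  · rw [residue_eq_zero_iff_of_not_isLeft hν he hl hF, cell_mem_cellsOf, cell_mem_cellsOf]
    rintro ⟨-, htF, htZ⟩
    have hnbr := (he.present.center_ne hl).2
    rw [he.center_tail] at hnbr
    obtain ⟨v, hv, hvc⟩ := ha
    exact ⟨⟨v, hv, H.subset_cluster_center c hc _ hnbr hvc⟩, hF,
      (hZ _ _ (he.present.joins.reachable_avoiding hK hFM he.not_badType htF hF)).1 htZ⟩

variable [Fintype J] [Fintype A] {w : SparseEdge V J A → Kf}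

theorem mem_keys_view_of_mem_tour {z : Cell V} {v : V} (hFS : Disjoint F S) (hFM : F ⊆ M)
    (hv : v ∈ F) (hz : (H.tour z.1)[z.2]? = some v) :
    z ∈ (H.view τ η d ν w F M).keys ∧ (z.1, z.2 + 1) ∈ (H.view τ η d ν w F M).keys := by
  have hocc : z ∈ (if v ∈ S then ∅ else H.occurrences v) := by
    rw [if_neg (Finset.disjoint_left.1 hFS hv)]
    exact mem_occurrences.2 hz
  rw [keys_view]
  exact ⟨mem_biUnion.2 ⟨v, hFM hv, mem_union_left _ (mem_union_left _ hocc)⟩,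
    mem_biUnion.2 ⟨v, hFM hv, mem_union_left _ (mem_union_right _ (mem_image_of_mem _ hocc))⟩⟩

theorem isAdmissible_cellsOf (hFS : Disjoint F S) (hFM : F ⊆ M)
    (hZ : ∀ x y, (avoiding G F).Adj x y → (x ∈ Z ↔ y ∈ Z)) :
    (H.view τ η d ν w F M).IsAdmissible (H.cellsOf F M Z) where
  subset_live z hz :=
    (mem_live_view hFS).2 ⟨hz.1, hz.2.imp fun _ h => ⟨h.1, h.2.1⟩⟩
  mem_succ_iff c i hi := by
    refine and_congr_right fun ha => ?_
    dsimp only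
    by_cases hlt : i < (H.tour c).length
    swap
    · rw [List.getElem?_eq_none (by omega), List.getElem?_eq_none (by omega)]
    by_cases hsucc : i + 1 = (H.tour c).length
    · have hc := (H.mem_of_mem_tour c _ (List.getElem_mem hlt)).1
      rw [hsucc] at hi
      exact absurd (length_mem_keys_view hc ha) hi
    have hget := List.getElem?_eq_getElem hlt
    have hget' := List.getElem?_eq_getElem (l := H.tour c) (i := i + 1) (by omega)
    have hF : (H.tour c)[i] ∉ F := fun h =>
      hi (mem_keys_view_of_mem_tour (z := (c, i)) hFS hFM h hget).2
    have hF' : (H.tour c)[i + 1] ∉ F := fun h =>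
      hi (mem_keys_view_of_mem_tour (z := (c, i + 1)) hFS hFM h hget').1
    have hadj : (avoiding G F).Adj (H.tour c)[i] (H.tour c)[i + 1] :=
      avoiding_adj.2 ⟨List.isChain_iff_getElem.1 (H.isChain_tour c) i (by omega), hF, hF'⟩
    simp only [hget, hget', Option.some.injEq, exists_eq_left', hF, hF', not_false_eq_true,
      true_and, hZ _ _ hadj]

theorem separates_of_not_reachable [CharP Kf 2] (hν : Function.Injective ν)
    (hK : ∀ c, ∀ x ∈ K c, ∀ y ∈ K c, (restrict G ↑(K c)).Reachable x y) (hFS : Disjoint F S)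
    (hFM : F ⊆ M) (hd : ∀ c ∈ H.centers, #F + #(outerNbrs G (K c)) < d) (hs : s ∈ M) (ht : t ∈ M)
    (hsF : s ∉ F) (htF : t ∉ F) (hst : ¬(avoiding G F).Reachable s t) :
    (H.view τ η d ν w F M).Separates ν w (H.cell s) (H.cell t) := by
  have hZ : ∀ x y, (avoiding G F).Reachable x y →
      (x ∈ {x | (avoiding G F).Reachable s x} ↔ y ∈ {x | (avoiding G F).Reachable s x}) :=
    fun x y h => ⟨fun hx => hx.trans h, fun hy => hy.trans h.symm⟩
  set Z : Set V := {x | (avoiding G F).Reachable s x}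
  have hadm : ∀ Z : Set V, (∀ x y, (avoiding G F).Reachable x y → (x ∈ Z ↔ y ∈ Z)) →
      (H.view τ η d ν w F M).IsAdmissible (H.cellsOf F M Z) :=
    fun Z hZ => isAdmissible_cellsOf hFS hFM fun x y h => hZ x y h.reachable
  have htest : ∀ Z : Set V, (∀ x y, (avoiding G F).Reachable x y → (x ∈ Z ↔ y ∈ Z)) →
      ∀ b ∈ (H.view τ η d ν w F M).ends,
        (H.view τ η d ν w F M).test (H.cellsOf F M Z) b.1 ν w = 0 := fun Z hZ b hb => by
    obtain ⟨hc, ha, -⟩ := mem_ends_view.1 hb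
    rw [test_view hFS (hadm Z hZ) hc ha (hd _ hc)]
    refine sum_eq_zero fun e he => ?_
    rw [residue_cellsOf_eq_zero hν hK hFM hZ hc ha (mem_filter_univ e |>.1 he), zero_mul]
  have hZc : ∀ x y, (avoiding G F).Reachable x y → (x ∈ Zᶜ ↔ y ∈ Zᶜ) :=
    fun x y h => not_congr (hZ x y h)
  refine ⟨H.cellsOf F M Z, H.cellsOf F M Zᶜ, hadm Z hZ, hadm _ hZc, ?_, ?_,
    cell_mem_cellsOf.2 ⟨H.affected_center hs, hsF, Reachable.refl s⟩,
    cell_mem_cellsOf.2 ⟨H.affected_center ht, htF, hst⟩,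
    fun b hb => ⟨htest Z hZ b hb, htest _ hZc b hb⟩⟩
  · ext z
    rw [mem_live_view hFS, Set.mem_union, cellsOf, cellsOf, Set.mem_ofPred_eq, Set.mem_ofPred_eq,
      ← and_or_left, ← exists_or]
    simp only [← and_or_left, Set.mem_compl_iff, em, and_true]
  · rw [Set.disjoint_left]
    rintro z ⟨-, x, hx, -, hxZ⟩ ⟨-, y, hy, -, hyZ⟩
    exact hyZ (Option.some.inj (hx.symm.trans hy) ▸ hxZ)

end Completeness

end Hierarchy

end

/-! ### Probability over a finite sample space -/

noncomputable section

/-- The probability that a uniformly random element of the finite type `Ω` satisfies `p`. -/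
def prob {Ω : Type*} [Fintype Ω] (p : Ω → Prop) : ℝ := #{ω | p ω} / Fintype.card Ω

section Prob

variable {Ω Ω' ι : Type*} [Fintype Ω] [Fintype Ω'] [Fintype ι]
  {p q : Ω → Prop} {ε : ℝ}

theorem prob_eq_card_div (p : Ω → Prop) [DecidablePred p] :
    prob p = #{ω | p ω} / Fintype.card Ω := by
  unfold prob
  congr!

theorem prob_nonneg (p : Ω → Prop) : 0 ≤ prob p := by unfold prob; positivity

theorem prob_mono (h : ∀ ω, p ω → q ω) : prob p ≤ prob q := by
  unfold prob
  gcongr with ω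
  exact h ω

theorem prob_le_one (p : Ω → Prop) : prob p ≤ 1 :=
  div_le_one_of_le₀ (mod_cast card_le_univ _) (by positivity)

theorem prob_true [Nonempty Ω] : prob (fun _ : Ω => True) = 1 := by
  simp [prob]

theorem prob_eq_sum_fiberwise (p : Ω → Prop) (g : Ω → ι) :
    prob p = ∑ a, prob fun ω => p ω ∧ g ω = a := by
  simp only [prob, ← sum_div, ← Nat.cast_sum,
    card_eq_sum_card_fiberwise (f := g) (t := univ) (s := {ω | p ω}) (fun _ _ => mem_univ _),
    filter_filter]

theorem prob_not [Nonempty Ω] (p : Ω → Prop) : prob (fun ω => ¬p ω) = 1 - prob p := by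
  have hcard : (Fintype.card Ω : ℝ) ≠ 0 := mod_cast Fintype.card_ne_zero
  rw [eq_sub_iff_add_eq, prob_eq_card_div, prob, ← add_div, div_eq_one_iff_eq hcard, add_comm]
  rw [← card_univ]
  exact mod_cast card_filter_add_card_filter_not (s := univ) p

theorem prob_eq [Nonempty Ω] (a : Ω) : prob (· = a) = 1 / Fintype.card Ω := by
  rw [prob, card_eq_one.2 ⟨a, by ext; simp⟩, Nat.cast_one]

theorem prob_exists_mem_le {κ : Type*} (s : Finset κ) (r : κ → Ω → Prop)
    (h : ∀ i ∈ s, prob (r i) ≤ ε) : prob (fun ω => ∃ i ∈ s, r i ω) ≤ #s * ε := by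
  have hunion : ({ω | ∃ i ∈ s, r i ω} : Finset Ω) = s.biUnion fun i => {ω | r i ω} := by
    ext; simp
  calc prob (fun ω => ∃ i ∈ s, r i ω)
      ≤ (∑ i ∈ s, #{ω | r i ω} : ℕ) / Fintype.card Ω := by
        rw [prob_eq_card_div, hunion]
        gcongr
        exact card_biUnion_le
    _ = ∑ i ∈ s, prob (r i) := by rw [Nat.cast_sum, sum_div]; rfl
    _ ≤ #s * ε := by simpa using sum_le_sum h

theorem prob_and_prod (p : Ω → Prop) (q : Ω' → Prop) :
    prob (fun z : Ω × Ω' => p z.1 ∧ q z.2) = prob p * prob q := by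
  rw [prob_eq_card_div, prob, prob, Fintype.card_prod, div_mul_div_comm, ← Nat.cast_mul,
    ← Nat.cast_mul, ← card_product, ← filter_product, univ_product_univ]

variable [DecidableEq ι]

theorem prob_pi {Y : ι → Type*} [∀ i, Fintype (Y i)] (r : ∀ i, Y i → Prop) :
    prob (fun ω : ∀ i, Y i => ∀ i, r i (ω i)) = ∏ i, prob (r i) := by
  have hpi : ({ω | ∀ i, r i (ω i)} : Finset (∀ i, Y i)) =
      Fintype.piFinset fun i => {y | r i y} := by ext; simp
  simp only [prob, hpi, Fintype.card_piFinset, Fintype.card_pi, Nat.cast_prod, prod_div_distrib]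

theorem prob_prod_le_of_forall_fst {r : Ω × Ω' → Prop} (hε : 0 ≤ ε)
    (h : ∀ x, prob (fun y => r (x, y)) ≤ ε) : prob r ≤ ε := by
  have hfiber : ∀ x, prob (fun z => r z ∧ z.1 = x) ≤ ε / Fintype.card Ω := fun x => by
    have hcard : #{z | r z ∧ z.1 = x} = #{y | r (x, y)} :=
      card_nbij' Prod.snd (fun y => (x, y)) (by rintro ⟨a, b⟩; simp +contextual [eq_comm])
        (by simp [Set.MapsTo]) (by rintro ⟨a, b⟩; simp +contextual) (by simp [Set.LeftInvOn])
    rw [prob_eq_card_div, hcard, Fintype.card_prod, Nat.cast_mul, mul_comm, ← div_div]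
    gcongr
    exact h x
  calc prob r = ∑ x, prob fun z => r z ∧ z.1 = x := prob_eq_sum_fiberwise r Prod.fst
    _ ≤ ∑ _x : Ω, ε / Fintype.card Ω := sum_le_sum fun x _ => hfiber x
    _ ≤ ε := by
      rw [sum_const, card_univ, nsmul_eq_mul, ← mul_div_assoc]
      exact div_le_of_le_mul₀ (by positivity) hε (mul_comm _ ε).le

theorem prob_equiv (e : Ω ≃ Ω') (q : Ω' → Prop) : prob (fun ω => q (e ω)) = prob q := by
  rw [prob, prob, Fintype.card_congr e, ← card_map e.toEmbedding]
  congr 3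
  ext y
  simp

theorem prob_prod_le_of_forall_snd {r : Ω × Ω' → Prop} (hε : 0 ≤ ε)
    (h : ∀ y, prob (fun x => r (x, y)) ≤ ε) : prob r ≤ ε := by
  rw [← prob_equiv (Equiv.prodComm Ω' Ω)]
  exact prob_prod_le_of_forall_fst hε h

theorem prob_forall_coord (r : Ω → Prop) :
    prob (fun ω : ι → Ω => ∀ i, r (ω i)) = prob r ^ Fintype.card ι := by
  rw [prob_pi fun _ => r, prod_const, card_univ]

theorem prob_forall_mem_and_forall_mem [Nonempty Ω] {N Q : Finset ι} (hNQ : Disjoint N Q)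
    (p q : Ω → Prop) :
    prob (fun h : ι → Ω => (∀ v ∈ N, p (h v)) ∧ ∀ v ∈ Q, q (h v)) =
      prob p ^ #N * prob q ^ #Q := by
  have hcoord : ∀ v, prob (fun a => (v ∈ N → p a) ∧ (v ∈ Q → q a)) =
      (if v ∈ N then prob p else 1) * if v ∈ Q then prob q else 1 := fun v => by
    have hv : v ∈ N → v ∉ Q := fun hN => Finset.disjoint_left.1 hNQ hN
    by_cases hN : v ∈ N <;> by_cases hQ : v ∈ Q <;> simp_all [prob_true]
  calc prob (fun h : ι → Ω => (∀ v ∈ N, p (h v)) ∧ ∀ v ∈ Q, q (h v))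
      = prob (fun h : ι → Ω => ∀ v, (v ∈ N → p (h v)) ∧ (v ∈ Q → q (h v))) := by
        simp only [forall_and]
    _ = prob p ^ #N * prob q ^ #Q := by
        rw [prob_pi fun v a => (v ∈ N → p a) ∧ (v ∈ Q → q a)]
        simp only [hcoord, prod_mul_distrib, prod_ite_mem, univ_inter, prod_const]

theorem prob_forall_mem [Nonempty Ω] (N : Finset ι) (p : Ω → Prop) :
    prob (fun h : ι → Ω => ∀ v ∈ N, p (h v)) = prob p ^ #N := by
  simpa using prob_forall_mem_and_forall_mem (disjoint_empty_right N) p p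

theorem prob_coord [Nonempty Ω] (i : ι) (p : Ω → Prop) :
    prob (fun h : ι → Ω => p (h i)) = prob p := by
  simpa using prob_forall_mem {i} p

theorem prob_ne [Nonempty Ω] (a : Ω) : prob (· ≠ a) = 1 - 1 / Fintype.card Ω := by
  rw [← prob_eq a, ← prob_not]

end Prob

section Hashing

variable {W B : Type*} [Fintype W] [DecidableEq W] [Fintype B] [Nonempty B]
  {N Q : Finset W} {x : W}

theorem prob_hash_isolates (hx : x ∈ N) (hNQ : Disjoint N Q) :
    prob (fun h : W → B => (∀ v ∈ N, h x = h v) ∧ ∀ v ∈ Q, h v ≠ h x) =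
      Fintype.card B * ((1 / Fintype.card B) ^ #N * (1 - 1 / Fintype.card B) ^ #Q) := by
  rw [prob_eq_sum_fiberwise _ fun h => h x]
  have hvalue : ∀ a, prob (fun h : W → B => ((∀ v ∈ N, h x = h v) ∧ ∀ v ∈ Q, h v ≠ h x) ∧
      h x = a) = (1 / Fintype.card B) ^ #N * (1 - 1 / Fintype.card B) ^ #Q := fun a => by
    rw [← prob_eq a, ← prob_not, ← prob_forall_mem_and_forall_mem hNQ]
    congr 1 with h
    constructor
    · rintro ⟨⟨hN, hQ⟩, rfl⟩
      exact ⟨fun v hv => (hN v hv).symm, hQ⟩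
    · rintro ⟨hN, hQ⟩
      obtain rfl := hN x hx
      exact ⟨⟨fun v hv => (hN v hv).symm, hQ⟩, rfl⟩
  simp only [hvalue, sum_const, card_univ, nsmul_eq_mul]

theorem one_half_le_one_sub_inv_pow {m k : ℕ} (h : 2 * k ≤ m) (hm : 1 ≤ m) :
    (1 / 2 : ℝ) ≤ (1 - 1 / m) ^ k := by
  have hm' : (1 : ℝ) ≤ m := mod_cast hm
  have hk : (2 * k : ℝ) ≤ m := mod_cast h
  have hkm : (k : ℝ) * (1 / m) ≤ 1 / 2 := by
    rw [mul_one_div, div_le_div_iff₀ (by linarith) two_pos]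
    linarith
  have hinv : (1 : ℝ) / m ≤ 1 := (div_le_one (by linarith)).2 hm'
  have := one_add_mul_le_pow (a := -(1 / m : ℝ)) (by linarith) k
  rw [← sub_eq_add_neg] at this
  linarith

theorem one_half_le_prob_hash_ne (hQ : 2 * #Q ≤ Fintype.card B) (hx : x ∉ Q) :
    1 / 2 ≤ prob (fun h : W → B => ∀ v ∈ Q, h v ≠ h x) := by
  have hB : (Fintype.card B : ℝ) ≠ 0 := mod_cast Fintype.card_ne_zero
  have h := prob_hash_isolates (B := B) (mem_singleton_self x) (disjoint_singleton_left.2 hx)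
  simp only [mem_singleton, forall_eq, true_and, card_singleton, pow_one, ← mul_assoc,
    mul_one_div_cancel hB, one_mul] at h
  rw [h]
  exact one_half_le_one_sub_inv_pow hQ Fintype.card_pos

theorem prob_hash_pair_ge {y : W} (hQ : 2 * #Q ≤ Fintype.card B) (hxy : x ≠ y) (hx : x ∉ Q)
    (hy : y ∉ Q) : 1 / (2 * Fintype.card B) ≤
      prob (fun h : W → B => h x = h y ∧ ∀ v ∈ Q, h v ≠ h x) := by
  have hB : (Fintype.card B : ℝ) ≠ 0 := mod_cast Fintype.card_ne_zero
  have h := prob_hash_isolates (B := B) (N := {x, y}) (x := x) (Q := Q) (by simp) (by simp [hx, hy])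
  simp only [mem_insert, mem_singleton, forall_eq_or_imp, forall_eq, true_and,
    card_pair hxy] at h
  rw [h]
  calc (1 : ℝ) / (2 * Fintype.card B)
      = Fintype.card B * ((1 / Fintype.card B) ^ 2 * (1 / 2)) := by field_simp
    _ ≤ _ := by
      gcongr
      exact one_half_le_one_sub_inv_pow hQ Fintype.card_pos

theorem prob_hash_hits_le (hQ : 2 * #Q ≤ Fintype.card B) (a : B) :
    prob (fun h : W → B => ∃ v ∈ Q, h v = a) ≤ 1 / 2 := by
  have h := prob_not fun h : W → B => ∀ v ∈ Q, h v ≠ a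
  push Not at h
  rw [h, prob_forall_mem Q (· ≠ a), prob_ne]
  linarith [one_half_le_one_sub_inv_pow hQ Fintype.card_pos]

theorem one_sub_inv_pow_mul_le {m : ℕ} (hm : 1 ≤ m) (d : ℕ) :
    (1 - 1 / (m : ℝ)) ^ (m * d) ≤ (1 / 2) ^ d := by
  have hm' : (1 : ℝ) ≤ m := mod_cast hm
  have hinv : (1 : ℝ) / m ≤ 1 := (div_le_one (by linarith)).2 hm'
  have hexp : Real.exp (-1) ≤ 1 / 2 := by
    rw [Real.exp_neg, one_div]
    exact inv_anti₀ two_pos Real.exp_one_gt_two.le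
  rw [pow_mul]
  refine pow_le_pow_left₀ (pow_nonneg (by linarith) m) ?_ d
  exact (Real.one_sub_div_pow_le_exp_neg hm').trans hexp

theorem prob_exists_root_le {k κ : Type*} [Field k] [Fintype k] (s : Finset κ)
    (P : κ → Polynomial k) {D : ℕ} (hD : ∀ i ∈ s, (P i).natDegree ≤ D) :
    prob (fun a => ∃ i ∈ s, P i ≠ 0 ∧ (P i).eval a = 0) ≤ #s * (D / Fintype.card k) := by
  refine prob_exists_mem_le s _ fun i hi => ?_
  rw [prob_eq_card_div]
  gcongr
  refine le_trans (card_le_card fun a ha => ?_) <|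
    (Multiset.toFinset_card_le _).trans <| (P i).card_roots'.trans (hD i hi)
  rw [mem_filter_univ] at ha
  exact Multiset.mem_toFinset.2 ((Polynomial.mem_roots ha.1).2 ha.2)

end Hashing

end

/-! ### Failure probabilities of hashing -/

section

theorem card_range_filter_getElem?_le {X : Type*} (l : List X) (x : X) (m : ℕ) :
    #{i ∈ range m | l[i]? = some x} ≤ l.count x := by
  have hcount : #{k : Fin l.length | l.get k = x} = l.count x := by
    exact Fin.card_filter_univ_eq_vector_get_eq_count x ⟨l, rfl⟩
  rw [← hcount]
  refine (card_le_card fun i hi => ?_).trans (card_image_le (f := Fin.val))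
  obtain ⟨hlt, hget⟩ := List.getElem?_eq_some_iff.1 (mem_filter.1 hi).2
  exact mem_image.2 ⟨⟨i, hlt⟩, (mem_filter_univ _).2 hget, rfl⟩

theorem card_affected_le {V : Type*} {K : V → Finset V} {V₀ : Finset V} {L : ℕ}
    (hL : ∀ v, #{c ∈ V₀ | v ∈ K c} ≤ L) (M : Finset V) :
    #{c ∈ V₀ | Affected K M c} ≤ #M * L := by
  have hsub : {c ∈ V₀ | Affected K M c} ⊆ M.biUnion fun v => {c ∈ V₀ | v ∈ K c} := by
    intro c hc
    obtain ⟨hc, v, hv, hvc⟩ := mem_filter.1 hc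
    exact mem_biUnion.2 ⟨v, hv, mem_filter.2 ⟨hc, hvc⟩⟩
  exact (card_le_card hsub).trans (card_biUnion_le_card_mul _ _ L fun v _ => hL v)

variable {V : Type*} [Fintype V]

namespace Hierarchy

variable {G : SimpleGraph V} {K : V → Finset V} {V₀ S : Finset V} {visits L D : ℕ}
  {J A B Kf : Type*} [Fintype J] [Fintype A] (H : Hierarchy G K V₀ S visits)
  (τ : J → Option V → A) (η : J → V → B)

theorem card_occurrences_le {v : V} (hv : v ∉ S) : #(H.occurrences v) ≤ visits := by
  have hsub : H.occurrences v ⊆ univ.biUnion fun c =>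
      ({i ∈ range (Fintype.card V ^ 2) | (H.tour c)[i]? = some v}).image fun i => (c, i) := by
    rintro ⟨c, i⟩ hz
    simp only [occurrences, mem_filter, mem_product] at hz
    exact mem_biUnion.2 ⟨c, mem_univ c, mem_image_of_mem _ (mem_filter.2 ⟨hz.1.2, hz.2⟩)⟩
  calc #(H.occurrences v) ≤ ∑ c, (H.tour c).count v :=
        (card_le_card hsub).trans <| card_biUnion_le.trans <| sum_le_sum fun c _ =>
          card_image_le.trans (card_range_filter_getElem?_le _ v _)
    _ ≤ visits := H.sum_count_tour_le v hv

section Overlap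

variable (hL : ∀ v, #{c ∈ V₀ | v ∈ K c} ≤ L)
include hL

theorem card_centersAt_le (v : V) : #(H.centersAt v) ≤ L :=
  (card_le_card (filter_subset_filter _ H.centers_subset)).trans (hL v)

theorem card_endsAt_le (v : V) : #(H.endsAt v) ≤ L :=
  card_image_le.trans (H.card_centersAt_le hL v)

theorem card_keysAt_le (v : V) : #(H.keysAt v) ≤ 2 * visits + 2 * L := by
  have hocc : #(if v ∈ S then ∅ else H.occurrences v) ≤ visits := by
    split_ifs with hv
    · exact Nat.zero_le _
    · exact H.card_occurrences_le hv
  calc #(H.keysAt v) ≤ (visits + visits) + (L + L) :=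
        (card_union_le _ _).trans <| Nat.add_le_add
          ((card_union_le _ _).trans <| Nat.add_le_add hocc <| card_image_le.trans hocc)
          ((card_union_le _ _).trans <| Nat.add_le_add (H.card_endsAt_le hL v) <|
            card_image_le.trans (H.card_endsAt_le hL v))
    _ = 2 * visits + 2 * L := by ring

theorem card_nbrsAt_le (hD : ∀ c ∈ H.centers, #(outerNbrs G (K c)) ≤ D) (v : V) :
    #(H.nbrsAt v) ≤ L * D :=
  (card_biUnion_le_card_mul _ _ D fun c hc =>
    card_image_le.trans (hD c (mem_filter.1 hc).1)).trans <|
    Nat.mul_le_mul_right D (H.card_centersAt_le hL v)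

theorem card_typeEdgesAt_le (hD : ∀ c ∈ H.centers, #(outerNbrs G (K c)) ≤ D) (v : V) :
    #(H.typeEdgesAt τ η v) ≤ L * (Fintype.card J * D + D * D) := by
  set near : V → Finset (SparseEdge V J A) := fun c =>
    (univ ×ˢ outerNbrs G (K c)).image (fun p : J × V => Sum.inl (p.1, τ p.1 (some c), p.2)) ∪
      (outerNbrs G (K c) ×ˢ outerNbrs G (K c)).image fun p => Sum.inr (p.1, p.2, some c)
  have hnear : ∀ c ∈ H.centersAt v, #(near c) ≤ Fintype.card J * D + D * D := fun c hc => by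
    have hcD := hD c (mem_filter.1 hc).1
    refine (card_union_le _ _).trans (Nat.add_le_add ?_ ?_) <;> refine card_image_le.trans ?_
    · rw [card_product, card_univ]
      gcongr
    · rw [card_product]
      gcongr
  have hsub : ({e | H.Present τ η e ∧ ∃ c ∈ H.edgeType τ η e, v ∈ K c} :
      Finset (SparseEdge V J A)) ⊆ (H.centersAt v).biUnion near := by
    intro e he
    obtain ⟨hp, c, hc, hvc⟩ := (mem_filter_univ e).1 he
    have hjoins := hp.joins
    rw [Option.mem_def.1 hc] at hjoins
    obtain ⟨hcenter, htail, hhead⟩ := hjoins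
    refine mem_biUnion.2 ⟨c, mem_filter.2 ⟨hcenter, hvc⟩, mem_union.2 ?_⟩
    rcases e with ⟨j, a, x⟩ | ⟨x, y, σ⟩
    · have hτ := (present_inl hp).1
      rw [Option.mem_def.1 hc] at hτ
      subst hτ
      exact Or.inl (mem_image.2 ⟨(j, x), mem_product.2 ⟨mem_univ j, htail⟩, rfl⟩)
    · obtain rfl : σ = some c := hc
      exact Or.inr (mem_image.2 ⟨(x, y), mem_product.2 ⟨htail, hhead⟩, rfl⟩)
  exact card_image_le.trans <| (card_le_card hsub).trans <|
    (card_biUnion_le_card_mul _ _ _ hnear).trans <|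
      Nat.mul_le_mul_right _ (H.card_centersAt_le hL v)

end Overlap

theorem card_tailEdgesAt_le (v : V) :
    #(H.tailEdgesAt τ η v) ≤ Fintype.card J * Fintype.card A := by
  have hsub : ({e | H.Present τ η e ∧ e.isLeft ∧ tail e = v} : Finset (SparseEdge V J A)) ⊆
      (univ : Finset (J × A)).image fun p => Sum.inl (p.1, p.2, v) := by
    rintro (⟨j, a, x⟩ | e) he
    · obtain ⟨-, -, rfl⟩ := (mem_filter_univ _).1 he
      exact mem_image.2 ⟨(j, a), mem_univ _, rfl⟩
    · exact absurd ((mem_filter_univ _).1 he).2.1 Bool.false_ne_true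
  refine card_image_le.trans <| (card_le_card hsub).trans <| card_image_le.trans ?_
  rw [card_univ, Fintype.card_prod]

section Generic

variable [Field Kf] {F M : Finset V} (ν : V → Kf) {eid : SparseEdge V J A → ℕ} {I d : ℕ}

theorem isAdmissible_view_congr {w w' : SparseEdge V J A → Kf} {X : Set (Cell V)}
    (h : (H.view τ η d ν w F M).IsAdmissible X) : (H.view τ η d ν w' F M).IsAdmissible X :=
  ⟨h.subset_live, by simpa only [keys_view] using h.mem_succ_iff⟩

theorem natDegree_residuePoly_le (heid : ∀ e, eid e ≤ I) (X : Set (Cell V)) (c : V) :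
    (H.residuePoly τ η ν eid F M X c).natDegree ≤ I :=
  Polynomial.natDegree_sum_le_of_forall_le _ _ fun e _ =>
    (Polynomial.natDegree_monomial_le _).trans (heid e)

theorem prob_not_isGeneric_le [Fintype Kf] (heid : ∀ e, eid e ≤ I) :
    prob (fun α : Kf => ¬H.IsGeneric τ η d ν eid F M α) ≤
      (2 ^ #(M.biUnion H.keysAt) * Fintype.card V : ℕ) * (I / Fintype.card Kf) := by
  obtain ⟨𝒳, h𝒳, hcard⟩ := View.exists_finset_isAdmissible (Q := H.view τ η d ν 0 F M)
    fun b hb => zero_mem_keys_view (mem_ends_view.1 hb).1 (mem_ends_view.1 hb).2.1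
  rw [keys_view] at hcard
  calc prob (fun α : Kf => ¬H.IsGeneric τ η d ν eid F M α)
      ≤ prob fun α : Kf => ∃ p ∈ 𝒳 ×ˢ (univ : Finset V),
          H.residuePoly τ η ν eid F M p.1 p.2 ≠ 0 ∧
            (H.residuePoly τ η ν eid F M p.1 p.2).eval α = 0 := by
        refine prob_mono fun α hα => ?_
        unfold IsGeneric at hα
        push Not at hα
        obtain ⟨X, hX, c, heval, hne⟩ := hα
        exact ⟨(X, c), mem_product.2 ⟨(h𝒳 X).2 (H.isAdmissible_view_congr τ η ν hX), mem_univ c⟩,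
          hne, heval⟩
    _ ≤ #(𝒳 ×ˢ (univ : Finset V)) * (I / Fintype.card Kf) :=
        prob_exists_root_le _ _ fun p _ => H.natDegree_residuePoly_le τ η ν heid p.1 p.2
    _ ≤ _ := by
        rw [card_product, card_univ]
        gcongr

end Generic

end Hierarchy

section Hashing

variable {J A B : Type*} [Fintype J] [Fintype A] [Fintype B] {L : ℕ}

theorem one_sub_one_div_natCast_nonneg (m : ℕ) : 0 ≤ 1 - 1 / (m : ℝ) :=
  sub_nonneg.2 (by simpa using Nat.cast_inv_le_one m)

theorem prob_isolates_pair_ge [Nonempty A] [Nonempty B] {T : Finset (Option V)} {F : Finset V}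
    (hT : 2 * #T ≤ Fintype.card A) (hF : 2 * #F ≤ Fintype.card B) {σ : Option V} {x y : V}
    (hσ : σ ∉ T) (hx : x ∉ F) (hy : y ∉ F) (hxy : x ≠ y) :
    1 / (4 * Fintype.card B : ℕ) ≤ prob fun q : (Option V → A) × (V → B) =>
      (∀ c ∈ T, q.1 c ≠ q.1 σ) ∧ q.2 x = q.2 y ∧ ∀ v ∈ F, q.2 v ≠ q.2 x := by
  rw [prob_and_prod (fun g : Option V → A => ∀ c ∈ T, g c ≠ g σ)
    (fun h : V → B => h x = h y ∧ ∀ v ∈ F, h v ≠ h x)]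
  calc (1 : ℝ) / (4 * Fintype.card B : ℕ) = 1 / 2 * (1 / (2 * Fintype.card B)) := by
        push_cast
        ring
    _ ≤ _ := mul_le_mul (one_half_le_prob_hash_ne hT hσ) (prob_hash_pair_ge hF hxy hx hy)
        (by positivity) (prob_nonneg _)

theorem prob_not_isolates_le [DecidableEq J] [Nonempty A] [Nonempty B] {K : V → Finset V}
    {V₀ F M : Finset V} (hL : ∀ v, #{c ∈ V₀ | v ∈ K c} ≤ L) (hM : 2 * (#M * L) ≤ Fintype.card A)
    (hF : 2 * #F ≤ Fintype.card B) :
    prob (fun ω : J → (Option V → A) × (V → B) =>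
      ¬Isolates (fun j => (ω j).1) (fun j => (ω j).2) K V₀ F M) ≤
    (Fintype.card V * (Fintype.card V * (Fintype.card V + 1)) : ℕ) *
      (1 - 1 / (4 * Fintype.card B : ℕ)) ^ Fintype.card J := by
  set T : Finset (Option V) := {c ∈ V₀ | Affected K M c}.image some
  have hT : 2 * #T ≤ Fintype.card A :=
    (Nat.mul_le_mul_left 2 (card_image_le.trans (card_affected_le hL M))).trans hM
  set good : V × V × Option V → (Option V → A) × (V → B) → Prop := fun p q =>
    (∀ c ∈ T, q.1 c ≠ q.1 p.2.2) ∧ q.2 p.1 = q.2 p.2.1 ∧ ∀ v ∈ F, q.2 v ≠ q.2 p.1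
  set pairs : Finset (V × V × Option V) :=
    {p | p.1 ∉ F ∧ p.2.1 ∉ F ∧ p.1 ≠ p.2.1 ∧ ¬BadType K M p.2.2}
  have hpairs : ∀ p ∈ pairs, prob (fun ω : J → (Option V → A) × (V → B) => ∀ j, ¬good p (ω j)) ≤
      (1 - 1 / (4 * Fintype.card B : ℕ)) ^ Fintype.card J := by
    rintro ⟨x, y, σ⟩ hp
    obtain ⟨hx, hy, hxy, hσ⟩ := (mem_filter_univ _).1 hp
    have hσT : σ ∉ T := fun h => by
      obtain ⟨c, hc, rfl⟩ := mem_image.1 h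
      exact hσ ⟨c, rfl, (mem_filter.1 hc).2⟩
    rw [prob_forall_coord fun q => ¬good (x, y, σ) q, prob_not]
    gcongr
    · exact sub_nonneg.2 (prob_le_one _)
    · exact prob_isolates_pair_ge hT hF hσT hx hy hxy
  calc _ ≤ prob fun ω : J → (Option V → A) × (V → B) => ∃ p ∈ pairs, ∀ j, ¬good p (ω j) := by
        refine prob_mono fun ω hω => ?_
        unfold Isolates at hω
        push Not at hω
        obtain ⟨x, y, σ, hx, hy, hxy, hσ, hj⟩ := hω
        refine ⟨(x, y, σ), (mem_filter_univ _).2 ⟨hx, hy, hxy, hσ⟩, fun j ⟨hτ, hη, hηF⟩ => ?_⟩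
        obtain ⟨c, hc, haff, heq⟩ := hj j hη hηF
        exact hτ (some c) (mem_image_of_mem _ (mem_filter.2 ⟨hc, haff⟩)) heq
    _ ≤ #pairs * _ := prob_exists_mem_le pairs _ hpairs
    _ ≤ _ := by
      gcongr
      · exact pow_nonneg (one_sub_one_div_natCast_nonneg _) _
      · exact (card_le_univ _).trans (by simp)

theorem prob_forall_hits_le [Nonempty B] {ι : Type*} [Fintype ι] [DecidableEq ι] {F : Finset V}
    (hF : 2 * #F ≤ Fintype.card B) (a : B) :
    prob (fun φ : ι → V → B => ∀ h, ∃ v ∈ F, φ h v = a) ≤ (1 / 2) ^ Fintype.card ι := by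
  rw [prob_forall_coord fun q : V → B => ∃ v ∈ F, q v = a]
  exact pow_le_pow_left₀ (prob_nonneg _) (prob_hash_hits_le hF a) _

theorem prob_exists_large_missed_le [Nonempty B] {ι κ : Type*} [Fintype ι] [DecidableEq ι]
    [Fintype κ] {d : ℕ} (N : κ → Finset V) (a : B) :
    prob (fun φ : ι → V → B =>
        ∃ h x, Fintype.card B * d < #(N x) ∧ ∀ v ∈ N x, φ h v ≠ a) ≤
      (Fintype.card ι * Fintype.card κ : ℕ) * (1 / 2) ^ d := by
  set large : Finset (ι × κ) := {p | Fintype.card B * d < #(N p.2)}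
  have hlarge : ∀ p ∈ large, prob (fun φ : ι → V → B => ∀ v ∈ N p.2, φ p.1 v ≠ a) ≤
      (1 / 2) ^ d := by
    rintro ⟨h, x⟩ hp
    rw [prob_coord h fun q : V → B => ∀ v ∈ N x, q v ≠ a, prob_forall_mem (N x) (· ≠ a), prob_ne]
    refine le_trans ?_ (one_sub_inv_pow_mul_le (Fintype.card_pos (α := B)) d)
    exact pow_le_pow_of_le_one (one_sub_one_div_natCast_nonneg _) (sub_le_self _ (by positivity))
      ((mem_filter_univ (h, x)).1 hp).le
  calc _ ≤ prob fun φ : ι → V → B => ∃ p ∈ large, ∀ v ∈ N p.2, φ p.1 v ≠ a :=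
        prob_mono fun φ ⟨h, x, hx, hmiss⟩ => ⟨(h, x), (mem_filter_univ _).2 hx, hmiss⟩
    _ ≤ #large * _ := prob_exists_mem_le large _ hlarge
    _ ≤ _ := by
      gcongr
      exact (card_le_univ _).trans (Fintype.card_prod ι κ).le

end Hashing

end

/-! ### Labels and decoder -/

noncomputable section

open SimpleGraph

/-- The label of a vertex. The edge with number `i` has the weight `base ^ i`, and `skipped` are the
indices of the hierarchies built without controlling how often the vertex is visited. -/
structure Label (V E Kf ι : Type*) (d : ℕ) where
  base : Kf
  vertex : V
  skipped : Finset ι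
  facts : ι → Facts V E Kf d

namespace Label

variable {V E Kf ι : Type*} [Field Kf] {d : ℕ} (ν : V → Kf) (eid : E → ℕ)

/-- The decoder: `s` and `t` are declared connected unless some hierarchy controlling the visits of
all faults yields a separation. -/
def Connects (s t : Label V E Kf ι d) (F : Finset (Label V E Kf ι d)) : Prop :=
  ¬∃ h, (∀ l ∈ F, h ∉ l.skipped) ∧
    (View.merge vertex (fun l => l.facts h) F (insert s (insert t F))).Separates ν
      (fun e => s.base ^ eid e) (s.facts h).cell (t.facts h).cell

variable [Fintype V] {G : SimpleGraph V} {K : V → Finset V} {V₀ F : Finset V} {ι : Type*}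
  [Fintype ι] {S : ι → Finset V} {visits : ℕ} {J A B : Type*} [Fintype J] [Fintype A]
  (H : ∀ h, Hierarchy G K V₀ (S h) visits) (τ : J → Option V → A) (η : J → V → B) (d : ℕ)
  (eid : SparseEdge V J A → ℕ) (α : Kf)

/-- The label of `v` determined by the hierarchies, the hash functions and the base `α`. -/
def ofHierarchies (v : V) : Label V (SparseEdge V J A) Kf ι d where
  base := α
  vertex := v
  skipped := {h | v ∈ S h}
  facts h := (H h).facts τ η d ν (fun e => α ^ eid e) v

variable {ν eid d H τ η α} {s t : V}

theorem connects_ofHierarchies_iff_forall_not_separates :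
    Connects ν eid (ofHierarchies ν H τ η d eid α s) (ofHierarchies ν H τ η d eid α t)
        (F.image (ofHierarchies ν H τ η d eid α)) ↔
      ∀ h, Disjoint F (S h) →
        ¬((H h).view τ η d ν (fun e => α ^ eid e) F (insert s (insert t F))).Separates ν
          (fun e => α ^ eid e) ((H h).cell s) ((H h).cell t) := by
  have hskip : ∀ h, (∀ l ∈ F.image (ofHierarchies ν H τ η d eid α), h ∉ l.skipped) ↔
      Disjoint F (S h) := fun h => by
    rw [forall_mem_image, Finset.disjoint_left]
    exact forall₂_congr fun v _ => not_congr (mem_filter_univ h)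
  rw [Connects, ← image_insert, ← image_insert, not_exists]
  simp only [View.merge_image, hskip, not_and]
  rfl

theorem connects_ofHierarchies_iff_reachable [CharP Kf 2] (hν : Function.Injective ν)
    (heid : Function.Injective eid)
    (hK : ∀ c, ∀ x ∈ K c, ∀ y ∈ K c, (restrict G ↑(K c)).Reachable x y) (hs : s ∉ F) (ht : t ∉ F)
    (hex : ∃ h, Disjoint F (S h)) (hiso : Isolates τ η K V₀ F (insert s (insert t F)))
    (hd : ∀ h, ∀ c ∈ (H h).centers, #F + #(outerNbrs G (K c)) < d)
    (hα : ∀ h, (H h).IsGeneric τ η d ν eid F (insert s (insert t F)) α) :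
    Connects ν eid (ofHierarchies ν H τ η d eid α s) (ofHierarchies ν H τ η d eid α t)
        (F.image (ofHierarchies ν H τ η d eid α)) ↔
      (avoiding G F).Reachable s t := by
  have hsM : s ∈ insert s (insert t F) := mem_insert_self _ _
  have htM : t ∈ insert s (insert t F) := mem_insert_of_mem (mem_insert_self _ _)
  have hFM : F ⊆ insert s (insert t F) := (subset_insert _ _).trans (subset_insert _ _)
  rw [connects_ofHierarchies_iff_forall_not_separates]
  constructor
  · obtain ⟨h, hFS⟩ := hex
    intro hsep
    by_contra hst
    exact hsep h hFS <|
      Hierarchy.separates_of_not_reachable hν hK hFS hFM (hd h) hsM htM hs ht hst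
  · exact fun hst h hFS =>
      Hierarchy.not_separates_of_reachable hν heid hFS hiso (hd h) (hα h) hsM htM hs hst

end Label

end

/-! ### Encoding of labels -/

noncomputable section

/-- The elements of `s` can be told apart by strings of `b` bits. -/
def FitsIn {X : Type*} (s : Set X) (b : ℕ) : Prop := ∃ enc : X → Fin b → Bool, Set.InjOn enc s

namespace FitsIn

variable {X Y T ι : Type*} {s s' : Set X} {t : Set Y} {a b : ℕ}

theorem of_injOn [Fintype T] (hT : Fintype.card T ≤ 2 ^ b) {enc : X → T} (h : Set.InjOn enc s) :
    FitsIn s b := by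
  obtain ⟨j⟩ := Function.Embedding.nonempty_of_card_le (β := Fin b → Bool)
    (hT.trans (by simp))
  exact ⟨j ∘ enc, j.injective.comp_injOn h⟩

theorem of_card_le [Fintype X] (h : Fintype.card X ≤ 2 ^ b) : FitsIn s b :=
  of_injOn h (Set.injOn_id s)

theorem Iio_two_pow (b : ℕ) : FitsIn (Set.Iio (2 ^ b)) b := by
  refine of_injOn (enc := fun x => Fin.ofNat (2 ^ b) x) (Fintype.card_fin _).le
    fun x hx y hy h => ?_
  have hmod := congrArg Fin.val h
  simpa only [Fin.ofNat, Nat.mod_eq_of_lt hx, Nat.mod_eq_of_lt hy] using hmod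

theorem mono (h : FitsIn s a) (hs : s' ⊆ s) (hab : a ≤ b) : FitsIn s' b := by
  obtain ⟨enc, henc⟩ := h
  exact of_injOn (by simpa using Nat.pow_le_pow_right two_pos hab) (henc.mono hs)

theorem preimage (h : FitsIn s b) {g : Y → X} (hg : Function.Injective g) :
    FitsIn (g ⁻¹' s) b := by
  obtain ⟨enc, henc⟩ := h
  exact ⟨enc ∘ g, henc.comp hg.injOn (Set.mapsTo_preimage g s)⟩

theorem prod (hs : FitsIn s a) (ht : FitsIn t b) : FitsIn (s ×ˢ t) (a + b) := by
  obtain ⟨encs, hs⟩ := hs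
  obtain ⟨enct, ht⟩ := ht
  refine of_injOn (enc := Prod.map encs enct) (by simp [pow_add]) ?_
  exact hs.prodMap ht

theorem pi [Fintype ι] (h : FitsIn s b) :
    FitsIn (Set.univ.pi fun _ : ι => s) (Fintype.card ι * b) := by
  obtain ⟨enc, henc⟩ := h
  refine of_injOn (enc := fun z i => enc (z i)) (by simp [mul_comm _ b, pow_mul])
    fun x hx y hy he => funext fun i => ?_
  exact henc (hx i trivial) (hy i trivial) (congrFun he i)

theorem finset (h : FitsIn s b) (m : ℕ) :
    FitsIn {u : Finset X | #u ≤ m ∧ ↑u ⊆ s} (m * (b + 1)) := by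
  obtain ⟨enc, henc⟩ := h
  refine of_injOn (enc := fun u (i : Fin m) => (u.toList[(i : ℕ)]?).map enc) ?_ ?_
  · rw [Fintype.card_fun, Fintype.card_fin, mul_comm, pow_mul]
    gcongr
    rw [Fintype.card_option, Fintype.card_fun, Fintype.card_fin, Fintype.card_bool, pow_succ]
    have := Nat.one_le_two_pow (n := b)
    omega
  · have hsub : ∀ u v : Finset X, (#u ≤ m ∧ ↑u ⊆ s) → ↑v ⊆ s →
        (fun i : Fin m => (u.toList[(i : ℕ)]?).map enc) =
          (fun i : Fin m => (v.toList[(i : ℕ)]?).map enc) → u ⊆ v := by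
      rintro u v ⟨hum, hus⟩ hvs he x hx
      obtain ⟨i, hi, rfl⟩ := List.getElem_of_mem (mem_toList.2 hx)
      have hget := congrFun he ⟨i, hi.trans_le (u.length_toList.trans_le hum)⟩
      simp only [List.getElem?_eq_getElem hi, Option.map_some] at hget
      obtain ⟨y, hy, hxy⟩ := Option.map_eq_some_iff.1 hget.symm
      have hyv : y ∈ v := mem_toList.1 (List.mem_of_getElem? hy)
      rwa [← henc (hvs hyv) (hus hx) hxy]
    exact fun u hu v hv he => Subset.antisymm (hsub u v hu hv.2 he) (hsub v u hv hu.2 he.symm)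

theorem exists_leftInvOn [Nonempty X] (h : FitsIn s b) :
    ∃ (enc : X → Fin b → Bool) (dec : (Fin b → Bool) → X), Set.LeftInvOn dec enc s := by
  obtain ⟨enc, henc⟩ := h
  exact ⟨enc, Function.invFunOn enc s, henc.leftInvOn_invFunOn⟩

end FitsIn

variable {V E Kf ι : Type*} {d : ℕ}

/-- All positions in `x` have index at most `N`, and there are at most `p` prefix records and at
most `q` records of every other kind. -/
structure Facts.IsBounded (N p q : ℕ) (x : Facts V E Kf d) : Prop where
  cell : x.cell.2 ≤ N
  prefixes : #x.prefixes ≤ p ∧ ∀ r ∈ x.prefixes, r.cell.2 ≤ N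
  occurrences : #x.occurrences ≤ q ∧ ∀ z ∈ x.occurrences, z.2 ≤ N
  ends : #x.ends ≤ q ∧ ∀ z ∈ x.ends, z.2 ≤ N
  nbrs : #x.nbrs ≤ q ∧ ∀ r ∈ x.nbrs, r.cell.2 ≤ N
  tailEdges : #x.tailEdges ≤ q ∧ ∀ r ∈ x.tailEdges, r.tailCell.2 ≤ N ∧ r.headCell.2 ≤ N
  typeEdges : #x.typeEdges ≤ q ∧ ∀ r ∈ x.typeEdges, r.tailCell.2 ≤ N ∧ r.headCell.2 ≤ N

/-- The number of bits used for a position. -/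
def cellBits (lam : ℕ) : ℕ := lam + (2 * lam + 1)

/-- The number of bits used for a record that is not a prefix record, if edges use `e` bits. -/
def recordBits (lam e : ℕ) : ℕ := e + (cellBits lam + (lam + cellBits lam))

/-- The number of bits used for the facts about one hierarchy, if field elements use `k` bits. -/
def factBits (lam e k d p q : ℕ) : ℕ :=
  cellBits lam + (p * (cellBits lam + d * k + 1) + 5 * (q * (recordBits lam e + 1)))

section Records

variable [Fintype V] [Fintype E] [Fintype Kf] {lam e k N p q : ℕ}
  (hV : Fintype.card V ≤ 2 ^ lam) (hE : Fintype.card E ≤ 2 ^ e) (hK : Fintype.card Kf ≤ 2 ^ k)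
  (hN : N < 2 ^ (2 * lam + 1))

include hV hN

theorem fitsIn_cell : FitsIn {z : Cell V | z.2 ≤ N} (cellBits lam) :=
  ((FitsIn.of_card_le (s := Set.univ) hV).prod (FitsIn.Iio_two_pow (2 * lam + 1))).mono
    (fun _ hz => ⟨trivial, lt_of_le_of_lt hz hN⟩) le_rfl

theorem fitsIn_nbrRecord : FitsIn {r : NbrRecord V | r.cell.2 ≤ N} (recordBits lam e) := by
  have hv := FitsIn.of_card_le (s := Set.univ) hV
  have hinj : Function.Injective fun r : NbrRecord V => (r.cluster, r.vertex, r.cell) := by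
    rintro ⟨⟩ ⟨⟩ h
    simpa using h
  refine ((hv.prod (hv.prod (fitsIn_cell hV hN))).preimage hinj).mono
    (fun r hr => ⟨trivial, trivial, hr⟩) ?_
  unfold recordBits cellBits
  omega

include hE in
theorem fitsIn_edgeRecord :
    FitsIn {r : EdgeRecord V E | r.tailCell.2 ≤ N ∧ r.headCell.2 ≤ N} (recordBits lam e) := by
  have hv := FitsIn.of_card_le (s := Set.univ) hV
  have he := FitsIn.of_card_le (s := Set.univ) hE
  have hz := fitsIn_cell hV hN
  have hinj : Function.Injective fun r : EdgeRecord V E =>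
      (r.edge, r.tailCell, r.head, r.headCell) := by
    rintro ⟨⟩ ⟨⟩ h
    simpa using h
  exact ((he.prod (hz.prod (hv.prod hz))).preimage hinj).mono
    (fun r hr => ⟨trivial, hr.1, trivial, hr.2⟩) le_rfl

include hK in
theorem fitsIn_prefixRecord :
    FitsIn {r : PrefixRecord V Kf d | r.cell.2 ≤ N} (cellBits lam + d * k) := by
  have hsketch := (FitsIn.of_card_le (s := Set.univ) hK).pi (ι := Fin d)
  have hinj : Function.Injective fun r : PrefixRecord V Kf d => (r.cell, r.sketch) := by
    rintro ⟨⟩ ⟨⟩ h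
    simpa using h
  exact (((fitsIn_cell hV hN).prod hsketch).preimage hinj).mono
    (fun r hr => ⟨hr, fun _ _ => trivial⟩) (by simp)

include hE hK in
theorem fitsIn_facts :
    FitsIn {x : Facts V E Kf d | x.IsBounded N p q} (factBits lam e k d p q) := by
  have hz := fitsIn_cell hV hN
  have hcells := (hz.mono (b := recordBits lam e) subset_rfl (by unfold recordBits; omega)).finset q
  have hedges := (fitsIn_edgeRecord hV hE hN).finset q
  have hinj : Function.Injective fun x : Facts V E Kf d =>
      (x.cell, x.prefixes, x.occurrences, x.ends, x.nbrs, x.tailEdges, x.typeEdges) := by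
    rintro ⟨⟩ ⟨⟩ h
    simpa using h
  refine ((hz.prod (((fitsIn_prefixRecord (d := d) hV hK hN).finset p).prod (hcells.prod
    (hcells.prod (((fitsIn_nbrRecord (e := e) hV hN).finset q).prod
      (hedges.prod hedges)))))).preimage hinj).mono (fun x hx => ?_) ?_
  · exact ⟨hx.cell, hx.prefixes, hx.occurrences, hx.ends, hx.nbrs, hx.tailEdges, hx.typeEdges⟩
  · unfold factBits
    omega

include hE hK in
theorem fitsIn_label [Fintype ι] :
    FitsIn {l : Label V E Kf ι d | ∀ h, (l.facts h).IsBounded N p q}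
      (k + lam + Fintype.card ι * (1 + factBits lam e k d p q)) := by
  have hv := FitsIn.of_card_le (s := Set.univ) hV
  have hk := FitsIn.of_card_le (s := Set.univ) hK
  have hskip : FitsIn (Set.univ : Set (Finset ι)) (Fintype.card ι) :=
    FitsIn.of_card_le Fintype.card_finset.le
  have hinj : Function.Injective fun l : Label V E Kf ι d =>
      (l.base, l.vertex, l.skipped, l.facts) := by
    rintro ⟨⟩ ⟨⟩ h
    simpa using h
  exact ((hk.prod (hv.prod (hskip.prod (fitsIn_facts hV hE hK hN).pi))).preimage hinj).mono
    (fun l hl => ⟨trivial, trivial, trivial, fun h _ => hl h⟩) (by linarith)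

end Records

section Bounds

variable [Fintype V] [Fintype ι] [Field Kf] {G : SimpleGraph V} {K : V → Finset V} {V₀ : Finset V}
  {S : ι → Finset V} {visits L D p q : ℕ} {J A B : Type*} [Fintype J] [Fintype A]

namespace Hierarchy

variable {S : Finset V} (H : Hierarchy G K V₀ S visits) (τ : J → Option V → A) (η : J → V → B)

theorem cell_snd_le (v : V) : (H.cell v).2 ≤ Fintype.card V ^ 2 :=
  (H.cell_lt_length v).le.trans (H.length_tour_le _)

theorem snd_le_of_mem_keysAt {v : V} {z : Cell V} (hz : z ∈ H.keysAt v) :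
    z.2 ≤ Fintype.card V ^ 2 :=
  (H.le_length_of_mem_keysAt hz).trans (H.length_tour_le _)

theorem isBounded_facts (hL : ∀ v, #{c ∈ V₀ | v ∈ K c} ≤ L)
    (hD : ∀ c ∈ H.centers, #(outerNbrs G (K c)) ≤ D) (ν : V → Kf) (w : SparseEdge V J A → Kf)
    (v : V) :
    (H.facts τ η d ν w v).IsBounded (Fintype.card V ^ 2) (2 * visits + 2 * L)
      (visits + L + L * D + Fintype.card J * Fintype.card A +
        L * (Fintype.card J * D + D * D)) where
  cell := H.cell_snd_le v
  prefixes := ⟨card_image_le.trans (H.card_keysAt_le hL v),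
    forall_mem_image.2 fun _ hz => H.snd_le_of_mem_keysAt hz⟩
  occurrences := by
    refine ⟨?_, fun z hz => H.snd_le_of_mem_keysAt (mem_union_left _ (mem_union_left _ hz))⟩
    dsimp only [facts]
    split_ifs with hv
    · exact Nat.zero_le _
    · exact (H.card_occurrences_le hv).trans (by omega)
  ends := ⟨(H.card_endsAt_le hL v).trans (by omega),
    fun z hz => H.snd_le_of_mem_keysAt (mem_union_right _ (mem_union_left _ hz))⟩
  nbrs := ⟨(H.card_nbrsAt_le hL hD v).trans (by omega), fun r hr => by
    obtain ⟨c, -, hr⟩ := mem_biUnion.1 hr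
    obtain ⟨x, -, rfl⟩ := mem_image.1 hr
    exact H.cell_snd_le x⟩
  tailEdges := ⟨(H.card_tailEdgesAt_le τ η v).trans (by omega),
    forall_mem_image.2 fun _ _ => ⟨H.cell_snd_le _, H.cell_snd_le _⟩⟩
  typeEdges := ⟨(H.card_typeEdgesAt_le τ η hL hD v).trans (by omega),
    forall_mem_image.2 fun _ _ => ⟨H.cell_snd_le _, H.cell_snd_le _⟩⟩

end Hierarchy

end Bounds

end

/-! ### Parameters and random choices -/

noncomputable section

open SimpleGraph

section Parameters

variable (g lam f : ℕ)

/-- A bound for the number of clusters that contain a given vertex. -/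
def overlap : ℕ := lam + 1

/-- A bound for the number of visits of the tours of a hierarchy to a vertex not in `S`. -/
def tourVisits : ℕ := overlap lam + overlap lam * (7 * lam + 9 + 2)

/-- The number of hierarchies, each for its own random set `S`. -/
def numHierarchies : ℕ := g * lam

/-- A bound for the number of outer neighbours of the clusters of a hierarchy. -/
def nbrBound : ℕ := 2 * f * ((2 * g + 1) * lam)

/-- The number of colours for the types of shortcuts. -/
def numColors : ℕ := 2 * (3 * f * overlap lam)

/-- The number of pairs of hash functions that sample the sparse edges. -/
def numSamples : ℕ := 8 * f * ((g + 4) * lam)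

/-- The number of bits of a sparse edge. -/
def edgeBits : ℕ := (g + 15) * lam

/-- A bound for the number of keys known to a query. -/
def keyBound : ℕ := 3 * f * (2 * tourVisits lam + 2 * overlap lam)

/-- The number of bits of a field element. -/
def fieldBits : ℕ := g * lam + keyBound lam f + lam + edgeBits g lam + g * lam

/-- The number of power sums in a sketch. -/
def sketchLength : ℕ := f + nbrBound g lam f + 1

/-- A bound for the number of records about one hierarchy that are not prefix records. -/
def recordBound : ℕ :=
  tourVisits lam + overlap lam + overlap lam * nbrBound g lam f +
      numSamples g lam f * numColors lam f +
    overlap lam * (numSamples g lam f * nbrBound g lam f + nbrBound g lam f * nbrBound g lam f)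

/-- The number of bits of a label. -/
def labelBits : ℕ :=
  fieldBits g lam f + lam + numHierarchies g lam *
    (1 + factBits lam (edgeBits g lam) (fieldBits g lam f) (sketchLength g lam f)
      (2 * tourVisits lam + 2 * overlap lam) (recordBound g lam f))

instance [NeZero f] : NeZero (numColors lam f) := ⟨by simp [numColors, overlap, NeZero.ne f]⟩

end Parameters

variable {V : Type*} [Fintype V] {g lam f : ℕ}

theorem mul_mul_add_one_le_two_pow {n : ℕ} (hlam : 1 ≤ lam) (hn : n ≤ 2 ^ lam) :
    n * (n * (n + 1)) ≤ 2 ^ (4 * lam) := by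
  have hsucc : n + 1 ≤ 2 ^ (2 * lam) := by
    have htwo : 2 ^ 1 ≤ 2 ^ lam := Nat.pow_le_pow_right two_pos hlam
    rw [two_mul, pow_add]
    nlinarith
  calc n * (n * (n + 1)) ≤ 2 ^ lam * (2 ^ lam * 2 ^ (2 * lam)) := by gcongr
    _ = 2 ^ (4 * lam) := by ring

theorem card_sparseEdge_le (hlam : 1 ≤ lam) (hV : Fintype.card V ≤ 2 ^ lam) (hf : f ≤ 2 ^ lam) :
    Fintype.card (SparseEdge V (Fin (numSamples g lam f)) (Fin (numColors lam f))) ≤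
      2 ^ edgeBits g lam := by
  have hsamples : numSamples g lam f ≤ 2 ^ 3 * 2 ^ lam * 2 ^ ((g + 4) * lam) := by
    have := (Nat.lt_two_pow_self (n := (g + 4) * lam)).le
    unfold numSamples
    gcongr
    norm_num
  have hcolors : numColors lam f ≤ 2 ^ 3 * 2 ^ lam * 2 ^ lam := by
    calc numColors lam f ≤ 2 * (3 * 2 ^ lam * 2 ^ lam) := by
          unfold numColors
          gcongr
          exact Nat.lt_two_pow_self
      _ ≤ 2 ^ 3 * 2 ^ lam * 2 ^ lam := by
          rw [mul_assoc, mul_assoc, ← mul_assoc]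
          gcongr
          norm_num
  calc Fintype.card (SparseEdge V (Fin (numSamples g lam f)) (Fin (numColors lam f)))
      = numSamples g lam f * (numColors lam f * Fintype.card V) +
          Fintype.card V * (Fintype.card V * (Fintype.card V + 1)) := by simp
    _ ≤ 2 ^ 3 * 2 ^ lam * 2 ^ ((g + 4) * lam) * (2 ^ 3 * 2 ^ lam * 2 ^ lam * 2 ^ lam) +
          2 ^ (4 * lam) := by
        gcongr
        exact mul_mul_add_one_le_two_pow hlam hV
    _ = 2 ^ (6 + 4 * lam + (g + 4) * lam) + 2 ^ (4 * lam) := by ring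
    _ ≤ 2 ^ (6 + 4 * lam + (g + 4) * lam) + 2 ^ (6 + 4 * lam + (g + 4) * lam) := by
        gcongr
        · norm_num
        · omega
    _ = 2 ^ (7 + 4 * lam + (g + 4) * lam) := by ring
    _ ≤ 2 ^ edgeBits g lam := by
        refine Nat.pow_le_pow_right two_pos ?_
        unfold edgeBits
        nlinarith

theorem exists_level_hierarchies (G : SimpleGraph V) (hV : Fintype.card V ≤ 2 ^ lam) :
    ∃ lev : V → ℕ, (∀ v, #{c ∈ levelReps G lev | v ∈ levelComp G lev c} ≤ overlap lam) ∧
      ∀ S, Nonempty (Hierarchy G (levelComp G lev) (levelReps G lev) S (tourVisits lam)) := by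
  obtain ⟨lev, hlev⟩ := exists_isOptimalLevel G
  have hL : ∀ x, lev x < overlap lam := fun x =>
    Nat.lt_succ_of_le <|
      (Nat.pow_le_pow_iff_right one_lt_two).1 ((hlev.two_pow_level_le_card x).trans hV)
  have hforest : ∀ i, ∃ T ≤ upTo G lev i,
      (∀ x y, lev x = i → lev y = i → (upTo G lev i).Reachable x y → T.Reachable x y) ∧
        ∀ v, deg T v ≤ 7 * lam + 9 := fun i => by
    by_cases hi : i ≤ lam
    · obtain ⟨T, hT, hconn, hdeg⟩ :=
        hlev.exists_lowDegree_forest (hV.trans_lt (Nat.pow_lt_pow_succ one_lt_two)) i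
      exact ⟨T, hT, hconn, fun v => by have := hdeg v; omega⟩
    · refine ⟨⊥, bot_le, fun x _ hx => ?_, fun v => by simp [deg]⟩
      exact absurd (Nat.lt_succ_iff.1 (hx ▸ hL x)) hi
  choose T hT hconn hdeg using hforest
  exact ⟨lev, card_levelReps_containing_le hL, fun S => nonempty_hierarchy T hT hconn hdeg hL⟩

theorem two_pow_mul_one_half_pow (a b : ℕ) : (2 : ℝ) ^ a * (1 / 2) ^ (a + b) = (1 / 2) ^ b := by
  rw [pow_add, ← mul_assoc, ← mul_pow, mul_one_div_cancel two_ne_zero, one_pow, one_mul]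

/-- The random choices: a hash function per hierarchy for its set `S`, the hash functions that
sample the sparse edges, and the base of the weights. -/
abbrev Seed (V Kf : Type*) (g lam f : ℕ) :=
  (Fin (numHierarchies g lam) → V → Fin (2 * f)) ×
    (Fin (numSamples g lam f) → (Option V → Fin (numColors lam f)) × (V → Fin (2 * f))) × Kf

namespace Seed

variable {Kf : Type*} [NeZero f]

/-- The set `S` of the hierarchy `h`: every vertex belongs to it with probability `1 / (2 * f)`. -/
def sample (ω : Seed V Kf g lam f) (h : Fin (numHierarchies g lam)) : Finset V :=
  {v | ω.1 h v = 0}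

variable {G : SimpleGraph V} {K : V → Finset V} {V₀ F M : Finset V}

section Sampling

variable [Fintype Kf]

theorem prob_forall_not_disjoint_sample_le (hF : #F ≤ f) :
    prob (fun ω : Seed V Kf g lam f => ¬∃ h, Disjoint F (ω.sample h)) ≤ (1 / 2) ^ (g * lam) := by
  refine prob_prod_le_of_forall_snd (by positivity) fun _ => ?_
  have hhits := prob_forall_hits_le (ι := Fin (numHierarchies g lam)) (F := F)
    (B := Fin (2 * f)) (by rw [Fintype.card_fin]; omega) 0
  rw [Fintype.card_fin] at hhits
  refine (prob_mono fun φ hφ h => ?_).trans hhits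
  obtain ⟨v, hv, hvS⟩ := Finset.not_disjoint_iff.1 (not_exists.1 hφ h)
  exact ⟨v, hv, (mem_filter_univ v).1 hvS⟩

theorem prob_exists_many_outerNbrs_le (hV : Fintype.card V ≤ 2 ^ lam) (G : SimpleGraph V)
    (K : V → Finset V) :
    prob (fun ω : Seed V Kf g lam f => ¬∀ h c, Disjoint (outerNbrs G (K c)) (ω.sample h) →
      #(outerNbrs G (K c)) ≤ nbrBound g lam f) ≤ (1 / 2) ^ (g * lam) := by
  refine prob_prod_le_of_forall_snd (by positivity) fun _ => ?_
  have hmissed := prob_exists_large_missed_le (ι := Fin (numHierarchies g lam))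
    (d := (2 * g + 1) * lam) (fun c => outerNbrs G (K c)) (0 : Fin (2 * f))
  simp only [Fintype.card_fin] at hmissed
  refine (prob_mono fun φ hφ => ?_).trans (hmissed.trans ?_)
  · push Not at hφ
    obtain ⟨h, c, hdisj, hlt⟩ := hφ
    exact ⟨h, c, hlt, fun v hv h0 =>
      Finset.disjoint_left.1 hdisj hv ((mem_filter_univ v).2 h0)⟩
  · have hcard : numHierarchies g lam * Fintype.card V ≤ 2 ^ (g * lam + lam) := by
      rw [pow_add]
      exact Nat.mul_le_mul Nat.lt_two_pow_self.le hV
    calc ((numHierarchies g lam * Fintype.card V : ℕ) : ℝ) * (1 / 2) ^ ((2 * g + 1) * lam)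
        ≤ 2 ^ (g * lam + lam) * (1 / 2) ^ (g * lam + lam + g * lam) := by
          rw [show (2 * g + 1) * lam = g * lam + lam + g * lam by ring]
          gcongr
          exact mod_cast hcard
      _ = (1 / 2) ^ (g * lam) := two_pow_mul_one_half_pow _ _

theorem prob_not_isolates_seed_le (hlam : 1 ≤ lam) (hV : Fintype.card V ≤ 2 ^ lam)
    (hL : ∀ v, #{c ∈ V₀ | v ∈ K c} ≤ overlap lam) (hF : #F ≤ f) (hM : #M ≤ 3 * f) :
    prob (fun ω : Seed V Kf g lam f =>
      ¬Isolates (fun j => (ω.2.1 j).1) (fun j => (ω.2.1 j).2) K V₀ F M) ≤ (1 / 2) ^ (g * lam) := by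
  refine prob_prod_le_of_forall_fst (by positivity) fun _ =>
    prob_prod_le_of_forall_snd (by positivity) fun _ => ?_
  have hfail := prob_not_isolates_le (J := Fin (numSamples g lam f))
    (A := Fin (numColors lam f)) (B := Fin (2 * f)) (F := F) (M := M) hL
    (by rw [Fintype.card_fin]; unfold numColors; gcongr) (by rw [Fintype.card_fin]; omega)
  simp only [Fintype.card_fin] at hfail
  refine hfail.trans ?_
  calc ((Fintype.card V * (Fintype.card V * (Fintype.card V + 1)) : ℕ) : ℝ) *
        (1 - 1 / (4 * (2 * f) : ℕ)) ^ numSamples g lam f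
      ≤ 2 ^ (4 * lam) * (1 / 2) ^ ((g + 4) * lam) := by
        gcongr
        · exact pow_nonneg (one_sub_one_div_natCast_nonneg _) _
        · exact mod_cast mul_mul_add_one_le_two_pow hlam hV
        · rw [show numSamples g lam f = 4 * (2 * f) * ((g + 4) * lam) by unfold numSamples; ring]
          exact one_sub_inv_pow_mul_le (by have := NeZero.pos f; omega) _
    _ = (1 / 2) ^ (g * lam) := by
        rw [show (g + 4) * lam = 4 * lam + g * lam by ring, two_pow_mul_one_half_pow]

end Sampling

variable [Field Kf] {d : ℕ}
  (H : ∀ S, Hierarchy G K V₀ S (tourVisits lam)) (ν : V → Kf)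
  (eid : SparseEdge V (Fin (numSamples g lam f)) (Fin (numColors lam f)) → ℕ)

/-- The labelling determined by the random choices. -/
def label (d : ℕ) (ω : Seed V Kf g lam f) :
    V → Label V (SparseEdge V (Fin (numSamples g lam f)) (Fin (numColors lam f))) Kf
      (Fin (numHierarchies g lam)) d :=
  Label.ofHierarchies ν (fun h => H (ω.sample h)) (fun j => (ω.2.1 j).1) (fun j => (ω.2.1 j).2) d
    eid ω.2.2

/-- The random choices suit the query with faults `F` and vertices `M`. -/
structure IsGood (d : ℕ) (F M : Finset V) (ω : Seed V Kf g lam f) : Prop where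
  exists_disjoint : ∃ h, Disjoint F (ω.sample h)
  card_outerNbrs_le : ∀ h c, Disjoint (outerNbrs G (K c)) (ω.sample h) →
    #(outerNbrs G (K c)) ≤ nbrBound g lam f
  isolates : Isolates (fun j => (ω.2.1 j).1) (fun j => (ω.2.1 j).2) K V₀ F M
  isGeneric : ∀ h, (H (ω.sample h)).IsGeneric (fun j => (ω.2.1 j).1) (fun j => (ω.2.1 j).2) d ν eid
    F M ω.2.2

variable {H ν eid}

theorem IsGood.isBounded_label {ω : Seed V Kf g lam f} (hω : ω.IsGood H ν eid d F M)
    (hL : ∀ v, #{c ∈ V₀ | v ∈ K c} ≤ overlap lam) (v : V)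
    (h : Fin (numHierarchies g lam)) :
    ((ω.label H ν eid d v).facts h).IsBounded (Fintype.card V ^ 2)
      (2 * tourVisits lam + 2 * overlap lam) (recordBound g lam f) := by
  have hfacts := (H (ω.sample h)).isBounded_facts (fun j => (ω.2.1 j).1) (fun j => (ω.2.1 j).2)
    (d := d) hL
    (fun c hc => hω.card_outerNbrs_le h c ((H (ω.sample h)).disjoint_outerNbrs c hc)) ν
    (fun e => ω.2.2 ^ eid e) v
  rw [Fintype.card_fin, Fintype.card_fin] at hfacts
  exact hfacts

theorem IsGood.connects_label_iff_reachable [CharP Kf 2] {s t : V} {ω : Seed V Kf g lam f}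
    (hω : ω.IsGood H ν eid (sketchLength g lam f) F (insert s (insert t F)))
    (hν : Function.Injective ν) (heid : Function.Injective eid)
    (hK : ∀ c, ∀ x ∈ K c, ∀ y ∈ K c, (restrict G ↑(K c)).Reachable x y) (hs : s ∉ F) (ht : t ∉ F)
    (hF : #F ≤ f) :
    Label.Connects ν eid (ω.label H ν eid (sketchLength g lam f) s)
        (ω.label H ν eid (sketchLength g lam f) t)
        (F.image (ω.label H ν eid (sketchLength g lam f))) ↔
      (avoiding G F).Reachable s t :=
  Label.connects_ofHierarchies_iff_reachable hν heid hK hs ht hω.exists_disjoint hω.isolates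
    (fun h c hc => Nat.lt_succ_of_le <| Nat.add_le_add hF <|
      hω.card_outerNbrs_le h c ((H (ω.sample h)).disjoint_outerNbrs c hc))
    hω.isGeneric

theorem prob_exists_not_isGeneric_le [Fintype Kf] (hKf : Fintype.card Kf = 2 ^ fieldBits g lam f)
    (heid : ∀ e, eid e ≤ 2 ^ edgeBits g lam) (hV : Fintype.card V ≤ 2 ^ lam)
    (hL : ∀ v, #{c ∈ V₀ | v ∈ K c} ≤ overlap lam) (hM : #M ≤ 3 * f) :
    prob (fun ω : Seed V Kf g lam f => ¬∀ h, (H (ω.sample h)).IsGeneric (fun j => (ω.2.1 j).1)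
      (fun j => (ω.2.1 j).2) d ν eid F M ω.2.2) ≤ (1 / 2) ^ (g * lam) := by
  refine prob_prod_le_of_forall_fst (by positivity) fun φ =>
    prob_prod_le_of_forall_fst (by positivity) fun y => ?_
  have hsingle : ∀ h : Fin (numHierarchies g lam),
      prob (fun α : Kf => ¬(H (sample (φ, y, α) h)).IsGeneric (fun j => (y j).1)
        (fun j => (y j).2) d ν eid F M α) ≤
      2 ^ (keyBound lam f + lam + edgeBits g lam) * (1 / 2) ^ fieldBits g lam f := fun h => by
    have hkeys : #(M.biUnion (H {v | φ h v = 0}).keysAt) ≤ keyBound lam f :=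
      (card_biUnion_le_card_mul _ _ _ fun v _ => (H _).card_keysAt_le hL v).trans
        (Nat.mul_le_mul_right _ hM)
    refine ((H {v | φ h v = 0}).prob_not_isGeneric_le _ _ ν heid).trans ?_
    calc _ ≤ ((2 ^ keyBound lam f * 2 ^ lam : ℕ) : ℝ) *
          ((2 ^ edgeBits g lam : ℕ) / (2 ^ fieldBits g lam f : ℕ)) := by
          rw [hKf]
          gcongr
          exact one_le_two
      _ = _ := by
          push_cast
          rw [one_div_pow, pow_add, pow_add]
          ring
  calc prob (fun α : Kf => ¬∀ h, (H (sample (φ, y, α) h)).IsGeneric (fun j => (y j).1)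
        (fun j => (y j).2) d ν eid F M α)
      ≤ numHierarchies g lam *
          (2 ^ (keyBound lam f + lam + edgeBits g lam) * (1 / 2) ^ fieldBits g lam f) := by
        have := prob_exists_mem_le univ _ fun h _ => hsingle h
        simpa only [mem_univ, true_and, ← not_forall, card_univ, Fintype.card_fin] using this
    _ ≤ 2 ^ (g * lam) *
          (2 ^ (keyBound lam f + lam + edgeBits g lam) * (1 / 2) ^ fieldBits g lam f) := by
        gcongr
        exact mod_cast Nat.lt_two_pow_self.le
    _ = (1 / 2) ^ (g * lam) := by
        rw [← mul_assoc, ← pow_add, fieldBits, ← two_pow_mul_one_half_pow _ (g * lam)]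
        congr 2
        ring

theorem prob_not_isGood_le [Fintype Kf] (hlam : 1 ≤ lam) (hV : Fintype.card V ≤ 2 ^ lam)
    (hKf : Fintype.card Kf = 2 ^ fieldBits g lam f) (heid : ∀ e, eid e ≤ 2 ^ edgeBits g lam)
    (hL : ∀ v, #{c ∈ V₀ | v ∈ K c} ≤ overlap lam) (hF : #F ≤ f) (hM : #M ≤ 3 * f) :
    prob (fun ω : Seed V Kf g lam f => ¬ω.IsGood H ν eid d F M) ≤ 4 * (1 / 2) ^ (g * lam) := by
  set ok : Fin 4 → Seed V Kf g lam f → Prop := ![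
    fun ω => ∃ h, Disjoint F (ω.sample h),
    fun ω => ∀ h c, Disjoint (outerNbrs G (K c)) (ω.sample h) →
      #(outerNbrs G (K c)) ≤ nbrBound g lam f,
    fun ω => Isolates (fun j => (ω.2.1 j).1) (fun j => (ω.2.1 j).2) K V₀ F M,
    fun ω => ∀ h, (H (ω.sample h)).IsGeneric (fun j => (ω.2.1 j).1) (fun j => (ω.2.1 j).2) d ν eid
      F M ω.2.2]
  have hfail : ∀ i ∈ univ, prob (fun ω => ¬ok i ω) ≤ (1 / 2) ^ (g * lam) := by
    simp only [mem_univ, forall_const, Fin.forall_fin_succ, IsEmpty.forall_iff, and_true]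
    exact ⟨prob_forall_not_disjoint_sample_le hF, prob_exists_many_outerNbrs_le hV G K,
      prob_not_isolates_seed_le hlam hV hL hF hM, prob_exists_not_isGeneric_le hKf heid hV hL hM⟩
  calc prob (fun ω => ¬ω.IsGood H ν eid d F M)
      ≤ prob (fun ω => ∃ i ∈ univ, ¬ok i ω) := prob_mono fun ω hω => by
        by_contra! hok
        exact hω ⟨hok 0 (mem_univ _), hok 1 (mem_univ _), hok 2 (mem_univ _), hok 3 (mem_univ _)⟩
    _ ≤ 4 * (1 / 2) ^ (g * lam) := by simpa using prob_exists_mem_le univ _ hfail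

end Seed

end

/-! ### Binary labels -/

noncomputable section

open SimpleGraph

instance {V E Kf ι : Type*} [Nonempty V] [Nonempty Kf] {d : ℕ} : Nonempty (Label V E Kf ι d) :=
  have ⟨v⟩ := ‹Nonempty V›
  have ⟨a⟩ := ‹Nonempty Kf›
  ⟨⟨a, v, ∅, fun _ => ⟨(v, 0), ∅, ∅, ∅, ∅, ∅, ∅⟩⟩⟩

variable {V : Type} [Fintype V] {g lam f : ℕ}

theorem exists_label_code [Nonempty V] {E Kf : Type} [Fintype E] [Fintype Kf] [Nonempty Kf]
    (hV : Fintype.card V ≤ 2 ^ lam) (hE : Fintype.card E ≤ 2 ^ edgeBits g lam)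
    (hKf : Fintype.card Kf = 2 ^ fieldBits g lam f) :
    ∃ (enc : Label V E Kf (Fin (numHierarchies g lam)) (sketchLength g lam f) →
        Fin (labelBits g lam f) → Bool) (dec : _),
      Set.LeftInvOn dec enc {l | ∀ h, (l.facts h).IsBounded (Fintype.card V ^ 2)
        (2 * tourVisits lam + 2 * overlap lam) (recordBound g lam f)} := by
  have hsq : Fintype.card V ^ 2 < 2 ^ (2 * lam + 1) := by
    calc Fintype.card V ^ 2 ≤ (2 ^ lam) ^ 2 := Nat.pow_le_pow_left hV 2
      _ = 2 ^ (2 * lam) := by rw [← pow_mul, mul_comm]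
      _ < 2 ^ (2 * lam + 1) := Nat.pow_lt_pow_succ one_lt_two
  have hfits := fitsIn_label (ι := Fin (numHierarchies g lam)) (d := sketchLength g lam f)
    (p := 2 * tourVisits lam + 2 * overlap lam) (q := recordBound g lam f) hV hE hKf.le hsq
  rw [Fintype.card_fin] at hfits
  exact hfits.exists_leftInvOn

theorem exists_decoder [Nonempty V] [NeZero f] (hlam : 1 ≤ lam)
    (hV : Fintype.card V ≤ 2 ^ lam) (hf : f ≤ 2 ^ lam) :
    ∃ D : (Fin (labelBits g lam f) → Bool) → (Fin (labelBits g lam f) → Bool) →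
        Finset (Fin (labelBits g lam f) → Bool) → Bool,
      ∀ G : SimpleGraph V, ∃ (Ω : Type) (_ : Fintype Ω) (_ : Nonempty Ω)
        (LV : Ω → V → Fin (labelBits g lam f) → Bool),
        ∀ (s t : V) (F : Finset V), s ∉ F → t ∉ F → #F ≤ f →
          prob (fun ω => ¬(D (LV ω s) (LV ω t) (F.image (LV ω)) = true ↔
            (avoiding G F).Reachable s t)) ≤ 4 * (1 / 2) ^ (g * lam) := by
  let Kf := GaloisField 2 (fieldBits g lam f)
  let _ : Fintype Kf := Fintype.ofFinite Kf
  have hKf : Fintype.card Kf = 2 ^ fieldBits g lam f := by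
    rw [← Nat.card_eq_fintype_card, GaloisField.card 2 _ (by unfold fieldBits; omega)]
  have hE := card_sparseEdge_le (g := g) hlam hV hf
  obtain ⟨ν⟩ : Nonempty (V ↪ Kf) := Function.Embedding.nonempty_of_card_le <| by
    rw [hKf]
    exact hV.trans (Nat.pow_le_pow_right two_pos (by unfold fieldBits; omega))
  set eid : SparseEdge V (Fin (numSamples g lam f)) (Fin (numColors lam f)) → ℕ :=
    fun e => Fintype.equivFin _ e
  have heid : Function.Injective eid := Fin.val_injective.comp (Equiv.injective _)
  have heid_le : ∀ e, eid e ≤ 2 ^ edgeBits g lam := fun e => (Fin.is_lt _).le.trans hE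
  obtain ⟨enc, dec, hdec⟩ := exists_label_code hV hE hKf
  refine ⟨fun a b l => Label.Connects ν eid (dec a) (dec b) (l.image dec), fun G => ?_⟩
  obtain ⟨lev, hL, hH⟩ := exists_level_hierarchies G hV
  let H := fun S => (hH S).some
  refine ⟨Seed V Kf g lam f, inferInstance, inferInstance, fun ω v => enc (ω.label H ν eid _ v),
    fun s t F hs ht hF => ?_⟩
  have hM : #(insert s (insert t F)) ≤ 3 * f := by
    have := card_insert_le s (insert t F)
    have := card_insert_le t F
    have := NeZero.pos f
    omega
  refine (prob_mono fun ω => mt fun hω => ?_).trans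
    (Seed.prob_not_isGood_le (H := H) (ν := ν) (d := sketchLength g lam f) hlam hV hKf heid_le
      hL hF hM)
  have hdecode (v : V) : dec (enc (ω.label H ν eid _ v)) = ω.label H ν eid _ v :=
    hdec (hω.isBounded_label hL v)
  simp only [decide_eq_true_iff, image_image, Function.comp_def, hdecode]
  exact hω.connects_label_iff_reachable ν.injective heid
    (fun c x hx y hy => reachable_restrict_levelComp hx hy) hs ht hF

end

/-! ### Size of the labels -/

noncomputable section

open SimpleGraph

/-- `X lam f = O(f ^ b * lam ^ a)`, uniformly over all positive `lam` and `f`. -/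
def PolyBounded (X : ℕ → ℕ → ℕ) (b a : ℕ) : Prop :=
  ∃ C : ℕ, ∀ lam f : ℕ, 1 ≤ lam → 1 ≤ f → X lam f ≤ C * (f ^ b * lam ^ a)

namespace PolyBounded

variable {X Y : ℕ → ℕ → ℕ} {b a b' a' : ℕ}

theorem const (k : ℕ) : PolyBounded (fun _ _ => k) 0 0 := ⟨k, fun _ _ _ _ => by simp⟩

theorem fst : PolyBounded (fun lam _ => lam) 0 1 := ⟨1, fun _ _ _ _ => by simp⟩

theorem snd : PolyBounded (fun _ f => f) 1 0 := ⟨1, fun _ _ _ _ => by simp⟩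

theorem mul (hX : PolyBounded X b a) (hY : PolyBounded Y b' a') :
    PolyBounded (fun lam f => X lam f * Y lam f) (b + b') (a + a') := by
  obtain ⟨C, hC⟩ := hX
  obtain ⟨C', hC'⟩ := hY
  refine ⟨C * C', fun lam f hlam hf => ?_⟩
  calc X lam f * Y lam f ≤ C * (f ^ b * lam ^ a) * (C' * (f ^ b' * lam ^ a')) :=
        Nat.mul_le_mul (hC lam f hlam hf) (hC' lam f hlam hf)
    _ = C * C' * (f ^ (b + b') * lam ^ (a + a')) := by ring

theorem mono (hX : PolyBounded X b a) (hb : b ≤ b') (ha : a ≤ a') : PolyBounded X b' a' := by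
  obtain ⟨C, hC⟩ := hX
  refine ⟨C, fun lam f hlam hf => (hC lam f hlam hf).trans ?_⟩
  gcongr

theorem add (hX : PolyBounded X b a) (hY : PolyBounded Y b' a') :
    PolyBounded (fun lam f => X lam f + Y lam f) (max b b') (max a a') := by
  obtain ⟨C, hC⟩ := hX.mono (le_max_left b b') (le_max_left a a')
  obtain ⟨C', hC'⟩ := hY.mono (le_max_right b b') (le_max_right a a')
  refine ⟨C + C', fun lam f hlam hf => ?_⟩
  rw [add_mul]
  exact Nat.add_le_add (hC lam f hlam hf) (hC' lam f hlam hf)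

end PolyBounded

section LabelSize

open PolyBounded

theorem polyBounded_overlap : PolyBounded (fun lam _ => overlap lam) 0 1 := fst.add (const 1)

theorem polyBounded_tourVisits : PolyBounded (fun lam _ => tourVisits lam) 0 2 :=
  polyBounded_overlap.add
    (polyBounded_overlap.mul ((((const 7).mul fst).add (const 9)).add (const 2)))

theorem polyBounded_visits_add_overlap :
    PolyBounded (fun lam _ => 2 * tourVisits lam + 2 * overlap lam) 0 2 :=
  ((const 2).mul polyBounded_tourVisits).add ((const 2).mul polyBounded_overlap)

theorem polyBounded_numColors : PolyBounded numColors 1 1 :=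
  (const 2).mul (((const 3).mul snd).mul polyBounded_overlap)

theorem polyBounded_cellBits : PolyBounded (fun lam _ => cellBits lam) 0 1 :=
  fst.add (((const 2).mul fst).add (const 1))

variable (g : ℕ)

theorem polyBounded_numHierarchies : PolyBounded (fun lam _ => numHierarchies g lam) 0 1 :=
  (const g).mul fst

theorem polyBounded_edgeBits : PolyBounded (fun lam _ => edgeBits g lam) 0 1 :=
  (const (g + 15)).mul fst

theorem polyBounded_nbrBound : PolyBounded (nbrBound g) 1 1 :=
  ((const 2).mul snd).mul ((const (2 * g + 1)).mul fst)

theorem polyBounded_numSamples : PolyBounded (numSamples g) 1 1 :=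
  ((const 8).mul snd).mul ((const (g + 4)).mul fst)

theorem polyBounded_sketchLength : PolyBounded (sketchLength g) 1 1 :=
  (snd.add (polyBounded_nbrBound g)).add (const 1)

theorem polyBounded_fieldBits : PolyBounded (fieldBits g) 1 2 :=
  (((((const g).mul fst).add (((const 3).mul snd).mul polyBounded_visits_add_overlap)).add
    fst).add (polyBounded_edgeBits g)).add ((const g).mul fst)

theorem polyBounded_recordBound : PolyBounded (recordBound g) 2 3 := by
  have hN := polyBounded_nbrBound g
  have hJ := polyBounded_numSamples g
  exact (((polyBounded_tourVisits.add polyBounded_overlap).add (polyBounded_overlap.mul hN)).add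
    (hJ.mul polyBounded_numColors)).add (polyBounded_overlap.mul ((hJ.mul hN).add (hN.mul hN)))

theorem polyBounded_recordBits : PolyBounded (fun lam _ => recordBits lam (edgeBits g lam)) 0 1 :=
  (polyBounded_edgeBits g).add (polyBounded_cellBits.add (fst.add polyBounded_cellBits))

theorem polyBounded_factBits : PolyBounded (fun lam f => factBits lam (edgeBits g lam)
    (fieldBits g lam f) (sketchLength g lam f) (2 * tourVisits lam + 2 * overlap lam)
    (recordBound g lam f)) 2 5 :=
  polyBounded_cellBits.add <| (polyBounded_visits_add_overlap.mul ((polyBounded_cellBits.add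
    ((polyBounded_sketchLength g).mul (polyBounded_fieldBits g))).add (const 1))).add <|
      (const 5).mul ((polyBounded_recordBound g).mul ((polyBounded_recordBits g).add (const 1)))

theorem polyBounded_labelBits : PolyBounded (labelBits g) 2 6 :=
  ((polyBounded_fieldBits g).add fst).add
    ((polyBounded_numHierarchies g).mul ((const 1).add (polyBounded_factBits g)))

end LabelSize

section Parameters

variable {n : ℕ}

theorem clog_le_two_mul_logb (hn : 2 ≤ n) : (Nat.clog 2 n : ℝ) ≤ 2 * Real.logb 2 n := by
  have hn' : (2 : ℝ) ≤ n := mod_cast hn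
  have hpos : 1 ≤ Nat.clog 2 n := Nat.clog_pos one_lt_two hn
  have hlog : 1 ≤ Real.logb 2 n := by
    rw [Real.le_logb_iff_rpow_le one_lt_two (by linarith)]
    simpa using hn'
  have hpred : ((Nat.clog 2 n - 1 : ℕ) : ℝ) ≤ Real.logb 2 n := by
    rw [Real.le_logb_iff_rpow_le one_lt_two (by linarith), Real.rpow_natCast]
    exact mod_cast (Nat.pow_pred_clog_lt_self one_lt_two (by omega)).le
  rw [Nat.cast_sub hpos, Nat.cast_one] at hpred
  linarith

theorem exists_labelBits_clog_le (g : ℕ) : ∃ C : ℝ, ∀ n f : ℕ, 2 ≤ n → 1 ≤ f →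
    labelBits g (Nat.clog 2 n) (min f n) ≤ C * (f : ℝ) ^ 2 * Real.logb 2 n ^ 6 := by
  obtain ⟨C, hC⟩ := polyBounded_labelBits g
  refine ⟨64 * C, fun n f hn hf => ?_⟩
  have hbits := hC (Nat.clog 2 n) (min f n) (Nat.clog_pos one_lt_two hn) (by omega)
  calc (labelBits g (Nat.clog 2 n) (min f n) : ℝ)
      ≤ C * ((min f n : ℕ) ^ 2 * (Nat.clog 2 n : ℝ) ^ 6) := mod_cast hbits
    _ ≤ C * ((f : ℝ) ^ 2 * (2 * Real.logb 2 n) ^ 6) := by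
      gcongr
      · exact min_le_left f n
      · exact clog_le_two_mul_logb hn
    _ = 64 * C * (f : ℝ) ^ 2 * Real.logb 2 n ^ 6 := by ring

theorem four_mul_one_half_pow_le_rpow_neg {c : ℝ} {m : ℕ} (hn : 2 ≤ n) (hc : c ≤ m) :
    4 * (1 / 2 : ℝ) ^ ((m + 2) * Nat.clog 2 n) ≤ (n : ℝ) ^ (-c) := by
  have hn' : (1 : ℝ) ≤ n := mod_cast one_le_two.trans hn
  have hpow : (n : ℝ) ≤ 2 ^ Nat.clog 2 n := mod_cast Nat.le_pow_clog one_lt_two n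
  have hexp : m * Nat.clog 2 n + 2 ≤ (m + 2) * Nat.clog 2 n := by
    have := Nat.clog_pos one_lt_two hn
    linarith
  calc 4 * (1 / 2 : ℝ) ^ ((m + 2) * Nat.clog 2 n)
      ≤ 4 * (1 / 2) ^ (m * Nat.clog 2 n + 2) := by
        gcongr ?_ * ?_
        exact pow_le_pow_of_le_one (by norm_num) (by norm_num) hexp
    _ = ((2 ^ Nat.clog 2 n) ^ m : ℝ)⁻¹ := by
        rw [pow_add, ← pow_mul, mul_comm m, one_div, inv_pow]
        ring
    _ ≤ ((n : ℝ) ^ m)⁻¹ := by gcongr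
    _ ≤ (n : ℝ) ^ (-c) := by
        rw [← Real.rpow_natCast, ← Real.rpow_neg (by linarith)]
        exact Real.rpow_le_rpow_of_exponent_le hn' (neg_le_neg hc)

end Parameters

theorem sum_uniform_eq_prob {Ω : Type*} [Fintype Ω] (p : Ω → Prop) [DecidablePred p] :
    ∑ ω with p ω, (1 / Fintype.card Ω : ℝ) = prob p := by
  rw [prob_eq_card_div, sum_const, nsmul_eq_mul, mul_one_div]

end

end FaultLabel

/-- Randomized vertex-fault connectivity labels of size
`O(f² · log⁶ n)` bits, answering each fixed query correctly with probability
at least `1 − n^{−c}`. -/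
theorem stmt_15 :
    ∀ c : ℝ, 1 ≤ c → ∃ C : ℝ, ∀ n f : ℕ, 2 ≤ n → 1 ≤ f →
      ∃ b : ℕ,
        (b : ℝ) ≤ C * (f : ℝ) ^ 2 * (Real.logb 2 n) ^ 6 ∧
        ∃ D : (Fin b → Bool) → (Fin b → Bool) → Finset (Fin b → Bool) → Bool,
          ∀ G : SimpleGraph (Fin n),
            ∃ (N : ℕ) (μ : Fin N → ℝ) (LV : Fin N → Fin n → Fin b → Bool),
              (∀ ω, 0 ≤ μ ω) ∧ (∑ ω, μ ω = 1) ∧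
              ∀ (s t : Fin n) (F : Finset (Fin n)) (hs : s ∉ F) (ht : t ∉ F),
                F.card ≤ f →
                1 - (n : ℝ) ^ (-c) ≤
                  ∑ ω ∈ Finset.univ.filter (fun ω =>
                      (D (LV ω s) (LV ω t) (F.image (LV ω)) = true ↔
                        (G.induce ((↑F : Set (Fin n))ᶜ)).Reachable
                          ⟨s, by simpa using hs⟩ ⟨t, by simpa using ht⟩)),
                    μ ω := by
  intro c _
  obtain ⟨C, hC⟩ := FaultLabel.exists_labelBits_clog_le (⌈c⌉₊ + 2)
  refine ⟨C, fun n f hn hf => ⟨_, hC n f hn hf, ?_⟩⟩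
  have : NeZero n := ⟨by omega⟩
  have : NeZero (min f n) := ⟨by omega⟩
  obtain ⟨D, hD⟩ := FaultLabel.exists_decoder (V := Fin n) (g := ⌈c⌉₊ + 2) (f := min f n)
    (Nat.clog_pos one_lt_two hn) (by simpa using Nat.le_pow_clog one_lt_two n)
    ((min_le_right f n).trans (Nat.le_pow_clog one_lt_two n))
  refine ⟨D, fun G => ?_⟩
  obtain ⟨Ω, _, _, LV, hLV⟩ := hD G
  set e := (Fintype.equivFin Ω).symm
  refine ⟨Fintype.card Ω, fun _ => 1 / Fintype.card Ω, fun i => LV (e i), fun _ => by positivity,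
    by simp, fun s t F hs ht hF => ?_⟩
  have hfail := (hLV s t F hs ht (le_min hF (card_finset_fin_le F))).trans
    (FaultLabel.four_mul_one_half_pow_le_rpow_neg hn (Nat.le_ceil c))
  rw [FaultLabel.prob_not, ← FaultLabel.prob_equiv e, ← FaultLabel.sum_uniform_eq_prob,
    Fintype.card_fin] at hfail
  simp only [FaultLabel.reachable_restrict_iff_induce (s := (↑F : Set (Fin n))ᶜ) (by simpa using hs)
    (by simpa using ht)] at hfail
  linarith
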